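/- arXiv:2102.03855 — 4 statements merged into one kernel-verified Lean document; each statement's English description precedes it below -/
import Mathlib

section
/- For every real number ε with 0 < ε < 1/4 there exists an integer N = N(ε) such that the following holds: if G is a simple graph on n ≥ N vertices with ρ(G) > sqrt(⌊n²/4⌋), then G contains a cycle C_ℓ for every integer ℓ with 3 ≤ ℓ ≤ (1/4 − ε)·n. -/
open SimpleGraph

/-- `G` contains a cycle of length `l`. -/
def HasCycleLen {V : Type} (G : SimpleGraph V) (l : ℕ) : Prop :=
  ∃ (v : V) (c : G.Walk v v), c.IsCycle ∧ c.length = l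

/-- The circumference of `G`: the length of a longest cycle. -/
noncomputable def circumference {V : Type} (G : SimpleGraph V) : ℕ :=
  sSup {l | HasCycleLen G l}

/-- `G` is weakly pancyclic with girth 3: it contains a cycle of every length `l`
with `3 ≤ l ≤ c(G)`. -/
def WeaklyPancyclic3 {V : Type} (G : SimpleGraph V) : Prop :=
  HasCycleLen G 3 ∧ ∀ l : ℕ, 3 ≤ l → l ≤ circumference G → HasCycleLen G l

/-- The number of edges of `G`. -/
noncomputable def edgeCount {V : Type} (G : SimpleGraph V) : ℕ :=
  Nat.card G.edgeSet

/-- The degree of `v` in `G`. -/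
noncomputable def degCount {V : Type} (G : SimpleGraph V) (v : V) : ℕ :=
  Nat.card (G.neighborSet v)

/-- The spectral radius of `G`: the largest eigenvalue of the adjacency matrix. -/
noncomputable def specRad {V : Type} [Finite V] (G : SimpleGraph V) : ℝ :=
  letI := Fintype.ofFinite V
  letI := Classical.decEq V
  letI := Classical.decRel G.Adj
  sSup (spectrum ℝ (G.adjMatrix ℝ))

/-- The signless Laplacian spectral radius of `G`: the largest eigenvalue of `D(G) + A(G)`. -/
noncomputable def qSpecRad {V : Type} [Finite V] (G : SimpleGraph V) : ℝ :=
  letI := Fintype.ofFinite V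
  letI := Classical.decEq V
  letI := Classical.decRel G.Adj
  sSup (spectrum ℝ (Matrix.diagonal (fun v => (degCount G v : ℝ)) + G.adjMatrix ℝ))

/-- `L_{n,k} = K_1 ∨ (K_{n-k-1} + K_k)`: vertex `0` is the common vertex of a clique on
the `n - k` vertices `{0, …, n-k-1}` and a clique on the `k+1` vertices `{0} ∪ {n-k, …, n-1}`. -/
def Lgraph (n k : ℕ) : SimpleGraph (Fin n) :=
  SimpleGraph.fromRel (fun u v =>
    u.val = 0 ∨ v.val = 0 ∨ (u.val < n - k ∧ v.val < n - k) ∨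
      (n - k ≤ u.val ∧ n - k ≤ v.val))

/-- `Γ_{n,t} = K_2 ∨ (K_{n-2-t} + t·K_1)`: vertices `0,1` are joined to everything,
vertices `2, …, n-t-1` form a clique, and vertices `n-t, …, n-1` are independent. -/
def GammaGraph (n t : ℕ) : SimpleGraph (Fin n) :=
  SimpleGraph.fromRel (fun u v =>
    u.val < 2 ∨ v.val < 2 ∨ (u.val < n - t ∧ v.val < n - t))

/-- `F` is a member of the family `F_{n,k}`: there is a clique `K` on `n - k` vertices
such that each connected component of `F - K` is a clique all of whose vertices are
adjacent to one single common vertex of `K` and to no other vertex of `K`. -/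
def MemF (n k : ℕ) (F : SimpleGraph (Fin n)) : Prop :=
  ∃ K : Finset (Fin n), K.card = n - k ∧ F.IsClique (↑K : Set (Fin n)) ∧
    (∀ u v : ({x : Fin n | x ∉ K} : Set (Fin n)),
      (F.induce {x : Fin n | x ∉ K}).Reachable u v → (u = v ∨ F.Adj u.1 v.1)) ∧
    (∀ u : ({x : Fin n | x ∉ K} : Set (Fin n)), ∃! w : Fin n, w ∈ K ∧ F.Adj u.1 w) ∧
    (∀ u v : ({x : Fin n | x ∉ K} : Set (Fin n)),
      (F.induce {x : Fin n | x ∉ K}).Reachable u v →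
        ∀ w ∈ K, F.Adj u.1 w → F.Adj v.1 w)

/-- `G` is a subgraph of `H` (up to relabelling): there is an injective graph
homomorphism from `G` to `H`. -/
def IsSubgraphOf {n : ℕ} (G H : SimpleGraph (Fin n)) : Prop :=
  ∃ f : G →g H, Function.Injective f
/-! ### Paths as lists -/

/-- `l` lists the vertices of a path of `G` from `a` to `b`. -/
structure PL {V : Type} (G : SimpleGraph V) (l : List V) (a b : V) : Prop where
  nodup : l.Nodup
  chain : l.IsChain G.Adj
  hd : a ∈ l.head?
  lst : b ∈ l.getLast?

lemma PL.hasCycle {V : Type} {G : SimpleGraph V} {l : List V} {a b : V} (h : PL G l a b)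
    (hba : G.Adj b a) (h3 : 3 ≤ l.length) : HasCycleLen G l.length := by
  have hne : l ≠ [] := by rintro rfl; simp at h3
  have ha : l.head hne = a := by
    have := h.hd; rw [List.head?_eq_some_head hne] at this; simpa using this
  have hb : l.getLast hne = b := by
    have := h.lst; rw [List.getLast?_eq_some_getLast hne] at this; simpa using this
  subst ha hb
  let p := Walk.ofSupport l hne h.chain
  have hs : p.support = l := Walk.support_ofSupport hne h.chain
  have hp : p.IsPath := by rw [Walk.isPath_def, hs]; exact h.nodup
  have hlen : p.length + 1 = l.length := by rw [← Walk.length_support, hs]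
  refine ⟨_, Walk.cons hba p, ?_, ?_⟩
  · rw [Walk.cons_isCycle_iff]
    refine ⟨hp, fun hmem => ?_⟩
    rw [Sym2.eq_swap] at hmem
    have := hp.length_eq_one_of_mem_edges hmem
    omega
  · rw [Walk.length_cons]; exact hlen

lemma PL.append {V : Type} {G : SimpleGraph V} {l₁ l₂ : List V} {a b c d : V}
    (h₁ : PL G l₁ a b) (h₂ : PL G l₂ c d) (hbc : G.Adj b c)
    (hdis : ∀ x ∈ l₁, x ∉ l₂) : PL G (l₁ ++ l₂) a d := by
  refine ⟨?_, ?_, ?_, ?_⟩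
  · rw [List.nodup_append']
    exact ⟨h₁.nodup, h₂.nodup, fun x hx hx2 => hdis x hx hx2⟩
  · rw [List.isChain_append]
    refine ⟨h₁.chain, h₂.chain, fun x hx y hy => ?_⟩
    have e1 := Option.mem_unique hx h₁.lst
    have e2 := Option.mem_unique hy h₂.hd
    subst e1 e2; exact hbc
  · have := h₁.hd; simp only [Option.mem_def] at this ⊢; rw [List.head?_append, this]; rfl
  · have := h₂.lst; simp only [Option.mem_def] at this ⊢; rw [List.getLast?_append, this]; rfl

lemma PL.reverse {V : Type} {G : SimpleGraph V} {l : List V} {a b : V} (h : PL G l a b) :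
    PL G l.reverse b a := by
  refine ⟨List.nodup_reverse.2 h.nodup, ?_, ?_, ?_⟩
  · rw [List.isChain_reverse]
    exact h.chain.imp (fun x y hxy => hxy.symm)
  · rw [List.head?_reverse]; exact h.lst
  · rw [List.getLast?_reverse]; exact h.hd

lemma PL.singleton {V : Type} (G : SimpleGraph V) (a : V) : PL G [a] a a :=
  ⟨by simp, by simp, by simp, by simp⟩

lemma PL.cons {V : Type} {G : SimpleGraph V} {l : List V} {a b c : V} (h : PL G l a b)
    (hca : G.Adj c a) (hc : c ∉ l) : PL G (c :: l) c b := by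
  have := (PL.singleton G c).append h hca (by simpa using hc)
  simpa using this

lemma PL.of_chain {V : Type} {G : SimpleGraph V} {l : List V} (hne : l ≠ [])
    (hn : l.Nodup) (hc : l.IsChain G.Adj) : ∃ a b, PL G l a b :=
  ⟨l.head hne, l.getLast hne, hn, hc, by simp [List.head?_eq_some_head hne],
    by simp [List.getLast?_eq_some_getLast hne]⟩

lemma PL.mem_hd {V : Type} {G : SimpleGraph V} {l : List V} {a b : V} (h : PL G l a b) : a ∈ l :=
  List.mem_of_mem_head? h.hd

lemma PL.mem_lst {V : Type} {G : SimpleGraph V} {l : List V} {a b : V} (h : PL G l a b) : b ∈ l :=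
  List.mem_of_mem_getLast? h.lst

/-! ### Degrees into finite sets -/

open Classical in
/-- The number of neighbours of `v` in `S`. -/
noncomputable def dg {V : Type} (G : SimpleGraph V) (S : Finset V) (v : V) : ℕ :=
  (S.filter (fun u => G.Adj v u)).card

/-- Twice the number of edges inside `S`. -/
noncomputable def e2 {V : Type} (G : SimpleGraph V) (S : Finset V) : ℕ := ∑ v ∈ S, dg G S v

lemma dg_le {V : Type} (G : SimpleGraph V) (S : Finset V) (v : V) : dg G S v ≤ S.card := by
  classical
  unfold dg
  exact Finset.card_filter_le _ _

lemma dg_mono {V : Type} (G : SimpleGraph V) {S T : Finset V} (h : S ⊆ T) (v : V) :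
    dg G S v ≤ dg G T v := by
  classical
  unfold dg
  exact Finset.card_le_card (Finset.filter_subset_filter _ h)

lemma dg_comm {V : Type} (G : SimpleGraph V) (S T : Finset V) :
    ∑ v ∈ S, dg G T v = ∑ v ∈ T, dg G S v := by
  classical
  simp only [dg, Finset.card_filter]
  rw [Finset.sum_comm]
  simp only [G.adj_comm]

open Classical in
lemma dg_split {V : Type} [DecidableEq V] (G : SimpleGraph V) {S C : Finset V} (h : C ⊆ S) (v : V) :
    dg G S v = dg G (S \ C) v + dg G C v := by
  unfold dg
  rw [← Finset.card_union_of_disjoint, ← Finset.filter_union, Finset.sdiff_union_of_subset h]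
  exact Finset.disjoint_filter_filter (Finset.sdiff_disjoint)

open Classical in
lemma e2_split {V : Type} [DecidableEq V] (G : SimpleGraph V) {S C : Finset V} (h : C ⊆ S) :
    e2 G S = e2 G (S \ C) + ∑ c ∈ C, dg G (S \ C) c + ∑ c ∈ C, dg G S c := by
  unfold e2
  rw [← Finset.sum_sdiff h]
  congr 1
  rw [dg_comm G C, ← Finset.sum_add_distrib]
  exact Finset.sum_congr rfl (fun v _ => dg_split G h v)

/-! ### Erdős–Gallai theorem for paths -/

open Classical in
lemma dg_lt_of_list {V : Type} {G : SimpleGraph V} {S C : Finset V} {v : V} (hv : v ∈ C)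
    (h : ∀ u ∈ S, G.Adj v u → u ∈ C) : dg G S v ≤ C.card - 1 := by
  rw [← Finset.card_erase_of_mem hv]
  apply Finset.card_le_card
  intro u hu
  rw [Finset.mem_filter] at hu
  exact Finset.mem_erase.2 ⟨hu.2.ne', h u hu.1 hu.2⟩

/-- Crossing argument: a path whose two end vertices have large degree inside it closes up. -/
lemma closes_up {V : Type} [DecidableEq V] {G : SimpleGraph V} {l : List V} {a b : V}
    (h : PL G l a b) (hd : l.length ≤ dg G l.toFinset a + dg G l.toFinset b) :
    ∃ l' a' b', PL G l' a' b' ∧ G.Adj b' a' ∧ l'.length = l.length ∧ ∀ x, x ∈ l' ↔ x ∈ l := by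
  classical
  set t := l.length with ht
  have hne : l ≠ [] := by rintro rfl; simpa using h.hd
  have htpos : 0 < t := List.length_pos_iff.2 hne
  have ha : l[0] = a := by
    have := h.hd; rw [List.head?_eq_getElem?, List.getElem?_eq_getElem htpos] at this
    simpa using this
  have hb : l[t-1] = b := by
    have := h.lst
    rw [List.getLast?_eq_getElem?, List.getElem?_eq_getElem (by omega)] at this
    simpa using this
  -- index sets
  let g : ℕ → V := fun i => l.getD i a
  have hg : ∀ i (hi : i < t), g i = l[i] := fun i hi => List.getD_eq_getElem _ _ hi
  let I := (Finset.range (t-1)).filter (fun i => G.Adj a (g (i+1)))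
  let J := (Finset.range (t-1)).filter (fun i => G.Adj b (g i))
  have hI : dg G l.toFinset a ≤ I.card := by
    unfold dg
    refine (Finset.card_le_card (t := I.image (fun i => g (i+1))) ?_).trans Finset.card_image_le
    intro u hu
    rw [Finset.mem_filter, List.mem_toFinset] at hu
    obtain ⟨i, hi, rfl⟩ := List.mem_iff_getElem.1 hu.1
    have hi0 : i ≠ 0 := by
      rintro rfl; rw [ha] at hu; exact hu.2.ne rfl
    obtain ⟨j, rfl⟩ := Nat.exists_eq_succ_of_ne_zero hi0
    refine Finset.mem_image.2 ⟨j, ?_, hg _ hi⟩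
    rw [Finset.mem_filter, Finset.mem_range]
    refine ⟨by omega, ?_⟩
    rw [hg _ hi]; exact hu.2
  have hJ : dg G l.toFinset b ≤ J.card := by
    unfold dg
    refine (Finset.card_le_card (t := J.image (fun i => g i)) ?_).trans Finset.card_image_le
    intro u hu
    rw [Finset.mem_filter, List.mem_toFinset] at hu
    obtain ⟨i, hi, rfl⟩ := List.mem_iff_getElem.1 hu.1
    have hi0 : i ≠ t - 1 := by
      rintro rfl; rw [hb] at hu; exact hu.2.ne rfl
    refine Finset.mem_image.2 ⟨i, ?_, hg _ hi⟩
    rw [Finset.mem_filter, Finset.mem_range]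
    refine ⟨by omega, ?_⟩
    rw [hg _ hi]; exact hu.2
  have hIJ : (I ∩ J).Nonempty := by
    by_contra hcon
    rw [Finset.not_nonempty_iff_eq_empty, ← Finset.disjoint_iff_inter_eq_empty] at hcon
    have h1 := Finset.card_union_of_disjoint hcon
    have h2 : (I ∪ J).card ≤ (Finset.range (t-1)).card :=
      Finset.card_le_card (Finset.union_subset (Finset.filter_subset _ _)
        (Finset.filter_subset _ _))
    rw [Finset.card_range] at h2
    omega
  obtain ⟨i, hi⟩ := hIJ
  simp only [I, J, Finset.mem_inter, Finset.mem_filter, Finset.mem_range] at hi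
  obtain ⟨⟨hit, hai⟩, -, hbi⟩ := hi
  rw [hg _ (by omega)] at hai hbi
  have hsplit := List.take_append_drop (i+1) l
  have hn := h.nodup
  have hc := h.chain
  rw [← hsplit] at hn hc
  rw [List.nodup_append'] at hn
  rw [List.isChain_append] at hc
  have h1 : PL G (l.take (i+1)) a l[i] := by
    refine ⟨hn.1, hc.1, ?_, ?_⟩
    · have := h.hd
      rw [List.head?_take]; simpa using this
    · rw [List.getLast?_eq_getElem?]
      simp only [List.length_take, Option.mem_def]
      rw [min_eq_left (by omega)]
      simp [List.getElem?_eq_getElem (show i < l.length by omega)]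
  have h2 : PL G (l.drop (i+1)) l[i+1] b := by
    refine ⟨hn.2.1, hc.2.1, ?_, ?_⟩
    · rw [List.head?_drop]; simp [List.getElem?_eq_getElem (show i + 1 < l.length by omega)]
    · rw [List.getLast?_drop, if_neg (by omega)]; exact h.lst
  refine ⟨l.take (i+1) ++ (l.drop (i+1)).reverse, a, l[i+1], ?_, hai.symm, ?_, ?_⟩
  · refine h1.append h2.reverse hbi.symm ?_
    intro x hx hx2
    exact hn.2.2 hx (by simpa using hx2)
  · simp; omega
  · intro x
    rw [List.mem_append, List.mem_reverse, ← List.mem_append, hsplit]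

lemma PL.rotate {V : Type} {G : SimpleGraph V} {l : List V} {a b c : V}
    (h : PL G l a b) (hba : G.Adj b a) (hc : c ∈ l) :
    ∃ l' b', PL G l' c b' ∧ l'.length = l.length ∧ ∀ x, x ∈ l' ↔ x ∈ l := by
  obtain ⟨l₁, l₂, rfl⟩ := List.append_of_mem hc
  by_cases h0 : l₁ = []
  · subst h0
    refine ⟨c :: l₂, b, ⟨by simpa using h.nodup, by simpa using h.chain, by simp,
      by simpa using h.lst⟩, by simp, by simp⟩
  have hn := h.nodup
  have hch := h.chain
  rw [List.nodup_append'] at hn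
  rw [List.isChain_append] at hch
  have hhd := h.hd
  have hl := h.lst
  obtain ⟨a', b', h1⟩ := PL.of_chain h0 hn.1 hch.1
  have h2 : PL G (c :: l₂) c b := by
    refine ⟨hn.2.1, hch.2.1, by simp, ?_⟩
    rw [List.getLast?_append_of_ne_nil _ (by simp)] at hl
    exact hl
  have ha : a' = a := by
    rw [List.head?_append_of_ne_nil _ h0] at hhd
    exact Option.mem_unique h1.hd hhd
  subst ha
  refine ⟨(c :: l₂) ++ l₁, b', h2.append h1 hba ?_, ?_, ?_⟩
  · intro x hx hx1; exact hn.2.2 hx1 hx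
  · simp; omega
  · intro x; simp; tauto

open Classical in
/-- Erdős–Gallai: a set `S` spanning more than `m|S|/2` edges contains a path on `m+2` vertices. -/
lemma erdos_gallai {V : Type} (G : SimpleGraph V) (m : ℕ) :
    ∀ (N : ℕ) (S : Finset V), S.card ≤ N → m * S.card < e2 G S →
      ∃ l a b, PL G l a b ∧ l.length = m + 2 ∧ ∀ x ∈ l, x ∈ S := by
  intro N
  induction N with
  | zero =>
    intro S hS he
    have : S = ∅ := by simpa using hS
    subst this; simp [e2] at he
  | succ N ih =>
    intro S hS he
    have hSne : S.Nonempty := by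
      rw [Finset.nonempty_iff_ne_empty]; rintro rfl; simp [e2] at he
    have key : ∀ C : Finset V, C ⊆ S → C.Nonempty →
        ∑ c ∈ C, dg G (S \ C) c + ∑ c ∈ C, dg G S c ≤ m * C.card →
        ∃ l a b, PL G l a b ∧ l.length = m + 2 ∧ ∀ x ∈ l, x ∈ S := by
      intro C hC hCne hle
      have h1 := e2_split G hC
      have h2 := Finset.card_sdiff_add_card_eq_card hC
      have h3 := hCne.card_pos
      obtain ⟨l, a, b, hl, hlen, hmem⟩ := ih (S \ C) (by omega) (by
        rw [h1, ← h2] at he; nlinarith)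
      exact ⟨l, a, b, hl, hlen, fun x hx => (Finset.mem_sdiff.1 (hmem x hx)).1⟩
    by_cases hmin : ∃ v ∈ S, 2 * dg G S v ≤ m
    · obtain ⟨v, hv, hvm⟩ := hmin
      apply key {v} (by simpa using hv) (by simp)
      have := dg_mono G (Finset.sdiff_subset : S \ {v} ⊆ S) v
      simp only [Finset.sum_singleton, Finset.card_singleton]; omega
    push Not at hmin
    -- a longest path
    let Q : ℕ → Prop := fun t => ∃ l a b, PL G l a b ∧ l.length = t ∧ ∀ x ∈ l, x ∈ S
    have hQ1 : Q 1 := by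
      obtain ⟨v, hv⟩ := hSne
      exact ⟨[v], v, v, PL.singleton G v, rfl, by simpa using hv⟩
    have hQb : ∀ t, Q t → t ≤ S.card := by
      rintro t ⟨l, a, b, hl, rfl, hmem⟩
      rw [← List.toFinset_card_of_nodup hl.nodup]
      exact Finset.card_le_card (fun x hx => hmem x (by simpa using hx))
    obtain ⟨t, hQt, hmax⟩ : ∃ t, Q t ∧ ∀ s, Q s → s ≤ t := by
      refine ⟨Nat.findGreatest Q S.card, Nat.findGreatest_spec (hQb 1 hQ1) hQ1, fun s hs => ?_⟩
      exact Nat.le_findGreatest (hQb s hs) hs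
    obtain ⟨l, a, b, hl, hlen, hmem⟩ := hQt
    by_cases hbig : m + 2 ≤ t
    · have hne : l.take (m+2) ≠ [] := by
        intro h0
        have := congrArg List.length h0
        simp [hlen] at this
        omega
      obtain ⟨a', b', h'⟩ := PL.of_chain (G := G) hne (hl.nodup.sublist (List.take_sublist _ _))
        (hl.chain.take _)
      exact ⟨_, a', b', h', by simp [hlen, hbig], fun x hx => hmem x (List.mem_of_mem_take hx)⟩
    -- both ends have all neighbours on the path
    have hend : ∀ l' a' b', PL G l' a' b' → l'.length = t → (∀ x, x ∈ l' → x ∈ S) →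
        ∀ u ∈ S, G.Adj a' u → u ∈ l' := by
      intro l' a' b' hl' hlen' hmem' u hu hau
      by_contra hul
      have := hmax (t+1) ⟨u :: l', u, b', hl'.cons hau.symm hul, by simp [hlen'], by
        intro x hx
        rcases List.mem_cons.1 hx with rfl | hx
        · exact hu
        · exact hmem' x hx⟩
      omega
    have hsub : l.toFinset ⊆ S := fun x hx => hmem x (by simpa using hx)
    have hdgeq : ∀ v, (∀ u ∈ S, G.Adj v u → u ∈ l) → dg G S v ≤ dg G l.toFinset v := by
      intro v hv
      apply Finset.card_le_card
      intro u hu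
      rw [Finset.mem_filter] at hu ⊢
      exact ⟨by simpa using hv u hu.1 hu.2, hu.2⟩
    have hda := hdgeq a (hend l a b hl hlen hmem)
    have hdb := hdgeq b (fun u hu h => by
      simpa using hend l.reverse b a hl.reverse (by simp [hlen]) (by simpa using hmem) u hu h)
    have h2a := hmin a (hmem a hl.mem_hd)
    have h2b := hmin b (hmem b hl.mem_lst)
    obtain ⟨l', a', b', hl', hba, hlen', hmem'⟩ := closes_up hl (by omega)
    -- the vertex set is closed
    have hclosed : ∀ c ∈ l, ∀ u ∈ S, G.Adj c u → u ∈ l := by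
      intro c hc u hu hcu
      obtain ⟨l'', b'', hl'', hlen'', hmem''⟩ := hl'.rotate hba ((hmem' c).2 hc)
      have := hend l'' c b'' hl'' (by omega)
        (fun x hx => hmem x ((hmem' x).1 ((hmem'' x).1 hx))) u hu hcu
      exact (hmem' u).1 ((hmem'' u).1 this)
    have hcard : l.toFinset.card = t := by rw [List.toFinset_card_of_nodup hl.nodup, hlen]
    apply key l.toFinset hsub ⟨a, by simpa using hl.mem_hd⟩
    have hz : ∑ c ∈ l.toFinset, dg G (S \ l.toFinset) c = 0 := by
      apply Finset.sum_eq_zero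
      intro c hc
      unfold dg
      rw [Finset.card_eq_zero, Finset.filter_eq_empty_iff]
      intro u hu hcu
      rw [Finset.mem_sdiff] at hu
      exact hu.2 (by simpa using hclosed c (by simpa using hc) u hu.1 hcu)
    rw [hz, zero_add]
    calc ∑ c ∈ l.toFinset, dg G S c ≤ ∑ c ∈ l.toFinset, m := by
          apply Finset.sum_le_sum
          intro c hc
          have := dg_lt_of_list (G := G) (S := S) (C := l.toFinset) hc
            (fun u hu h => by simpa using hclosed c (by simpa using hc) u hu h)
          omega
      _ = m * l.toFinset.card := by rw [Finset.sum_const, smul_eq_mul, mul_comm]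


/-! ### Spectral data of the adjacency matrix -/

open Classical in
/-- The 0/1 adjacency matrix. -/
noncomputable def aM {n : ℕ} (G : SimpleGraph (Fin n)) : Matrix (Fin n) (Fin n) ℝ :=
  Matrix.of fun u v => if G.Adj u v then 1 else 0

open Classical in
lemma aM_apply {n : ℕ} (G : SimpleGraph (Fin n)) (u v : Fin n) :
    aM G u v = if G.Adj u v then 1 else 0 := rfl

lemma aM_nonneg {n : ℕ} (G : SimpleGraph (Fin n)) (u v : Fin n) : 0 ≤ aM G u v := by
  rw [aM_apply]; split_ifs <;> norm_num

lemma aM_le_one {n : ℕ} (G : SimpleGraph (Fin n)) (u v : Fin n) : aM G u v ≤ 1 := by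
  rw [aM_apply]; split_ifs <;> norm_num

lemma aM_comm {n : ℕ} (G : SimpleGraph (Fin n)) (u v : Fin n) : aM G u v = aM G v u := by
  by_cases h : G.Adj u v
  · simp [aM_apply, h, h.symm]
  · have h2 : ¬ G.Adj v u := fun h3 => h h3.symm
    simp [aM_apply, h, h2]

lemma aM_sq {n : ℕ} (G : SimpleGraph (Fin n)) (u v : Fin n) : aM G u v * aM G u v = aM G u v := by
  rw [aM_apply]; split_ifs <;> norm_num

/-- A full orthonormal system of eigenvectors of the adjacency matrix. -/
structure SD {n : ℕ} (G : SimpleGraph (Fin n)) where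
  μ : Fin n → ℝ
  φ : Fin n → Fin n → ℝ
  i0 : Fin n
  eig : ∀ i u, ∑ v, aM G u v * φ i v = μ i * φ i u
  orth : ∀ i j, ∑ u, φ i u * φ j u = if i = j then 1 else 0
  compl : ∀ u v, ∑ i, φ i u * φ i v = if u = v then 1 else 0
  top : μ i0 = specRad G
  le_top : ∀ i, μ i ≤ μ i0

lemma exists_SD {n : ℕ} (hn : 0 < n) (G : SimpleGraph (Fin n)) : Nonempty (SD G) := by
  classical
  have hH : (aM G).IsHermitian := by
    ext u v; simp [Matrix.conjTranspose_apply, aM_comm G u v]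
  have : Nonempty (Fin n) := ⟨⟨0, hn⟩⟩
  obtain ⟨i0, hi0⟩ := Finite.exists_max hH.eigenvalues
  have horth := hH.eigenvectorBasis.orthonormal
  have hspec : specRad G = hH.eigenvalues i0 := by
    have h1 : specRad G = sSup (spectrum ℝ (aM G)) := by
      unfold specRad
      have : (aM G) = G.adjMatrix ℝ := by
        ext u v; simp [aM_apply, SimpleGraph.adjMatrix_apply]
      rw [this]
      convert rfl
    rw [h1, hH.spectrum_real_eq_range_eigenvalues]
    apply le_antisymm
    · apply csSup_le (Set.range_nonempty _)
      rintro _ ⟨i, rfl⟩; exact hi0 i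
    · exact le_csSup ⟨_, by rintro _ ⟨i, rfl⟩; exact hi0 i⟩ ⟨i0, rfl⟩
  have hU := hH.eigenvectorUnitary.2
  rw [Matrix.mem_unitaryGroup_iff] at hU
  refine ⟨⟨hH.eigenvalues, fun i u => hH.eigenvectorBasis i u, i0, ?_, ?_, ?_, hspec.symm, hi0⟩⟩
  · intro i u
    have := congrFun (hH.mulVec_eigenvectorBasis i) u
    simpa [Matrix.mulVec, dotProduct] using this
  · intro i j
    have := (orthonormal_iff_ite.1 horth) j i
    rw [EuclideanSpace.inner_eq_star_dotProduct] at this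
    simp only [dotProduct, star_trivial] at this
    rw [show (if i = j then (1:ℝ) else 0) = if j = i then 1 else 0 by simp only [eq_comm]]
    exact this
  · intro u v
    have := congrFun (congrFun hU u) v
    rw [Matrix.mul_apply] at this
    simpa [Matrix.star_apply, Matrix.one_apply, Matrix.IsHermitian.eigenvectorUnitary_apply]
      using this

section
variable {n : ℕ} {G : SimpleGraph (Fin n)}

lemma SD.eig_pow (D : SD G) (k : ℕ) (i u : Fin n) :
    ∑ v, ((aM G) ^ k) u v * D.φ i v = D.μ i ^ k * D.φ i u := by
  induction k generalizing u with
  | zero => simp [Matrix.one_apply]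
  | succ k ih =>
    rw [pow_succ]
    simp only [Matrix.mul_apply, Finset.sum_mul]
    rw [Finset.sum_comm]
    simp only [mul_assoc]
    simp only [← Finset.mul_sum, D.eig]
    simp only [mul_left_comm _ (D.μ i)]
    rw [← Finset.mul_sum, ih]; ring

lemma SD.pow_apply (D : SD G) (k : ℕ) (u v : Fin n) :
    ((aM G) ^ k) u v = ∑ i, D.μ i ^ k * (D.φ i u * D.φ i v) := by
  have h1 : ((aM G) ^ k) u v = ∑ w, ((aM G) ^ k) u w * (∑ i, D.φ i w * D.φ i v) := by
    simp [D.compl]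
  rw [h1]
  simp only [Finset.mul_sum]
  rw [Finset.sum_comm]
  refine Finset.sum_congr rfl (fun i _ => ?_)
  rw [← mul_assoc, ← D.eig_pow, Finset.sum_mul]
  exact Finset.sum_congr rfl (fun w _ => by ring)

lemma SD.expand (D : SD G) (y : Fin n → ℝ) (u : Fin n) :
    y u = ∑ i, (∑ w, y w * D.φ i w) * D.φ i u := by
  simp only [Finset.sum_mul]
  rw [Finset.sum_comm]
  have : ∀ w, ∑ i, y w * D.φ i w * D.φ i u = y w * if w = u then 1 else 0 := by
    intro w
    rw [← D.compl, Finset.mul_sum]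
    exact Finset.sum_congr rfl (fun i _ => by ring)
  simp [this]

lemma SD.parseval (D : SD G) (y : Fin n → ℝ) :
    ∑ u, y u ^ 2 = ∑ i, (∑ w, y w * D.φ i w) ^ 2 := by
  have : ∀ u, y u ^ 2 = ∑ i, (∑ w, y w * D.φ i w) * (y u * D.φ i u) := by
    intro u
    rw [sq]; nth_rw 2 [D.expand y u]
    rw [Finset.mul_sum]
    exact Finset.sum_congr rfl (fun i _ => by ring)
  simp only [this]
  rw [Finset.sum_comm]
  refine Finset.sum_congr rfl (fun i _ => ?_)
  rw [← Finset.mul_sum, sq]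

lemma SD.rayleigh_eq (D : SD G) (y : Fin n → ℝ) :
    ∑ u, y u * ∑ v, aM G u v * y v = ∑ i, D.μ i * (∑ w, y w * D.φ i w) ^ 2 := by
  have h1 : ∀ u, ∑ v, aM G u v * y v = ∑ i, (∑ w, y w * D.φ i w) * (D.μ i * D.φ i u) := by
    intro u
    have : ∀ v, aM G u v * y v = ∑ i, (∑ w, y w * D.φ i w) * (aM G u v * D.φ i v) := by
      intro v
      nth_rw 1 [D.expand y v]
      rw [Finset.mul_sum]
      exact Finset.sum_congr rfl (fun i _ => by ring)
    simp only [this]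
    rw [Finset.sum_comm]
    refine Finset.sum_congr rfl (fun i _ => ?_)
    rw [← Finset.mul_sum, D.eig]
  simp only [h1, Finset.mul_sum]
  rw [Finset.sum_comm]
  refine Finset.sum_congr rfl (fun i _ => ?_)
  rw [sq, ← mul_assoc, Finset.mul_sum]
  exact Finset.sum_congr rfl (fun u _ => by ring)

lemma SD.rayleigh (D : SD G) (y : Fin n → ℝ) :
    ∑ u, y u * ∑ v, aM G u v * y v ≤ D.μ D.i0 * ∑ u, y u ^ 2 := by
  rw [D.rayleigh_eq, D.parseval, Finset.mul_sum]
  exact Finset.sum_le_sum (fun i _ => mul_le_mul_of_nonneg_right (D.le_top i) (sq_nonneg _))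

lemma SD.unit (D : SD G) (i : Fin n) : ∑ u, D.φ i u ^ 2 = 1 := by
  have := D.orth i i
  simpa [sq] using this

/-- The modulus of a top eigenvector is a sub-eigenvector. -/
lemma SD.abs_sub (D : SD G) (h0 : 0 ≤ D.μ D.i0) (u : Fin n) :
    D.μ D.i0 * |D.φ D.i0 u| ≤ ∑ v, aM G u v * |D.φ D.i0 v| := by
  calc D.μ D.i0 * |D.φ D.i0 u| = |D.μ D.i0 * D.φ D.i0 u| := by rw [abs_mul, abs_of_nonneg h0]
    _ = |∑ v, aM G u v * D.φ D.i0 v| := by rw [D.eig]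
    _ ≤ ∑ v, |aM G u v * D.φ D.i0 v| := Finset.abs_sum_le_sum_abs _ _
    _ = _ := Finset.sum_congr rfl (fun v _ => by rw [abs_mul, abs_of_nonneg (aM_nonneg G u v)])

lemma aM_sum_row (G : SimpleGraph (Fin n)) (S : Finset (Fin n)) (u : Fin n) :
    ∑ v ∈ S, aM G u v = dg G S u := by
  classical
  simp [aM_apply, dg]

lemma aM_pow_nonneg (G : SimpleGraph (Fin n)) (k : ℕ) (u v : Fin n) : 0 ≤ ((aM G) ^ k) u v := by
  induction k generalizing u v with
  | zero => simp only [pow_zero, Matrix.one_apply]; split_ifs <;> norm_num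
  | succ k ih =>
    rw [pow_succ, Matrix.mul_apply]
    exact Finset.sum_nonneg (fun w _ => mul_nonneg (ih _ _) (aM_nonneg G _ _))

lemma aM_pow_le (G : SimpleGraph (Fin n)) (k : ℕ) (u v : Fin n) :
    ((aM G) ^ (k+1)) u v ≤ (n:ℝ) ^ k := by
  induction k generalizing u v with
  | zero => simpa using aM_le_one G u v
  | succ k ih =>
    rw [pow_succ, Matrix.mul_apply]
    calc ∑ w, ((aM G) ^ (k+1)) u w * aM G w v ≤ ∑ w : Fin n, (n:ℝ)^k := by
          refine Finset.sum_le_sum (fun w _ => ?_)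
          calc _ ≤ (n:ℝ)^k * 1 := mul_le_mul (ih u w) (aM_le_one G w v) (aM_nonneg G w v)
                (by positivity)
            _ = _ := mul_one _
      _ = _ := by simp [pow_succ]; ring

lemma aM_sq_diag (G : SimpleGraph (Fin n)) (u : Fin n) :
    ((aM G) ^ 2) u u = dg G Finset.univ u := by
  rw [sq, Matrix.mul_apply, ← aM_sum_row]
  refine Finset.sum_congr rfl (fun w _ => ?_)
  rw [aM_comm G w u, aM_sq]

/-- Many walks of length `k+1` between `u` and `v` give a path of length `k+1`. -/
lemma path_of_walks (G : SimpleGraph (Fin n)) (M : ℕ) (k : ℕ) :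
    ∀ (F : Finset (Fin n)) (u v : Fin n), u ≠ v → v ∉ F → u ∉ F → F.card + k + 1 ≤ M →
      (k * M : ℝ) * (n:ℝ) ^ k < ((aM G) ^ (k+1)) u v * n →
      ∃ l, PL G l u v ∧ l.length = k + 2 ∧ ∀ x ∈ l, x ∉ F := by
  classical
  induction k with
  | zero =>
    intro F u v huv hv hu _ h
    have hadj : G.Adj u v := by
      by_contra hc
      simp [aM_apply, hc] at h
    refine ⟨[u, v], ?_, rfl, ?_⟩
    · exact (PL.singleton G v).cons hadj (by simpa using huv)
    · intro x hx
      simp at hx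
      rcases hx with rfl | rfl <;> assumption
  | succ k ih =>
    intro F u v huv hv hu hM h
    have hn : 0 < n := u.pos
    have hnR : (0:ℝ) < n := by exact_mod_cast hn
    have : ∃ a, a ∉ insert v F ∧ G.Adj u a ∧
        (k * M : ℝ) * (n:ℝ) ^ k < ((aM G) ^ (k+1)) a v * n := by
      by_contra hcon
      push Not at hcon
      apply absurd h
      rw [not_lt, pow_succ', Matrix.mul_apply]
      have hsplit := Finset.sum_add_sum_compl (insert v F)
        (fun a => aM G u a * ((aM G) ^ (k+1)) a v)
      rw [← hsplit]
      have h1 : ∑ a ∈ insert v F, aM G u a * ((aM G) ^ (k+1)) a v ≤ (M:ℝ) * (n:ℝ)^k := by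
        calc _ ≤ ∑ a ∈ insert v F, (n:ℝ)^k := by
              refine Finset.sum_le_sum (fun a _ => ?_)
              calc _ ≤ 1 * (n:ℝ)^k := mul_le_mul (aM_le_one G u a) (aM_pow_le G k a v)
                    (aM_pow_nonneg G _ _ _) (by norm_num)
                _ = _ := one_mul _
          _ = ((insert v F).card : ℝ) * (n:ℝ)^k := by simp
          _ ≤ _ := by
              have : (insert v F).card ≤ M := (Finset.card_insert_le _ _).trans (by omega)
              have : ((insert v F).card : ℝ) ≤ M := by exact_mod_cast this
              gcongr
      have h2 : (∑ a ∈ (insert v F)ᶜ, aM G u a * ((aM G) ^ (k+1)) a v) * n ≤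
          (k * M : ℝ) * (n:ℝ)^(k+1) := by
        rw [Finset.sum_mul]
        calc _ ≤ ∑ a ∈ (insert v F)ᶜ, (k * M : ℝ) * (n:ℝ)^k := by
              refine Finset.sum_le_sum (fun a ha => ?_)
              by_cases hua : G.Adj u a
              · have := hcon a (by simpa using ha) hua
                simpa [aM_apply, hua] using this
              · simp [aM_apply, hua]; positivity
          _ ≤ ∑ a : Fin n, (k * M : ℝ) * (n:ℝ)^k :=
              Finset.sum_le_sum_of_subset_of_nonneg (Finset.subset_univ _)
                (fun _ _ _ => by positivity)
          _ = _ := by simp; ring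
      have h1' := mul_le_mul_of_nonneg_right h1 hnR.le
      push_cast
      calc _ ≤ (M:ℝ) * (n:ℝ)^k * n + (k * M : ℝ) * (n:ℝ)^(k+1) := by rw [add_mul]; linarith
        _ = _ := by ring
    obtain ⟨a, ha, hua, hw⟩ := this
    rw [Finset.mem_insert, not_or] at ha
    obtain ⟨l, hl, hlen, hmem⟩ := ih (insert u F) a v ha.1 (by simp [hv, huv.symm])
      (by simp [ha.2, hua.ne']) (by
        have := Finset.card_insert_le u F; omega) hw
    refine ⟨u :: l, hl.cons hua (fun h => hmem u h (by simp)), by simp [hlen], ?_⟩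
    intro x hx
    rcases List.mem_cons.1 hx with rfl | hx
    · exact hu
    · exact fun hxF => hmem x hx (by simp [hxF])

end


/-! ### Wheels -/

section
variable {n : ℕ} {G : SimpleGraph (Fin n)}

open Classical in
lemma wheel_core (U : Finset (Fin n)) (x : Fin n → ℝ) (μ : ℝ) (hμ : 0 < μ)
    (hx : ∀ v ∈ U, 0 ≤ x v) (hpos : ∃ v ∈ U, 0 < x v)
    (hsub : ∀ v ∈ U, μ * x v ≤ ∑ u ∈ U, aM G v u * x u) :
    ∃ w ∈ U, μ ≤ (U.filter (fun u => G.Adj w u)).card ∧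
      μ ^ 2 - (U.filter (fun u => G.Adj w u)).card *
        ((U.card : ℝ) - (U.filter (fun u => G.Adj w u)).card) ≤
        e2 G (U.filter (fun u => G.Adj w u)) := by
  obtain ⟨v0, hv0, hv0p⟩ := hpos
  obtain ⟨w, hw, hmax⟩ := Finset.exists_max_image U x ⟨v0, hv0⟩
  have hxw : 0 < x w := lt_of_lt_of_le hv0p (hmax v0 hv0)
  refine ⟨w, hw, ?_⟩
  set N := U.filter (fun u => G.Adj w u) with hN
  have hNU : N ⊆ U := Finset.filter_subset _ _
  have hrow : ∀ v ∈ U, ∑ u ∈ U, aM G v u * x u ≤ (dg G U v) * x w := by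
    intro v _
    rw [← aM_sum_row, Finset.sum_mul]
    exact Finset.sum_le_sum (fun u hu => mul_le_mul_of_nonneg_left (hmax u hu) (aM_nonneg G v u))
  have hdN : dg G U w = N.card := rfl
  constructor
  · have h1 := (hsub w hw).trans (hrow w hw)
    rw [hdN] at h1
    exact le_of_mul_le_mul_right h1 hxw
  have h2 : μ ^ 2 * x w ≤ (∑ v ∈ N, (dg G U v : ℝ)) * x w := by
    calc μ ^ 2 * x w = μ * (μ * x w) := by ring
      _ ≤ μ * ∑ u ∈ U, aM G w u * x u := mul_le_mul_of_nonneg_left (hsub w hw) hμ.le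
      _ = ∑ u ∈ U, aM G w u * (μ * x u) := by
          rw [Finset.mul_sum]; exact Finset.sum_congr rfl (fun u _ => by ring)
      _ ≤ ∑ u ∈ U, aM G w u * (dg G U u * x w) :=
          Finset.sum_le_sum (fun u hu => mul_le_mul_of_nonneg_left
            ((hsub u hu).trans (hrow u hu)) (aM_nonneg G w u))
      _ = _ := by
          rw [hN, Finset.sum_filter, Finset.sum_mul]
          refine Finset.sum_congr rfl (fun u _ => ?_)
          rw [aM_apply]; split_ifs <;> simp
  have h3 := le_of_mul_le_mul_right h2 hxw
  have h4 : (∑ v ∈ N, (dg G U v : ℝ)) ≤ N.card * ((U.card : ℝ) - N.card) + e2 G N := by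
    have : ∀ v ∈ N, (dg G U v : ℝ) ≤ ((U.card : ℝ) - N.card) + dg G N v := by
      intro v _
      rw [dg_split G hNU v]
      have h5 := dg_le G (U \ N) v
      have h6 := Finset.card_sdiff_add_card_eq_card hNU
      have : (dg G (U \ N) v : ℝ) + N.card ≤ U.card := by exact_mod_cast (by omega)
      push_cast; linarith
    calc _ ≤ ∑ v ∈ N, (((U.card : ℝ) - N.card) + dg G N v) := Finset.sum_le_sum this
      _ = _ := by rw [Finset.sum_add_distrib, Finset.sum_const, nsmul_eq_mul]; simp [e2]
  linarith

open Classical in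
lemma wheel_cycle (U : Finset (Fin n)) (w : Fin n) (m : ℕ)
    (h : m * (U.filter (fun u => G.Adj w u)).card < e2 G (U.filter (fun u => G.Adj w u))) :
    HasCycleLen G (m + 3) := by
  obtain ⟨l, a, b, hl, hlen, hmem⟩ := erdos_gallai G m _ _ le_rfl h
  have hadj : ∀ x ∈ l, G.Adj w x := fun x hx => (Finset.mem_filter.1 (hmem x hx)).2
  have hw : w ∉ l := fun hw => (hadj w hw).ne rfl
  have h1 := (hl.cons (hadj a hl.mem_hd) hw).hasCycle (hadj b hl.mem_lst).symm
    (by simp [hlen])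
  simpa [hlen] using h1

lemma wheel_long (U : Finset (Fin n)) (x : Fin n → ℝ) (μ : ℝ) (hμ : 0 < μ)
    (hx : ∀ v ∈ U, 0 ≤ x v) (hpos : ∃ v ∈ U, 0 < x v)
    (hsub : ∀ v ∈ U, μ * x v ≤ ∑ u ∈ U, aM G v u * x u)
    (l : ℕ) (h3 : 3 ≤ l) (hl : (l : ℝ) ≤ 2 * μ - U.card) : HasCycleLen G l := by
  classical
  obtain ⟨w, hw, h1, h2⟩ := wheel_core U x μ hμ hx hpos hsub
  obtain ⟨m, rfl⟩ := Nat.exists_eq_add_of_le' h3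
  apply wheel_cycle U w m
  set N : ℝ := ((U.filter (fun u => G.Adj w u)).card : ℝ) with hN
  have : (m : ℝ) * N < e2 G (U.filter (fun u => G.Adj w u)) := by
    push_cast at hl
    nlinarith [sq_nonneg (μ - N)]
  rw [hN] at this
  exact_mod_cast this

lemma triangle_of (D : SD G) (h : Real.sqrt ((n ^ 2 / 4 : ℕ) : ℝ) < D.μ D.i0) :
    HasCycleLen G 3 := by
  classical
  have hpos : 0 < D.μ D.i0 := lt_of_le_of_lt (Real.sqrt_nonneg _) h
  obtain ⟨w, hw, h1, h2⟩ := wheel_core (G := G) Finset.univ (fun v => |D.φ D.i0 v|) _ hpos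
    (fun v _ => abs_nonneg _) (by
      by_contra hc
      push Not at hc
      have := D.unit D.i0
      have h0 : ∀ v, D.φ D.i0 v = 0 := fun v => by simpa using hc v (Finset.mem_univ v)
      simp [h0] at this) (fun v _ => D.abs_sub hpos.le v)
  apply wheel_cycle Finset.univ w 0
  set N := (Finset.univ.filter (fun u => G.Adj w u)).card with hN
  rw [zero_mul]
  have hNn : N ≤ n := by simpa using Finset.card_filter_le (Finset.univ : Finset (Fin n)) (fun u => G.Adj w u)
  have h4 : N * (n - N) ≤ n ^ 2 / 4 := by
    rw [Nat.le_div_iff_mul_le (by norm_num)]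
    obtain ⟨r, hr⟩ := Nat.exists_eq_add_of_le hNn
    have hr2 : n - N = r := by omega
    have hr3 : n ^ 2 = (N + r) ^ 2 := by rw [← hr]
    rw [hr2, hr3]
    nlinarith [two_mul_le_add_sq N r]
  have h5 : ((N * (n - N) : ℕ) : ℝ) ≤ ((n ^ 2 / 4 : ℕ) : ℝ) := by exact_mod_cast h4
  rw [Nat.cast_mul, Nat.cast_sub hNn] at h5
  have h6 : ((n ^ 2 / 4 : ℕ) : ℝ) < D.μ D.i0 ^ 2 := by
    rw [← Real.sqrt_lt' hpos]; exact h
  have h7 : (0:ℝ) < e2 G (Finset.univ.filter (fun u => G.Adj w u)) := by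
    simp only [Finset.card_univ, Fintype.card_fin] at h2
    linarith
  exact_mod_cast h7

/-! ### Two eigenvectors with large eigenvalue -/

open Classical in
lemma pos_part_sub (f : Fin n → ℝ) (μ : ℝ) (hf : ∀ u, ∑ v, aM G u v * f v = μ * f u) :
    ∀ v ∈ Finset.univ.filter (fun v => 0 < f v),
      μ * f v ≤ ∑ u ∈ Finset.univ.filter (fun v => 0 < f v), aM G v u * f u := by
  intro v _
  rw [← hf, Finset.sum_filter]
  refine Finset.sum_le_sum (fun u _ => ?_)
  split_ifs with h
  · exact le_rfl
  · exact mul_nonpos_of_nonneg_of_nonpos (aM_nonneg G v u) (not_lt.1 h)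

lemma case_one (f g : Fin n → ℝ) (μf μg μ : ℝ) (hμ : 0 < μ) (hμf : μ ≤ μf) (hμg : μ ≤ μg)
    (hf : ∀ u, ∑ v, aM G u v * f v = μf * f u) (hg : ∀ u, ∑ v, aM G u v * g v = μg * g u)
    (hf0 : ∃ u, f u ≠ 0) (hg0 : ∃ u, g u ≠ 0) (hfg : ∑ u, f u * g u = 0)
    (l : ℕ) (h3 : 3 ≤ l) (hl : (l : ℝ) ≤ 2 * μ - n / 2) : HasCycleLen G l := by
  classical
  -- a positive part with small support suffices
  have key : ∀ (f : Fin n → ℝ) (μf : ℝ), μ ≤ μf → (∀ u, ∑ v, aM G u v * f v = μf * f u) →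
      (∃ u, 0 < f u) → ((Finset.univ.filter (fun v => 0 < f v)).card : ℝ) ≤ n / 2 →
      HasCycleLen G l := by
    intro f μf hμf hf hp hc
    obtain ⟨u, hu⟩ := hp
    refine wheel_long (Finset.univ.filter (fun v => 0 < f v)) f μ hμ ?_ ⟨u, by simpa using hu, hu⟩
      ?_ l h3 (by linarith)
    · intro v hv; exact (Finset.mem_filter.1 hv).2.le
    · intro v hv
      refine le_trans ?_ (pos_part_sub f μf hf v hv)
      exact mul_le_mul_of_nonneg_right hμf (Finset.mem_filter.1 hv).2.le
  have key2 : ∀ (f g : Fin n → ℝ) (μf μg : ℝ), μ ≤ μf → μ ≤ μg →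
      (∀ u, ∑ v, aM G u v * f v = μf * f u) → (∀ u, ∑ v, aM G u v * g v = μg * g u) →
      (∃ u, 0 < f u) → (∃ u, 0 < g u) → (∀ u, 0 < f u → ¬ 0 < g u) → HasCycleLen G l := by
    intro f g μf μg hμf hμg hf hg hpf hpg hdis
    have hd : Disjoint (Finset.univ.filter (fun v => 0 < f v))
        (Finset.univ.filter (fun v => 0 < g v)) := by
      rw [Finset.disjoint_filter]; exact fun u _ => hdis u
    have h1 := Finset.card_union_of_disjoint hd
    have h2 : (Finset.univ.filter (fun v => 0 < f v) ∪ Finset.univ.filter (fun v => 0 < g v)).card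
      ≤ n := by simpa using Finset.card_le_univ (Finset.univ.filter (fun v => 0 < f v) ∪ Finset.univ.filter (fun v => 0 < g v))
    have h3 : ((Finset.univ.filter (fun v => 0 < f v)).card : ℝ) +
        (Finset.univ.filter (fun v => 0 < g v)).card ≤ n := by
      rw [h1] at h2; exact_mod_cast h2
    rcases le_total ((Finset.univ.filter (fun v => 0 < f v)).card : ℝ)
      ((Finset.univ.filter (fun v => 0 < g v)).card : ℝ) with h | h
    · exact key f μf hμf hf hpf (by linarith)
    · exact key g μg hμg hg hpg (by linarith)
  have neg : ∀ (f : Fin n → ℝ) (μf : ℝ), (∀ u, ∑ v, aM G u v * f v = μf * f u) →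
      ∀ u, ∑ v, aM G u v * (-f v) = μf * (-f u) := by
    intro f μf hf u
    rw [mul_neg, ← hf, ← Finset.sum_neg_distrib]
    exact Finset.sum_congr rfl (fun v _ => by ring)
  -- if an eigenvector changes sign we are done
  have sgn : ∀ (f : Fin n → ℝ) (μf : ℝ), μ ≤ μf → (∀ u, ∑ v, aM G u v * f v = μf * f u) →
      (∃ u, 0 < f u) → (∃ u, f u < 0) → HasCycleLen G l := by
    intro f μf hμf hf hp hm
    obtain ⟨u, hu⟩ := hm
    exact key2 f (fun u => - f u) μf μf hμf hμf hf (neg f μf hf) hp ⟨u, by linarith⟩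
      (fun u h h' => by linarith)
  -- wlog nonnegative
  have key3 : ∀ (f g : Fin n → ℝ), (∀ u, ∑ v, aM G u v * f v = μf * f u) →
      (∀ u, ∑ v, aM G u v * g v = μg * g u) →
      (∃ u, 0 < f u) → (∃ u, 0 < g u) → ∑ u, f u * g u = 0 → HasCycleLen G l := by
    intro f g hf hg hpf hpg hfg
    by_cases h1 : ∃ u, f u < 0
    · exact sgn f μf hμf hf hpf h1
    by_cases h2 : ∃ u, g u < 0
    · exact sgn g μg hμg hg hpg h2
    push Not at h1 h2
    rw [Finset.sum_eq_zero_iff_of_nonneg (fun u _ => mul_nonneg (h1 u) (h2 u))] at hfg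
    refine key2 f g μf μg hμf hμg hf hg hpf hpg (fun u hu hu' => ?_)
    exact (mul_pos hu hu').ne' (hfg u (Finset.mem_univ u))
  obtain ⟨u, hu⟩ := hf0
  obtain ⟨v, hv⟩ := hg0
  rcases lt_or_gt_of_ne hu with hu | hu <;> rcases lt_or_gt_of_ne hv with hv | hv
  · exact key3 (fun u => -f u) (fun u => -g u) (neg f μf hf) (neg g μg hg) ⟨u, by linarith⟩
      ⟨v, by linarith⟩ (by simpa using hfg)
  · exact key3 (fun u => -f u) g (neg f μf hf) hg ⟨u, by linarith⟩ ⟨v, hv⟩ (by simpa using hfg)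
  · exact key3 f (fun u => -g u) hf (neg g μg hg) ⟨u, hu⟩ ⟨v, by linarith⟩ (by simpa using hfg)
  · exact key3 f g hf hg ⟨u, hu⟩ ⟨v, hv⟩ hfg

end


/-! ### Near-bipartite case -/

section
variable {n : ℕ} {G : SimpleGraph (Fin n)}

open Classical in
lemma neg_cut (y : Fin n → ℝ) (ν ν' : ℝ) (hν : 0 < ν) (hνν : ν ≤ ν')
    (hy : ∀ u, ∑ v, aM G u v * y v = -ν' * y u) (hy0 : ∃ u, y u ≠ 0) :
    ∃ U : Finset (Fin n), ν ^ 2 ≤ ∑ u ∈ U, (dg G Uᶜ u : ℝ) := by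
  set p : Fin n → ℝ := fun u => max (y u) 0 with hp
  set q : Fin n → ℝ := fun u => max (-y u) 0 with hq
  have hp0 : ∀ u, 0 ≤ p u := fun u => le_max_right _ _
  have hq0 : ∀ u, 0 ≤ q u := fun u => le_max_right _ _
  have hpq : ∀ u, y u = p u - q u := by
    intro u; simp only [hp, hq]
    rcases le_total 0 (y u) with h | h
    · rw [max_eq_left h, max_eq_right (by linarith)]; ring
    · rw [max_eq_right h, max_eq_left (by linarith)]; ring
  have hA : ∀ u, ∑ v, aM G u v * y v = ∑ v, aM G u v * p v - ∑ v, aM G u v * q v := by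
    intro u; rw [← Finset.sum_sub_distrib]
    exact Finset.sum_congr rfl (fun v _ => by rw [hpq v]; ring)
  have hAp : ∀ u, 0 ≤ ∑ v, aM G u v * p v :=
    fun u => Finset.sum_nonneg (fun v _ => mul_nonneg (aM_nonneg G u v) (hp0 v))
  have hAq : ∀ u, 0 ≤ ∑ v, aM G u v * q v :=
    fun u => Finset.sum_nonneg (fun v _ => mul_nonneg (aM_nonneg G u v) (hq0 v))
  have h1 : ∀ u, ν * p u ≤ ∑ v, aM G u v * q v := by
    intro u
    rcases le_total (y u) 0 with h | h
    · have : p u = 0 := max_eq_right h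
      rw [this, mul_zero]; exact hAq u
    · have e : p u = y u := max_eq_left h
      have := hy u; rw [hA] at this
      rw [e]; nlinarith [hAp u]
  have h2 : ∀ u, ν * q u ≤ ∑ v, aM G u v * p v := by
    intro u
    rcases le_total 0 (y u) with h | h
    · have : q u = 0 := max_eq_right (by linarith)
      rw [this, mul_zero]; exact hAp u
    · have e : q u = - y u := max_eq_left (by linarith)
      have := hy u; rw [hA] at this
      rw [e]; nlinarith [hAq u]
  set t := ∑ u, p u * ∑ v, aM G u v * q v with ht
  have ht' : t = ∑ u, q u * ∑ v, aM G u v * p v := by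
    rw [ht]; simp only [Finset.mul_sum]
    rw [Finset.sum_comm]
    refine Finset.sum_congr rfl (fun v _ => Finset.sum_congr rfl (fun u _ => ?_))
    rw [aM_comm G u v]; ring
  set P := ∑ u, p u ^ 2 with hP
  set Q := ∑ u, q u ^ 2 with hQ
  have h3 : ν * P ≤ t := by
    rw [hP, ht, Finset.mul_sum]
    refine Finset.sum_le_sum (fun u _ => ?_)
    have := mul_le_mul_of_nonneg_left (h1 u) (hp0 u)
    nlinarith
  have h4 : ν * Q ≤ t := by
    rw [hQ, ht', Finset.mul_sum]
    refine Finset.sum_le_sum (fun u _ => ?_)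
    have := mul_le_mul_of_nonneg_left (h2 u) (hq0 u)
    nlinarith
  have hP0 : 0 ≤ P := Finset.sum_nonneg (fun u _ => sq_nonneg _)
  have hQ0 : 0 ≤ Q := Finset.sum_nonneg (fun u _ => sq_nonneg _)
  have hPQ : 0 < P + Q := by
    obtain ⟨u, hu⟩ := hy0
    have hPu : p u ^ 2 ≤ P := Finset.single_le_sum (f := fun u => p u ^ 2)
      (fun u _ => sq_nonneg _) (Finset.mem_univ u)
    have hQu : q u ^ 2 ≤ Q := Finset.single_le_sum (f := fun u => q u ^ 2)
      (fun u _ => sq_nonneg _) (Finset.mem_univ u)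
    have : 0 < y u ^ 2 := by positivity
    rw [hpq u] at this
    nlinarith [mul_nonneg (hp0 u) (hq0 u)]
  have ht0 : 0 < t := by nlinarith
  set U : Finset (Fin n) := Finset.univ.filter (fun u => 0 < y u) with hU
  refine ⟨U, ?_⟩
  have h5 : t = ∑ z ∈ U ×ˢ Uᶜ, aM G z.1 z.2 * (p z.1 * q z.2) := by
    rw [ht, Finset.sum_product]
    rw [← Finset.sum_subset (Finset.subset_univ U)]
    · refine Finset.sum_congr rfl (fun u _ => ?_)
      rw [Finset.mul_sum, ← Finset.sum_subset (Finset.subset_univ Uᶜ)]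
      · exact Finset.sum_congr rfl (fun v _ => by ring)
      · intro v _ hv
        have : 0 < y v := by simpa [hU] using hv
        have : q v = 0 := max_eq_right (by linarith)
        rw [this]; ring
    · intro u _ hu
      have : y u ≤ 0 := by simpa [hU] using hu
      have : p u = 0 := max_eq_right this
      rw [this, zero_mul]
  have h6 := Finset.sum_mul_sq_le_sq_mul_sq (U ×ˢ Uᶜ) (fun z => aM G z.1 z.2)
    (fun z => p z.1 * q z.2)
  rw [← h5] at h6
  have h7 : ∑ z ∈ U ×ˢ Uᶜ, aM G z.1 z.2 ^ 2 = ∑ u ∈ U, (dg G Uᶜ u : ℝ) := by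
    rw [Finset.sum_product]
    refine Finset.sum_congr rfl (fun u _ => ?_)
    rw [← aM_sum_row]
    exact Finset.sum_congr rfl (fun v _ => by rw [sq, aM_sq])
  have h8 : ∑ z ∈ U ×ˢ Uᶜ, (p z.1 * q z.2) ^ 2 ≤ P * Q := by
    rw [hP, hQ, Finset.sum_mul_sum, ← Finset.sum_product', Finset.univ_product_univ]
    calc _ ≤ ∑ z : Fin n × Fin n, (p z.1 * q z.2) ^ 2 :=
          Finset.sum_le_sum_of_subset_of_nonneg (Finset.subset_univ _) (fun _ _ _ => sq_nonneg _)
      _ = _ := Finset.sum_congr rfl (fun z _ => by ring)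
  rw [h7] at h6
  set E := ∑ u ∈ U, (dg G Uᶜ u : ℝ) with hE
  have hE0 : 0 ≤ E := Finset.sum_nonneg (fun u _ => Nat.cast_nonneg _)
  have h9 : t ^ 2 ≤ E * (P * Q) := h6.trans (mul_le_mul_of_nonneg_left h8 hE0)
  have h10 : 0 < P * Q := by
    have : 0 ≤ P * Q := mul_nonneg hP0 hQ0
    rcases this.eq_or_lt with h | h
    · rw [← h, mul_zero] at h9; nlinarith
    · exact h
  have h11 : ν ^ 2 * (P * Q) ≤ t ^ 2 := by
    have := mul_le_mul h3 h4 (by positivity) ht0.le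
    nlinarith
  exact le_of_mul_le_mul_right (h11.trans h9) h10

open Classical in
lemma common_nbr (U : Finset (Fin n)) (w w' : Fin n) (F : Finset (Fin n))
    (h : U.card + F.card < dg G U w + dg G U w') :
    ∃ u ∈ U, u ∉ F ∧ G.Adj w u ∧ G.Adj w' u := by
  by_contra hc
  push Not at hc
  set A := U.filter (fun u => G.Adj w u) with hA
  set B := U.filter (fun u => G.Adj w' u) with hB
  have h1 : dg G U w = A.card := rfl
  have h2 : dg G U w' = B.card := rfl
  have h3 : A ∩ B ⊆ F := by
    intro u hu
    simp only [hA, hB, Finset.mem_inter, Finset.mem_filter] at hu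
    by_contra hF
    exact hc u hu.1.1 hF hu.1.2 hu.2.2
  have h4 := Finset.card_union_add_card_inter A B
  have h5 : (A ∪ B).card ≤ U.card := Finset.card_le_card
    (Finset.union_subset (Finset.filter_subset _ _) (Finset.filter_subset _ _))
  have h6 := Finset.card_le_card h3
  omega

/-- Any two vertices of `W` have a common neighbour outside any set of at most `M` vertices, and
`W` has more than `M` vertices. -/
def Linked {n : ℕ} (G : SimpleGraph (Fin n)) (W : Finset (Fin n)) (M : ℕ) : Prop :=
  M < W.card ∧ ∀ w ∈ W, ∀ w' ∈ W, ∀ F : Finset (Fin n), F.card ≤ M →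
    ∃ u, u ∉ F ∧ G.Adj w u ∧ G.Adj w' u

lemma Linked.path {W : Finset (Fin n)} {M : ℕ} (h : Linked G W M) (j : ℕ) :
    ∀ (F : Finset (Fin n)) (w w' : Fin n), w ∈ W → w' ∈ W → w ≠ w' → w ∉ F → w' ∉ F →
      F.card + 2 * j + 4 ≤ M →
      ∃ l, PL G l w w' ∧ l.length = 2 * j + 3 ∧ ∀ x ∈ l, x ∉ F := by
  classical
  induction j with
  | zero =>
    intro F w w' hw hw' hne hwF hwF' hM
    obtain ⟨u, huF, h1, h2⟩ := h.2 w hw w' hw' F (by omega)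
    refine ⟨[w, u, w'], ((PL.singleton G w').cons h2.symm ?_).cons h1 ?_, rfl, ?_⟩
    · simpa using h2.ne'
    · simp [h1.ne, hne]
    · intro x hx; simp at hx
      rcases hx with rfl | rfl | rfl <;> assumption
  | succ j ih =>
    intro F w w' hw hw' hne hwF hwF' hM
    have hex : ∃ z ∈ W, z ∉ insert w (insert w' F) := by
      by_contra hc
      push Not at hc
      have h1 := Finset.card_le_card (show W ⊆ insert w (insert w' F) from hc)
      have h2 := Finset.card_insert_le w (insert w' F)
      have h3 := Finset.card_insert_le w' F
      have := h.1
      omega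
    obtain ⟨z, hz, hzF⟩ := hex
    simp only [Finset.mem_insert, not_or] at hzF
    obtain ⟨l, hl, hlen, hav⟩ := ih (insert w F) z w' hz hw' hzF.2.1
      (by simp [hzF.1, hzF.2.2]) (by simp [hne.symm, hwF'])
      (by have := Finset.card_insert_le w F; omega)
    obtain ⟨u, huF, h1, h2⟩ := h.2 w hw z hz (F ∪ l.toFinset) (by
      have h3 := Finset.card_union_le F l.toFinset
      have h4 := List.toFinset_card_le l
      omega)
    simp only [Finset.mem_union, List.mem_toFinset, not_or] at huF
    refine ⟨w :: u :: l, (hl.cons h2.symm huF.2).cons h1 ?_, by simp [hlen]; omega, ?_⟩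
    · simp only [List.mem_cons, not_or]
      exact ⟨h1.ne, fun hwl => hav w hwl (Finset.mem_insert_self _ _)⟩
    · intro x hx
      simp only [List.mem_cons] at hx
      rcases hx with rfl | rfl | hx
      · exact hwF
      · exact huF.1
      · exact fun hxF => hav x hx (Finset.mem_insert_of_mem hxF)

lemma Linked.even_cycle {W : Finset (Fin n)} {M : ℕ} (h : Linked G W M) (j : ℕ)
    (hM : 2 * j + 5 ≤ M) : HasCycleLen G (2 * j + 4) := by
  classical
  obtain ⟨w, hw, w', hw', hne⟩ := Finset.one_lt_card.1 (show 1 < W.card by have := h.1; omega)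
  obtain ⟨u, -, h1, h2⟩ := h.2 w hw w' hw' ∅ (by simp)
  obtain ⟨l, hl, hlen, hav⟩ := h.path j {u} w w' hw hw' hne (by simpa using h1.ne)
    (by simpa using h2.ne) (by simp; omega)
  have := (hl.cons h1.symm (fun hu => hav u hu (by simp))).hasCycle h2 (by simp; omega)
  simpa [hlen] using this

lemma Linked.odd_cycle {W : Finset (Fin n)} {M : ℕ} (h : Linked G W M) (j : ℕ)
    (hM : 2 * j + 6 ≤ M) (a b : Fin n) (hab : G.Adj a b) (ha : 3 ≤ dg G W a)
    (hb : 3 ≤ dg G W b) : HasCycleLen G (2 * j + 5) := by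
  classical
  have hex : ∀ (a x y : Fin n), 3 ≤ dg G W a → ∃ w ∈ W, G.Adj a w ∧ w ≠ x ∧ w ≠ y := by
    intro a x y ha
    by_contra hc
    push Not at hc
    have h1 : W.filter (fun u => G.Adj a u) ⊆ {x, y} := by
      intro w hw
      rw [Finset.mem_filter] at hw
      simp only [Finset.mem_insert, Finset.mem_singleton]
      by_contra h2
      push Not at h2
      exact h2.2 (hc w hw.1 hw.2 h2.1)
    have h2 := Finset.card_le_card h1
    have h3 := Finset.card_le_two (a := x) (b := y)
    have h4 : dg G W a = (W.filter (fun u => G.Adj a u)).card := by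
      unfold dg; congr!
    omega
  obtain ⟨w, hw, haw, hwb, -⟩ := hex a b b ha
  obtain ⟨w', hw', hbw, hwa, hww⟩ := hex b a w hb
  obtain ⟨l, hl, hlen, hav⟩ := h.path j {a, b} w w' hw hw' hww.symm
    (by simp [haw.ne', hwb]) (by simp [hwa, hbw.ne'])
    (by have := Finset.card_le_two (a := a) (b := b); omega)
  have hal : a ∉ l := fun hu => hav a hu (by simp)
  have hbl : b ∉ l := fun hu => hav b hu (by simp)
  have := ((hl.cons haw hal).cons hab.symm (by simp [hab.ne', hbl])).hasCycle hbw.symm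
    (by simp; omega)
  simpa [hlen] using this

lemma bip_arith (s t P Q a b : ℝ) (hs : s ^ 2 ≤ a * P) (ht : t ^ 2 ≤ b * Q) (hP : 0 ≤ P)
    (hQ : 0 ≤ Q) (hPQ : P + Q ≤ 1) (ha : 0 ≤ a) (hb : 0 ≤ b) : (2 * (s * t)) ^ 2 ≤ a * b := by
  have h1 : s ^ 2 * t ^ 2 ≤ (a * P) * (b * Q) :=
    mul_le_mul hs ht (sq_nonneg _) (mul_nonneg ha hP)
  have h2 : 4 * (P * Q) ≤ 1 := by nlinarith [sq_nonneg (P - Q)]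
  calc (2 * (s * t)) ^ 2 = 4 * (s ^ 2 * t ^ 2) := by ring
    _ ≤ 4 * ((a * P) * (b * Q)) := by linarith
    _ = (a * b) * (4 * (P * Q)) := by ring
    _ ≤ (a * b) * 1 := mul_le_mul_of_nonneg_left h2 (mul_nonneg ha hb)
    _ = a * b := mul_one _

lemma bip_arith2 (m a b : ℝ) (ha : 0 ≤ a) (hb : 0 ≤ b) (h : m ^ 2 ≤ a * b) :
    m ≤ (a + b) / 2 := by
  nlinarith [sq_nonneg (a - b)]

/-- The spectral estimate in the near-bipartite case. -/
lemma no_bip (D : SD G) (hρ : Real.sqrt ((n ^ 2 / 4 : ℕ) : ℝ) < D.μ D.i0)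
    (hρ2 : (n:ℝ) / 2 - 1 / 4 ≤ D.μ D.i0) (hn : 10 ≤ n)
    (U W Z : Finset (Fin n)) (hcov : ∀ v, v ∈ U ∨ v ∈ W ∨ v ∈ Z)
    (hcard : U.card + W.card + Z.card ≤ n)
    (hUW : Disjoint U W)
    (hU : ∀ a ∈ U, ∀ b ∈ U, ¬ G.Adj a b) (hW : ∀ a ∈ W, ∀ b ∈ W, ¬ G.Adj a b)
    (hZ : ∀ v ∈ Z, (dg G Finset.univ v : ℝ) ≤ n / 40) : False := by
  classical
  set ρ := D.μ D.i0 with hρdef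
  have hn' : (10:ℝ) ≤ n := by exact_mod_cast hn
  have hρ0 : 0 < ρ := by linarith
  set x : Fin n → ℝ := fun v => |D.φ D.i0 v| with hx
  have hx0 : ∀ v, 0 ≤ x v := fun v => abs_nonneg _
  have hxu : ∑ v, x v ^ 2 = 1 := by
    simp only [hx, sq_abs]; exact D.unit _
  have hsub : ∀ u, ρ * x u ≤ ∑ v, aM G u v * x v := fun u => D.abs_sub hρ0.le u
  set S1 := ∑ u ∈ U, ∑ v ∈ W, x u * x v with hS1
  set S2 := ∑ u ∈ Z, x u * ∑ v, aM G u v * x v with hS2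
  have h1 : ρ ≤ ∑ u, ∑ v, aM G u v * (x u * x v) := by
    calc ρ = ∑ u, x u * (ρ * x u) := by
          have : ∑ u, x u * (ρ * x u) = ρ * ∑ u, x u ^ 2 := by
            rw [Finset.mul_sum]
            exact Finset.sum_congr rfl (fun u _ => by ring)
          rw [this, hxu, mul_one]
      _ ≤ ∑ u, x u * ∑ v, aM G u v * x v :=
          Finset.sum_le_sum (fun u _ => mul_le_mul_of_nonneg_left (hsub u) (hx0 u))
      _ = _ := by
          simp only [Finset.mul_sum]
          exact Finset.sum_congr rfl (fun u _ => Finset.sum_congr rfl (fun v _ => by ring))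
  have ind : ∀ (S : Finset (Fin n)) (f : Fin n → ℝ),
      ∑ u ∈ S, f u = ∑ u, (if u ∈ S then f u else 0) := by
    intro S f; simp
  have h2 : ∑ u, ∑ v, aM G u v * (x u * x v) ≤ S1 + S1 + S2 + S2 := by
    have e1 : S1 = ∑ u, ∑ v, if u ∈ U ∧ v ∈ W then x u * x v else 0 := by
      rw [hS1, ind U]
      refine Finset.sum_congr rfl (fun u _ => ?_)
      by_cases hu : u ∈ U
      · simp only [hu, if_true, true_and]; exact ind W _
      · simp [hu]
    have e1' : S1 = ∑ u, ∑ v, if v ∈ U ∧ u ∈ W then x u * x v else 0 := by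
      rw [e1, Finset.sum_comm]
      refine Finset.sum_congr rfl (fun u _ => Finset.sum_congr rfl (fun v _ => ?_))
      rw [mul_comm]
    have e2 : S2 = ∑ u, ∑ v, if u ∈ Z then aM G u v * (x u * x v) else 0 := by
      rw [hS2, ind Z]
      refine Finset.sum_congr rfl (fun u _ => ?_)
      by_cases hu : u ∈ Z
      · simp only [hu, if_true, Finset.mul_sum]
        exact Finset.sum_congr rfl (fun v _ => by ring)
      · simp [hu]
    have e2' : S2 = ∑ u, ∑ v, if v ∈ Z then aM G u v * (x u * x v) else 0 := by
      rw [e2, Finset.sum_comm]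
      refine Finset.sum_congr rfl (fun u _ => Finset.sum_congr rfl (fun v _ => ?_))
      rw [mul_comm (x v), aM_comm G v u]
    have : S1 + S1 + S2 + S2 = ∑ u, ∑ v, ((if u ∈ U ∧ v ∈ W then x u * x v else 0) +
        (if v ∈ U ∧ u ∈ W then x u * x v else 0) + (if u ∈ Z then aM G u v * (x u * x v) else 0)
        + (if v ∈ Z then aM G u v * (x u * x v) else 0)) := by
      simp only [Finset.sum_add_distrib]
      rw [← e1, ← e1', ← e2, ← e2']
    rw [this]
    refine Finset.sum_le_sum (fun u _ => Finset.sum_le_sum (fun v _ => ?_))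
    have hxx : 0 ≤ x u * x v := mul_nonneg (hx0 u) (hx0 v)
    by_cases huv : G.Adj u v
    · have ha : aM G u v = 1 := by simp [aM_apply, huv]
      rw [ha, one_mul]
      have p1 : 0 ≤ (if u ∈ U ∧ v ∈ W then x u * x v else 0) := by split_ifs <;> simp [hxx]
      have p2 : 0 ≤ (if v ∈ U ∧ u ∈ W then x u * x v else 0) := by split_ifs <;> simp [hxx]
      have p3 : 0 ≤ (if u ∈ Z then x u * x v else 0) := by split_ifs <;> simp [hxx]
      have p4 : 0 ≤ (if v ∈ Z then x u * x v else 0) := by split_ifs <;> simp [hxx]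
      rcases hcov u with hu | hu | hu
      · rcases hcov v with hv | hv | hv
        · exact absurd huv (hU u hu v hv)
        · rw [if_pos (⟨hu, hv⟩ : u ∈ U ∧ v ∈ W)]; linarith
        · rw [if_pos hv]; linarith
      · rcases hcov v with hv | hv | hv
        · rw [if_pos (⟨hv, hu⟩ : v ∈ U ∧ u ∈ W)]; linarith
        · exact absurd huv (hW u hu v hv)
        · rw [if_pos hv]; linarith
      · rw [if_pos hu]; linarith
    · have ha : aM G u v = 0 := by simp [aM_apply, huv]
      rw [ha]; simp only [zero_mul, ite_self, add_zero]
      have p1 : 0 ≤ (if u ∈ U ∧ v ∈ W then x u * x v else 0) := by split_ifs <;> simp [hxx]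
      have p2 : 0 ≤ (if v ∈ U ∧ u ∈ W then x u * x v else 0) := by split_ifs <;> simp [hxx]
      linarith
  -- the bipartite part
  have h3 : (2 * S1) ^ 2 ≤ (U.card : ℝ) * W.card := by
    have a1 : S1 = (∑ u ∈ U, x u) * ∑ v ∈ W, x v := by rw [hS1, Finset.sum_mul_sum]
    have a2 : (∑ u ∈ U, x u) ^ 2 ≤ U.card * ∑ u ∈ U, x u ^ 2 := sq_sum_le_card_mul_sum_sq
    have a3 : (∑ u ∈ W, x u) ^ 2 ≤ W.card * ∑ u ∈ W, x u ^ 2 := sq_sum_le_card_mul_sum_sq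
    have a4 : ∑ u ∈ U, x u ^ 2 + ∑ u ∈ W, x u ^ 2 ≤ 1 := by
      rw [← Finset.sum_union hUW, ← hxu]
      exact Finset.sum_le_sum_of_subset_of_nonneg (Finset.subset_univ _) (fun _ _ _ => sq_nonneg _)
    have a5 : 0 ≤ ∑ u ∈ U, x u ^ 2 := Finset.sum_nonneg (fun _ _ => sq_nonneg _)
    have a6 : 0 ≤ ∑ u ∈ W, x u ^ 2 := Finset.sum_nonneg (fun _ _ => sq_nonneg _)
    rw [a1]
    exact bip_arith _ _ _ _ _ _ a2 a3 a5 a6 a4 (Nat.cast_nonneg _) (Nat.cast_nonneg _)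
  have h4 : S2 ≤ Z.card * (n / 40 / ρ) := by
    rw [hS2, ← nsmul_eq_mul, ← Finset.sum_const]
    refine Finset.sum_le_sum (fun u hu => ?_)
    set Ax := ∑ v, aM G u v * x v with hAx
    have b1 : Ax ^ 2 ≤ n / 40 := by
      have := Finset.sum_mul_sq_le_sq_mul_sq Finset.univ (fun v => aM G u v) x
      rw [hxu, mul_one] at this
      refine this.trans (le_trans (le_of_eq ?_) (hZ u hu))
      rw [← aM_sum_row]
      exact Finset.sum_congr rfl (fun v _ => by rw [sq, aM_sq])
    have b2 := hsub u
    rw [le_div_iff₀ hρ0]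
    have b3 : 0 ≤ Ax := Finset.sum_nonneg (fun v _ => mul_nonneg (aM_nonneg G u v) (hx0 v))
    nlinarith
  have h5 : (n:ℝ) / 40 / ρ ≤ 1 / 16 := by
    rw [div_le_iff₀ hρ0]; linarith
  have h6 : S2 ≤ Z.card * (1 / 16) :=
    h4.trans (mul_le_mul_of_nonneg_left h5 (Nat.cast_nonneg _))
  have hc : (U.card : ℝ) + W.card + Z.card ≤ n := by exact_mod_cast hcard
  have h7 : ρ ≤ 2 * S1 + Z.card / 8 := by linarith
  rcases Nat.eq_zero_or_pos Z.card with hz | hz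
  · rw [hz] at h7; simp only [Nat.cast_zero, zero_div, add_zero] at h7
    have k1 : U.card * W.card ≤ n ^ 2 / 4 := by
      rw [Nat.le_div_iff_mul_le (by norm_num)]
      have : U.card + W.card ≤ n := by omega
      have := Nat.pow_le_pow_left this 2
      nlinarith [two_mul_le_add_sq U.card W.card]
    have k2 : ((U.card * W.card : ℕ) : ℝ) ≤ ((n ^ 2 / 4 : ℕ) : ℝ) := by exact_mod_cast k1
    push_cast at k2
    have k3 : ((n ^ 2 / 4 : ℕ) : ℝ) < ρ ^ 2 := by rw [← Real.sqrt_lt' hρ0]; exact hρ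
    push_cast at k3
    nlinarith
  · have hz' : (1:ℝ) ≤ Z.card := by exact_mod_cast hz
    have k1 : 2 * S1 ≤ ((U.card : ℝ) + W.card) / 2 :=
      bip_arith2 _ _ _ (Nat.cast_nonneg _) (Nat.cast_nonneg _) h3
    linarith
end

/-! ### Near-bipartite case: assembly -/

section
variable {n : ℕ} {G : SimpleGraph (Fin n)}

lemma good_part (U W : Finset (Fin n)) (hn : 0 < n)
    (h : (U.card : ℝ) * W.card - n ^ 2 / 1000000 ≤ ∑ u ∈ U, (dg G W u : ℝ)) :
    ∃ U0 ⊆ U, (U.card : ℝ) ≤ U0.card + n / 1000 ∧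
      ∀ u ∈ U0, (W.card : ℝ) ≤ dg G W u + n / 1000 := by
  classical
  refine ⟨U.filter (fun u => (W.card : ℝ) ≤ dg G W u + n / 1000), Finset.filter_subset _ _, ?_,
    fun u hu => (Finset.mem_filter.1 hu).2⟩
  have h1 := Finset.card_filter_add_card_filter_not (s := U)
    (fun u => (W.card : ℝ) ≤ dg G W u + n / 1000)
  set A := U.filter (fun u => (W.card : ℝ) ≤ dg G W u + n / 1000) with hA
  set B := U.filter (fun u => ¬ (W.card : ℝ) ≤ dg G W u + n / 1000) with hB
  have hn' : (0:ℝ) < n := by exact_mod_cast hn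
  have h2 : (B.card : ℝ) * (n / 1000) ≤ ∑ u ∈ U, ((W.card : ℝ) - dg G W u) := by
    rw [← nsmul_eq_mul, ← Finset.sum_const]
    calc _ ≤ ∑ u ∈ B, ((W.card : ℝ) - dg G W u) := by
          refine Finset.sum_le_sum (fun u hu => ?_)
          have := (Finset.mem_filter.1 hu).2
          linarith
      _ ≤ _ := by
          refine Finset.sum_le_sum_of_subset_of_nonneg (Finset.filter_subset _ _) (fun u _ _ => ?_)
          have : (dg G W u : ℝ) ≤ W.card := by exact_mod_cast dg_le G W u
          linarith
  rw [Finset.sum_sub_distrib, Finset.sum_const, nsmul_eq_mul] at h2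
  have h3 : (B.card : ℝ) ≤ n / 1000 := by
    by_contra hc
    push Not at hc
    have := mul_lt_mul_of_pos_right hc (show (0:ℝ) < n / 1000 by positivity)
    nlinarith
  have h4 : (A.card : ℝ) + B.card = U.card := by exact_mod_cast h1
  linarith

lemma linked_of (U W : Finset (Fin n)) (M : ℕ) (hM : (M : ℝ) ≤ 2 * n / 5) (hn : 0 < n)
    (hU : (498:ℝ) / 1000 * n ≤ U.card) (hW : (498:ℝ) / 1000 * n ≤ W.card)
    (h : ∀ u ∈ U, (W.card : ℝ) ≤ dg G W u + n / 1000) : Linked G U M := by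
  have hn' : (0:ℝ) < n := by exact_mod_cast hn
  refine ⟨?_, ?_⟩
  · have : (M:ℝ) < U.card := by linarith
    exact_mod_cast this
  · intro w hw w' hw' F hF
    obtain ⟨u, -, h1, h2⟩ := common_nbr (G := G) W w w' F (by
      have h1 := h w hw
      have h2 := h w' hw'
      have h3 : (F.card : ℝ) ≤ M := by exact_mod_cast hF
      have : (W.card : ℝ) + F.card < dg G W w + dg G W w' := by linarith
      exact_mod_cast this)
    exact ⟨u, h1, h2⟩

lemma dg_sub_part (U W W0 : Finset (Fin n)) (hW : W0 ⊆ W) (c : ℝ)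
    (u : Fin n) (h : (W.card : ℝ) ≤ dg G W u + c) : (W0.card : ℝ) ≤ dg G W0 u + c := by
  classical
  have h1 := dg_split G hW u
  have h2 := dg_le G (W \ W0) u
  have h3 := Finset.card_sdiff_add_card_eq_card hW
  have h4 : dg G W u + W0.card ≤ W.card + dg G W0 u := by omega
  have h5 : (dg G W u : ℝ) + W0.card ≤ W.card + dg G W0 u := by exact_mod_cast h4
  linarith

lemma exists_linked (U : Finset (Fin n)) (hn : 0 < n) (M : ℕ) (hM : (M : ℝ) ≤ 2 * n / 5)
    (h : ((1:ℝ) / 4 - 1 / 1000000) * n ^ 2 ≤ ∑ u ∈ U, (dg G Uᶜ u : ℝ)) :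
    ∃ U0 W0, Linked G U0 M ∧ Linked G W0 M ∧
      ∀ v, (dg G Finset.univ v : ℝ) ≤ dg G U0 v + dg G W0 v + n / 250 := by
  classical
  have hn' : (0:ℝ) < n := by exact_mod_cast hn
  have hab : (U.card : ℝ) + (Uᶜ).card = n := by
    have := Finset.card_add_card_compl U
    rw [Fintype.card_fin] at this
    exact_mod_cast this
  have h1 : (U.card : ℝ) * (Uᶜ).card - n ^ 2 / 1000000 ≤ ∑ u ∈ U, (dg G Uᶜ u : ℝ) := by
    have : (U.card : ℝ) * (Uᶜ).card ≤ n ^ 2 / 4 := by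
      rw [← hab]; nlinarith [sq_nonneg ((U.card : ℝ) - (Uᶜ).card)]
    linarith
  have hle : ∑ u ∈ U, (dg G Uᶜ u : ℝ) ≤ U.card * (Uᶜ).card := by
    rw [← nsmul_eq_mul, ← Finset.sum_const]
    exact Finset.sum_le_sum (fun u _ => by exact_mod_cast dg_le G _ u)
  have hcomm : ∑ u ∈ U, (dg G Uᶜ u : ℝ) = ∑ u ∈ Uᶜ, (dg G U u : ℝ) := by
    exact_mod_cast dg_comm G U Uᶜ
  have h2 : (Uᶜ.card : ℝ) * U.card - n ^ 2 / 1000000 ≤ ∑ u ∈ Uᶜ, (dg G U u : ℝ) := by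
    rw [← hcomm, mul_comm]; exact h1
  have hdiff : ((U.card : ℝ) - (Uᶜ).card) ^ 2 ≤ (n / 500) ^ 2 := by
    have : ((U.card : ℝ) - (Uᶜ).card) ^ 2 = n ^ 2 - 4 * (U.card * (Uᶜ).card) := by
      rw [← hab]; ring
    rw [this]; nlinarith
  have hd := abs_le_of_sq_le_sq' hdiff (by positivity)
  obtain ⟨U0, hU0, hUc, hUd⟩ := good_part U Uᶜ hn h1
  obtain ⟨W0, hW0, hWc, hWd⟩ := good_part Uᶜ U hn h2
  have cU : (498:ℝ) / 1000 * n ≤ U0.card := by linarith [hd.1, hd.2]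
  have cW : (498:ℝ) / 1000 * n ≤ W0.card := by linarith [hd.1, hd.2]
  refine ⟨U0, W0, linked_of U0 W0 M hM hn cU cW ?_, linked_of W0 U0 M hM hn cW cU ?_, ?_⟩
  · exact fun u hu => dg_sub_part U Uᶜ W0 hW0 _ u (hUd u hu)
  · exact fun u hu => dg_sub_part Uᶜ U U0 hU0 _ u (hWd u hu)
  · intro v
    have hdis : Disjoint U0 W0 := Finset.disjoint_of_subset_left hU0
      (Finset.disjoint_of_subset_right hW0 disjoint_compl_right)
    have e1 := dg_split G (Finset.subset_univ (U0 ∪ W0)) v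
    have e2 := dg_le G (Finset.univ \ (U0 ∪ W0)) v
    have e3 := Finset.card_sdiff_add_card_eq_card (Finset.subset_univ (U0 ∪ W0))
    rw [Finset.card_union_of_disjoint hdis, Finset.card_univ, Fintype.card_fin] at e3
    have e4 : dg G (U0 ∪ W0) v ≤ dg G U0 v + dg G W0 v := by
      unfold dg; rw [Finset.filter_union]; exact Finset.card_union_le _ _
    have e5 : dg G Finset.univ v + U0.card + W0.card ≤ n + dg G U0 v + dg G W0 v := by omega
    have e6 : (dg G Finset.univ v : ℝ) + U0.card + W0.card ≤ n + dg G U0 v + dg G W0 v := by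
      exact_mod_cast e5
    linarith

lemma case_two (D : SD G) (hρ : Real.sqrt ((n ^ 2 / 4 : ℕ) : ℝ) < D.μ D.i0)
    (hρ2 : (n:ℝ) / 2 - 1 / 4 ≤ D.μ D.i0) (hn : 1000 ≤ n) (i : Fin n) (ν : ℝ) (hν : 0 < ν)
    (hi : D.μ i ≤ -ν) (hν2 : ((1:ℝ) / 4 - 1 / 1000000) * n ^ 2 ≤ ν ^ 2)
    (l : ℕ) (h3 : 3 ≤ l) (hl : (l:ℝ) ≤ n / 4) : HasCycleLen G l := by
  classical
  have hn' : (1000:ℝ) ≤ n := by exact_mod_cast hn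
  obtain ⟨U, hU⟩ := neg_cut (G := G) (D.φ i) ν (-D.μ i) hν (by linarith)
    (fun u => by rw [D.eig]; ring) (by
      by_contra hc
      push Not at hc
      have := D.unit i
      simp [hc] at this)
  obtain ⟨U0, W0, LU, LW, hdeg⟩ := exists_linked (G := G) U (by omega) (2 * n / 5)
    (by have := Nat.cast_div_le (α := ℝ) (m := 2 * n) (n := 5); push_cast at this; exact this)
    (hν2.trans hU)
  have hl' : 4 * l ≤ n := by
    have : (4:ℝ) * l ≤ n := by linarith
    exact_mod_cast this
  rcases Nat.even_or_odd' l with ⟨j, rfl | rfl⟩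
  · obtain ⟨j, rfl⟩ := Nat.exists_eq_add_of_le' (show 2 ≤ j by omega)
    exact LW.even_cycle j (by omega)
  · rcases Nat.lt_or_ge j 2 with hj | hj
    · have : j = 1 := by omega
      subst this
      exact triangle_of D hρ
    obtain ⟨j, rfl⟩ := Nat.exists_eq_add_of_le' hj
    by_contra hno
    have nW : ∀ a b, G.Adj a b → 3 ≤ dg G W0 a → ¬ 3 ≤ dg G W0 b := fun a b hab ha hb =>
      hno (LW.odd_cycle j (by omega) a b hab ha hb)
    have nU : ∀ a b, G.Adj a b → 3 ≤ dg G U0 a → ¬ 3 ≤ dg G U0 b := fun a b hab ha hb =>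
      hno (LU.odd_cycle j (by omega) a b hab ha hb)
    set Z : Finset (Fin n) := Finset.univ.filter
      (fun v => (dg G Finset.univ v : ℝ) ≤ n / 40) with hZ
    set U' : Finset (Fin n) := Zᶜ.filter (fun v => 3 ≤ dg G W0 v) with hU'
    set W' : Finset (Fin n) := Zᶜ.filter (fun v => ¬ 3 ≤ dg G W0 v) with hW'
    have hWd : ∀ v ∈ W', 3 ≤ dg G U0 v := by
      intro v hv
      simp only [hW', hZ, Finset.mem_filter, Finset.mem_compl, Finset.mem_univ, true_and,
        not_le] at hv
      have h1 := hdeg v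
      have h2 : (dg G W0 v : ℝ) ≤ 2 := by exact_mod_cast (by omega : dg G W0 v ≤ 2)
      have : (3:ℝ) ≤ dg G U0 v := by linarith [hv.1]
      exact_mod_cast this
    refine no_bip D hρ hρ2 (by omega) U' W' Z ?_ ?_ ?_ ?_ ?_ ?_
    · intro v
      simp only [hU', hW', Finset.mem_filter, Finset.mem_compl]
      tauto
    · have h1 := Finset.card_filter_add_card_filter_not (s := Zᶜ) (fun v => 3 ≤ dg G W0 v)
      have h2 := Finset.card_add_card_compl Z
      rw [Fintype.card_fin] at h2
      rw [← hU', ← hW'] at h1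
      omega
    · exact Finset.disjoint_filter_filter_not _ _ _
    · exact fun a ha b hb hab => nW a b hab (Finset.mem_filter.1 ha).2 (Finset.mem_filter.1 hb).2
    · exact fun a ha b hb hab => nU a b hab (hWd a ha) (hWd b hb)
    · exact fun v hv => (Finset.mem_filter.1 hv).2
end

/-! ### Spectral gap case: spectral estimates -/

section
variable {n : ℕ} {G : SimpleGraph (Fin n)}

lemma SD.perron (D : SD G) (h0 : 0 ≤ D.μ D.i0) (hgap : ∀ i, i ≠ D.i0 → D.μ i < D.μ D.i0) :
    ∃ c : ℝ, c ^ 2 = 1 ∧ ∀ u, |D.φ D.i0 u| = c * D.φ D.i0 u := by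
  classical
  set z : Fin n → ℝ := fun u => |D.φ D.i0 u| with hz
  set c : Fin n → ℝ := fun i => ∑ w, z w * D.φ i w with hc
  have hz1 : ∑ u, z u ^ 2 = 1 := by simp only [hz, sq_abs]; exact D.unit _
  have h1 : ∑ i, c i ^ 2 = 1 := by rw [← hz1, D.parseval z]
  have h2 : D.μ D.i0 ≤ ∑ i, D.μ i * c i ^ 2 := by
    rw [← D.rayleigh_eq z]
    calc D.μ D.i0 = ∑ u, z u * (D.μ D.i0 * z u) := by
          have : ∑ u, z u * (D.μ D.i0 * z u) = D.μ D.i0 * ∑ u, z u ^ 2 := by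
            rw [Finset.mul_sum]; exact Finset.sum_congr rfl (fun u _ => by ring)
          rw [this, hz1, mul_one]
      _ ≤ _ := Finset.sum_le_sum (fun u _ =>
          mul_le_mul_of_nonneg_left (D.abs_sub h0 u) (abs_nonneg _))
  have h3 : ∑ i, (D.μ D.i0 - D.μ i) * c i ^ 2 ≤ 0 := by
    have : ∑ i, (D.μ D.i0 - D.μ i) * c i ^ 2 = D.μ D.i0 * ∑ i, c i ^ 2 - ∑ i, D.μ i * c i ^ 2 := by
      rw [Finset.mul_sum, ← Finset.sum_sub_distrib]
      exact Finset.sum_congr rfl (fun i _ => by ring)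
    rw [this, h1]; linarith
  have h4 : ∀ i ∈ Finset.univ, 0 ≤ (D.μ D.i0 - D.μ i) * c i ^ 2 := fun i _ =>
    mul_nonneg (sub_nonneg.2 (D.le_top i)) (sq_nonneg _)
  have h5 := (Finset.sum_eq_zero_iff_of_nonneg h4).1 (le_antisymm h3 (Finset.sum_nonneg h4))
  have h6 : ∀ i, i ≠ D.i0 → c i = 0 := by
    intro i hi
    have := h5 i (Finset.mem_univ i)
    rcases mul_eq_zero.1 this with h | h
    · have := hgap i hi; linarith
    · exact pow_eq_zero_iff (two_ne_zero) |>.1 h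
  refine ⟨c D.i0, ?_, ?_⟩
  · rw [← h1, Finset.sum_eq_single D.i0]
    · intro i _ hi; rw [h6 i hi]; ring
    · simp
  · intro u
    have := D.expand z u
    rw [Finset.sum_eq_single D.i0] at this
    · exact this
    · intro i _ hi
      have h7 := h6 i hi
      simp only [hc] at h7
      rw [h7, zero_mul]
    · simp

lemma SD.sq_sum (D : SD G) (u : Fin n) :
    ∑ i, D.μ i ^ 2 * D.φ i u ^ 2 = dg G Finset.univ u := by
  rw [← aM_sq_diag, D.pow_apply]
  exact Finset.sum_congr rfl (fun i _ => by ring)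

lemma dg_le_n (G : SimpleGraph (Fin n)) (S : Finset (Fin n)) (u : Fin n) :
    (dg G S u : ℝ) ≤ n := by
  have h1 := dg_le G S u
  have h2 : S.card ≤ n := by simpa using Finset.card_le_univ S
  exact_mod_cast h1.trans h2

lemma SD.pow_lower (D : SD G) (σ : ℝ) (hσ : 0 ≤ σ) (hgap : ∀ i, i ≠ D.i0 → |D.μ i| ≤ σ)
    (k : ℕ) (u v : Fin n) :
    D.μ D.i0 ^ (k + 2) * (D.φ D.i0 u * D.φ D.i0 v) - σ ^ k * n ≤ ((aM G) ^ (k + 2)) u v := by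
  classical
  rw [D.pow_apply, ← Finset.add_sum_erase _ _ (Finset.mem_univ D.i0)]
  have h1 : -(σ ^ k * n) ≤ ∑ i ∈ Finset.univ.erase D.i0, D.μ i ^ (k+2) * (D.φ i u * D.φ i v) := by
    have h2 : ∀ i ∈ Finset.univ.erase D.i0,
        -(σ ^ k * (D.μ i ^ 2 * D.φ i u ^ 2 + D.μ i ^ 2 * D.φ i v ^ 2) / 2) ≤
          D.μ i ^ (k+2) * (D.φ i u * D.φ i v) := by
      intro i hi
      have hb : |D.μ i ^ k| ≤ σ ^ k := by
        rw [abs_pow]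
        exact pow_le_pow_left₀ (abs_nonneg _) (hgap i (Finset.ne_of_mem_erase hi)) k
      have hb2 : |D.φ i u * D.φ i v| ≤ (D.φ i u ^ 2 + D.φ i v ^ 2) / 2 := by
        rw [abs_le]; constructor <;> nlinarith [sq_nonneg (D.φ i u - D.φ i v),
          sq_nonneg (D.φ i u + D.φ i v)]
      have hb3 : |D.μ i ^ (k+2) * (D.φ i u * D.φ i v)| ≤
          σ ^ k * D.μ i ^ 2 * ((D.φ i u ^ 2 + D.φ i v ^ 2) / 2) := by
        rw [abs_mul, pow_add, abs_mul, abs_of_nonneg (sq_nonneg (D.μ i))]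
        exact mul_le_mul (mul_le_mul_of_nonneg_right hb (sq_nonneg _)) hb2 (abs_nonneg _)
          (by positivity)
      have := (abs_le.1 hb3).1
      linarith
    refine le_trans ?_ (Finset.sum_le_sum h2)
    rw [Finset.sum_neg_distrib, neg_le_neg_iff]
    calc _ ≤ ∑ i, σ ^ k * (D.μ i ^ 2 * D.φ i u ^ 2 + D.μ i ^ 2 * D.φ i v ^ 2) / 2 :=
          Finset.sum_le_sum_of_subset_of_nonneg (Finset.erase_subset _ _)
            (fun i _ _ => by positivity)
      _ = σ ^ k * ((dg G Finset.univ u + dg G Finset.univ v : ℝ) / 2) := by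
          rw [← D.sq_sum u, ← D.sq_sum v, ← Finset.sum_add_distrib, Finset.sum_div, Finset.mul_sum]
          exact Finset.sum_congr rfl (fun i _ => by ring)
      _ ≤ σ ^ k * n := by
          refine mul_le_mul_of_nonneg_left ?_ (by positivity)
          have := dg_le_n G Finset.univ u
          have := dg_le_n G Finset.univ v
          linarith
  linarith

lemma SD.trace (D : SD G) (k : ℕ) : ∑ u, ((aM G) ^ k) u u = ∑ i, D.μ i ^ k := by
  simp only [D.pow_apply]
  rw [Finset.sum_comm]
  refine Finset.sum_congr rfl (fun i _ => ?_)
  rw [← Finset.mul_sum]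
  have := D.unit i
  simp only [sq] at this
  rw [this, mul_one]

lemma SD.sum_sq_le (D : SD G) : ∑ i, D.μ i ^ 2 ≤ D.μ D.i0 * n := by
  rw [← D.trace 2]
  have := D.rayleigh (fun _ => 1)
  simp only [mul_one, one_mul, one_pow, Finset.sum_const, Finset.card_univ, Fintype.card_fin,
    nsmul_eq_mul] at this
  refine le_trans (le_of_eq ?_) this
  refine Finset.sum_congr rfl (fun u _ => ?_)
  rw [aM_sq_diag, aM_sum_row]

lemma SD.trace_lower (D : SD G) (σ : ℝ) (hσ : 0 ≤ σ) (hgap : ∀ i, i ≠ D.i0 → |D.μ i| ≤ σ)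
    (k : ℕ) :
    D.μ D.i0 ^ (k + 2) - σ ^ k * (D.μ D.i0 * n - D.μ D.i0 ^ 2) ≤ ∑ u, ((aM G) ^ (k + 2)) u u := by
  classical
  rw [D.trace, ← Finset.add_sum_erase _ _ (Finset.mem_univ D.i0)]
  have h1 := D.sum_sq_le
  rw [← Finset.add_sum_erase _ _ (Finset.mem_univ D.i0)] at h1
  have h2 : -(σ ^ k * ∑ i ∈ Finset.univ.erase D.i0, D.μ i ^ 2) ≤
      ∑ i ∈ Finset.univ.erase D.i0, D.μ i ^ (k+2) := by
    rw [Finset.mul_sum, ← Finset.sum_neg_distrib]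
    refine Finset.sum_le_sum (fun i hi => ?_)
    have hb : |D.μ i ^ k| ≤ σ ^ k := by
      rw [abs_pow]
      exact pow_le_pow_left₀ (abs_nonneg _) (hgap i (Finset.ne_of_mem_erase hi)) k
    rw [pow_add]
    nlinarith [(abs_le.1 hb).1, sq_nonneg (D.μ i)]
  have h3 : σ ^ k * ∑ i ∈ Finset.univ.erase D.i0, D.μ i ^ 2 ≤
      σ ^ k * (D.μ D.i0 * n - D.μ D.i0 ^ 2) :=
    mul_le_mul_of_nonneg_left (by linarith) (by positivity)
  linarith

/-- Short cycles in the gap case. -/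
lemma small_cycles (D : SD G) (γ : ℝ) (hγ : 0 < γ) (hγ1 : γ < 1)
    (hρ2 : (n:ℝ) / 2 - 1 / 4 ≤ D.μ D.i0) (hn : 4 ≤ γ * n)
    (hgap : ∀ i, i ≠ D.i0 → |D.μ i| ≤ (1 - γ) * D.μ D.i0) (k : ℕ) (hk : 1 ≤ k)
    (hnk : 2 * (k * (k + 1)) * 3 ^ (k + 2) < γ * n) : HasCycleLen G (k + 2) := by
  set ρ := D.μ D.i0 with hρd
  have hn0 : (0:ℝ) ≤ n := Nat.cast_nonneg n
  have hn4 : (4:ℝ) ≤ n := by nlinarith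
  have hρ3 : (n:ℝ) / 3 ≤ ρ := by linarith
  have hρ0 : 0 < ρ := by linarith
  have h1 := D.trace_lower ((1 - γ) * ρ) (mul_nonneg (by linarith) hρ0.le) hgap k
  rw [← hρd] at h1
  have h2 : ((1 - γ) * ρ) ^ k * (ρ * n - ρ ^ 2) ≤ (1 - γ / 2) * ρ ^ (k + 2) := by
    have e1 : (1 - γ) ^ k ≤ 1 - γ := by
      calc (1 - γ) ^ k ≤ (1 - γ) ^ 1 := pow_le_pow_of_le_one (by linarith) (by linarith) hk
        _ = 1 - γ := pow_one _
    have e2 : ρ * n - ρ ^ 2 ≤ ρ ^ 2 + ρ / 2 := by nlinarith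
    have e3 : (1 - γ) * (ρ ^ 2 + ρ / 2) ≤ (1 - γ / 2) * ρ ^ 2 := by
      have : 1 ≤ γ * ρ := by nlinarith
      nlinarith
    calc ((1 - γ) * ρ) ^ k * (ρ * n - ρ ^ 2) ≤ ((1 - γ) * ρ) ^ k * (ρ ^ 2 + ρ / 2) :=
          mul_le_mul_of_nonneg_left e2 (pow_nonneg (mul_nonneg (by linarith) hρ0.le) _)
      _ = (1 - γ) ^ k * (ρ ^ k * (ρ ^ 2 + ρ / 2)) := by rw [mul_pow]; ring
      _ ≤ (1 - γ) * (ρ ^ k * (ρ ^ 2 + ρ / 2)) := mul_le_mul_of_nonneg_right e1 (by positivity)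
      _ = ρ ^ k * ((1 - γ) * (ρ ^ 2 + ρ / 2)) := by ring
      _ ≤ ρ ^ k * ((1 - γ / 2) * ρ ^ 2) := mul_le_mul_of_nonneg_left e3 (by positivity)
      _ = _ := by ring
  have h3 : γ / 2 * ρ ^ (k + 2) ≤ ∑ u, ((aM G) ^ (k + 2)) u u := by linarith
  by_contra hno
  have h4 : ∀ u v, G.Adj v u → ((aM G) ^ (k+1)) u v * n ≤ (k * (k + 1)) * (n:ℝ) ^ k := by
    intro u v huv
    by_contra hc
    push Not at hc
    obtain ⟨l, hl, hlen, -⟩ := path_of_walks G (k+1) k ∅ u v huv.ne' (by simp) (by simp) (by simp)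
      (by push_cast; exact hc)
    apply hno
    have := hl.hasCycle huv (by omega)
    rwa [hlen] at this
  have h5 : (∑ u, ((aM G) ^ (k + 2)) u u) * n ≤ n ^ 2 * ((k * (k + 1)) * (n:ℝ) ^ k) := by
    have : ∀ u, ((aM G) ^ (k + 2)) u u * n ≤ n * ((k * (k + 1)) * (n:ℝ) ^ k) := by
      intro u
      rw [pow_succ, Matrix.mul_apply, Finset.sum_mul]
      calc _ ≤ ∑ _v : Fin n, ((k * (k + 1)) * (n:ℝ) ^ k) := by
            refine Finset.sum_le_sum (fun v _ => ?_)
            by_cases huv : G.Adj v u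
            · have : aM G v u = 1 := by simp [aM_apply, huv]
              rw [this, mul_one]; exact h4 u v huv
            · have : aM G v u = 0 := by simp [aM_apply, huv]
              rw [this, mul_zero, zero_mul]; positivity
        _ = _ := by simp
    rw [Finset.sum_mul]
    calc _ ≤ ∑ _u : Fin n, n * ((k * (k + 1)) * (n:ℝ) ^ k) :=
          Finset.sum_le_sum (fun u _ => this u)
      _ = _ := by simp; ring
  have h6 : ((n:ℝ) / 3) ^ (k + 2) ≤ ρ ^ (k + 2) := pow_le_pow_left₀ (by positivity) hρ3 _
  have h7 : γ / 2 * ((n:ℝ) / 3) ^ (k+2) * n ≤ n ^ 2 * ((k * (k + 1)) * (n:ℝ) ^ k) := by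
    refine le_trans ?_ h5
    refine mul_le_mul_of_nonneg_right (le_trans ?_ h3) hn0
    exact mul_le_mul_of_nonneg_left h6 (by positivity)
  rw [div_pow] at h7
  have h8 : (0:ℝ) < n ^ (k + 2) := by positivity
  have h9 : γ / 2 * ((n:ℝ) ^ (k+2) / 3 ^ (k+2)) * n = n ^ (k+2) * (γ * n) / (2 * 3 ^ (k+2)) := by
    field_simp
  rw [h9, div_le_iff₀ (by positivity)] at h7
  have h10 : (n:ℝ) ^ 2 * ((k * (k + 1)) * (n:ℝ) ^ k) * (2 * 3 ^ (k+2)) =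
      n ^ (k+2) * (2 * (k * (k + 1)) * 3 ^ (k + 2)) := by ring
  rw [h10] at h7
  exact absurd (le_of_mul_le_mul_left h7 h8) (not_le.2 hnk)
end

/-! ### Spectral gap case: long cycles -/

section
variable {n : ℕ} {G : SimpleGraph (Fin n)}

open Classical in
lemma cover {X Y : Type} [Fintype Y] (hY : 0 < Fintype.card Y) (B : Finset X) (R : X → Y → Prop)
    (c : ℝ) (hc1 : c ≤ 1)
    (h : ∀ x ∈ B, c * Fintype.card Y ≤ (Finset.univ.filter (fun y => R x y)).card) (j : ℕ) :
    ∃ T : Finset Y, T.card ≤ j ∧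
      ((B.filter (fun x => ∀ y ∈ T, ¬ R x y)).card : ℝ) ≤ (1 - c) ^ j * B.card := by
  induction j with
  | zero => exact ⟨∅, by simp, by simp⟩
  | succ j ih =>
    obtain ⟨T, hT, hB⟩ := ih
    set B' := B.filter (fun x => ∀ y ∈ T, ¬ R x y) with hB'
    have hY' : (0:ℝ) < Fintype.card Y := by exact_mod_cast hY
    have : ∃ y : Y, c * B'.card ≤ (B'.filter (fun x => R x y)).card := by
      by_contra hc
      push Not at hc
      have h1 : ∑ y : Y, ((B'.filter (fun x => R x y)).card : ℝ) =
          ∑ x ∈ B', ((Finset.univ.filter (fun y => R x y)).card : ℝ) := by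
        have := Finset.sum_card_bipartiteAbove_eq_sum_card_bipartiteBelow (s := B')
          (t := (Finset.univ : Finset Y)) R
        simp only [Finset.bipartiteAbove, Finset.bipartiteBelow] at this
        exact_mod_cast this.symm
      have h2 : ∑ x ∈ B', c * (Fintype.card Y : ℝ) ≤
          ∑ x ∈ B', ((Finset.univ.filter (fun y => R x y)).card : ℝ) :=
        Finset.sum_le_sum (fun x hx => h x (Finset.mem_filter.1 hx).1)
      have h3 : ∑ y : Y, ((B'.filter (fun x => R x y)).card : ℝ) < ∑ _y : Y, c * B'.card :=
        Finset.sum_lt_sum_of_nonempty (Finset.card_pos.1 (by simpa using hY)) (fun y _ => hc y)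
      rw [h1] at h3
      simp only [Finset.sum_const, nsmul_eq_mul, Finset.card_univ] at h2 h3
      nlinarith
    obtain ⟨y, hy⟩ := this
    refine ⟨insert y T, (Finset.card_insert_le _ _).trans (by omega), ?_⟩
    have h4 : B.filter (fun x => ∀ y' ∈ insert y T, ¬ R x y') = B'.filter (fun x => ¬ R x y) := by
      ext x
      simp only [hB', Finset.mem_filter, Finset.mem_insert, forall_eq_or_imp]
      tauto
    rw [h4]
    have h5 := Finset.card_filter_add_card_filter_not (s := B') (fun x => R x y)
    have h6 : ((B'.filter (fun x => R x y)).card : ℝ) + (B'.filter (fun x => ¬ R x y)).card =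
      B'.card := by exact_mod_cast h5
    calc ((B'.filter (fun x => ¬ R x y)).card : ℝ) ≤ (1 - c) * B'.card := by linarith
      _ ≤ (1 - c) * ((1 - c) ^ j * B.card) := mul_le_mul_of_nonneg_left hB (by linarith)
      _ = _ := by ring

open Classical in
lemma cover_full {X Y : Type} [Fintype Y] (hY : 0 < Fintype.card Y) (B : Finset X)
    (R : X → Y → Prop) (c : ℝ) (hc1 : c ≤ 1)
    (h : ∀ x ∈ B, c * Fintype.card Y ≤ (Finset.univ.filter (fun y => R x y)).card) (j : ℕ)
    (hj : (1 - c) ^ j * B.card < 1) :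
    ∃ T : Finset Y, T.card ≤ j ∧ ∀ x ∈ B, ∃ y ∈ T, R x y := by
  obtain ⟨T, hT, hTB⟩ := cover hY B R c hc1 h j
  refine ⟨T, hT, fun x hx => ?_⟩
  by_contra hno
  push Not at hno
  have h2 : (1:ℝ) ≤ (1 - c) ^ j * (B.card : ℝ) := by
    refine le_trans ?_ hTB
    exact Nat.one_le_cast.2 (Finset.card_pos.2 ⟨x, Finset.mem_filter.2 ⟨hx, hno⟩⟩)
  linarith

/-- `b` is joined to `a` by a path on `r + 2` vertices. -/
def Conn {n : ℕ} (G : SimpleGraph (Fin n)) (r : ℕ) (a b : Fin n) : Prop :=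
  ∃ l, PL G l a b ∧ l.length = r + 2

open Classical in
lemma connectors (r : ℕ) (u v : Fin n) (c : ℝ) (hn : 0 < n)
    (h : 2 * c * (n:ℝ) ^ (r + 2) ≤ ((aM G) ^ (r + 3)) u v)
    (hc : (r * (r + 1) + 1 : ℝ) ≤ c * n) :
    c * Fintype.card (Fin n × Fin n) ≤
      (Finset.univ.filter (fun p : Fin n × Fin n =>
        G.Adj u p.1 ∧ G.Adj v p.2 ∧ Conn G r p.1 p.2)).card := by
  have hn' : (0:ℝ) < n := by exact_mod_cast hn
  set R := Finset.univ.filter (fun p : Fin n × Fin n =>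
        G.Adj u p.1 ∧ G.Adj v p.2 ∧ Conn G r p.1 p.2) with hR
  have h1 : ((aM G) ^ (r + 3)) u v =
      ∑ p : Fin n × Fin n, aM G u p.1 * ((aM G) ^ (r+1)) p.1 p.2 * aM G p.2 v := by
    have e : (aM G) ^ (r + 3) = aM G * (aM G) ^ (r+1) * aM G := by
      rw [← pow_succ', ← pow_succ]
    rw [e, Matrix.mul_apply, Fintype.sum_prod_type_right]
    refine Finset.sum_congr rfl (fun b _ => ?_)
    rw [Matrix.mul_apply, Finset.sum_mul]
  have h2 : ∀ p : Fin n × Fin n, aM G u p.1 * ((aM G) ^ (r+1)) p.1 p.2 * aM G p.2 v ≤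
      (if p ∈ R then (n:ℝ) ^ r else 0) + (if p.1 = p.2 then (n:ℝ) ^ r else 0) +
        (r * (r + 1)) * (n:ℝ) ^ r / n := by
    intro p
    have q1 : 0 ≤ (if p ∈ R then (n:ℝ) ^ r else 0) := by split_ifs <;> positivity
    have q2 : 0 ≤ (if p.1 = p.2 then (n:ℝ) ^ r else 0) := by split_ifs <;> positivity
    have q3 : 0 ≤ (r * (r + 1)) * (n:ℝ) ^ r / n := by positivity
    by_cases hu : G.Adj u p.1
    · by_cases hv : G.Adj v p.2
      · have a1 : aM G u p.1 = 1 := by simp [aM_apply, hu]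
        have a2 : aM G p.2 v = 1 := by simp [aM_apply, hv.symm]
        rw [a1, a2, one_mul, mul_one]
        by_cases he : p.1 = p.2
        · rw [if_pos he]
          have := aM_pow_le G r p.1 p.2
          linarith
        · by_cases hC : Conn G r p.1 p.2
          · rw [if_pos (show p ∈ R by simp [hR, hu, hv, hC])]
            have := aM_pow_le G r p.1 p.2
            linarith
          · have : ((aM G) ^ (r+1)) p.1 p.2 ≤ (r * (r + 1)) * (n:ℝ) ^ r / n := by
              rw [le_div_iff₀ hn']
              by_contra hc2
              push Not at hc2
              obtain ⟨l, hl, hlen, -⟩ := path_of_walks G (r+1) r ∅ p.1 p.2 he (by simp) (by simp)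
                (by simp) (by push_cast; exact hc2)
              exact hC ⟨l, hl, hlen⟩
            linarith
      · have a2 : aM G p.2 v = 0 := by
          have hv2 : ¬ G.Adj p.2 v := fun hh => hv hh.symm
          simp [aM_apply, hv2]
        rw [a2, mul_zero]; linarith
    · have a1 : aM G u p.1 = 0 := by simp [aM_apply, hu]
      rw [a1, zero_mul, zero_mul]; linarith
  have h3 : ((aM G) ^ (r + 3)) u v ≤ R.card * (n:ℝ) ^ r + n * n ^ r + (r * (r + 1)) * n ^ (r+1) := by
    rw [h1]
    refine (Finset.sum_le_sum (fun p _ => h2 p)).trans (le_of_eq ?_)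
    rw [Finset.sum_add_distrib, Finset.sum_add_distrib]
    congr 1
    · congr 1
      · rw [Finset.sum_ite_mem]; simp
      · rw [Fintype.sum_prod_type]; simp
    · simp
      field_simp
      ring
  have h4 : (0:ℝ) < n ^ r := by positivity
  have h5 : c * (n * n) * n ^ r ≤ R.card * (n:ℝ) ^ r := by
    have e1 : (n:ℝ) ^ (r+2) = n * n * n ^ r := by ring
    have e2 : (n:ℝ) ^ (r+1) = n * n ^ r := by ring
    rw [e1] at h; rw [e2] at h3
    have : (r * (r + 1) + 1 : ℝ) * (n * n ^ r) ≤ c * n * (n * n ^ r) :=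
      mul_le_mul_of_nonneg_right hc (by positivity)
    linarith
  have := le_of_mul_le_mul_right h5 h4
  simpa using this

/-- The heavy vertices span many edges. -/
lemma heavy_edges (D : SD G) (hρ0 : 0 < D.μ D.i0)
    (hgap : ∀ i, i ≠ D.i0 → D.μ i < D.μ D.i0) (t : ℝ) (ht : 0 ≤ t) (ht2 : t ≤ 1 / 2) (hn : 0 < n) :
    ∃ K : Finset (Fin n), (∀ u ∈ K, ∀ v ∈ K, t / n ≤ D.φ D.i0 u * D.φ D.i0 v) ∧
      (D.μ D.i0) ^ 2 * (1 - 2 * t) ^ 2 ≤ e2 G K := by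
  classical
  obtain ⟨c, hc1, hc⟩ := D.perron hρ0.le hgap
  set ρ := D.μ D.i0 with hρd
  have hn' : (0:ℝ) < n := by exact_mod_cast hn
  set z : Fin n → ℝ := fun u => |D.φ D.i0 u| with hz
  have hz0 : ∀ u, 0 ≤ z u := fun u => abs_nonneg _
  have hz1 : ∑ u, z u ^ 2 = 1 := by simp only [hz, sq_abs]; exact D.unit _
  have hzz : ∀ u v, z u * z v = D.φ D.i0 u * D.φ D.i0 v := by
    intro u v
    have e1 : z u = c * D.φ D.i0 u := hc u
    have e2 : z v = c * D.φ D.i0 v := hc v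
    rw [e1, e2]
    linear_combination (D.φ D.i0 u * D.φ D.i0 v) * hc1
  have hAz : ∀ u, ∑ v, aM G u v * z v = ρ * z u := by
    intro u
    have e1 : ∀ u, z u = c * D.φ D.i0 u := hc
    have : ∑ v, aM G u v * z v = c * ∑ v, aM G u v * D.φ D.i0 v := by
      rw [Finset.mul_sum]; exact Finset.sum_congr rfl (fun v _ => by rw [e1]; ring)
    rw [this, D.eig, e1]; ring
  set K : Finset (Fin n) := Finset.univ.filter (fun u => Real.sqrt (t / n) ≤ z u) with hK
  refine ⟨K, ?_, ?_⟩
  · intro u hu v hv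
    have h1 := (Finset.mem_filter.1 hu).2
    have h2 := (Finset.mem_filter.1 hv).2
    rw [← hzz]
    calc t / n = Real.sqrt (t / n) * Real.sqrt (t / n) := (Real.mul_self_sqrt (by positivity)).symm
      _ ≤ _ := mul_le_mul h1 h2 (Real.sqrt_nonneg _) (hz0 u)
  · have hL : ∑ u ∈ Kᶜ, z u ^ 2 ≤ t := by
      calc ∑ u ∈ Kᶜ, z u ^ 2 ≤ ∑ u ∈ Kᶜ, t / n := by
            refine Finset.sum_le_sum (fun u hu => ?_)
            have : z u < Real.sqrt (t / n) := by simpa [hK] using hu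
            calc z u ^ 2 ≤ Real.sqrt (t / n) ^ 2 := pow_le_pow_left₀ (hz0 u) this.le 2
              _ = t / n := Real.sq_sqrt (by positivity)
        _ ≤ ∑ u : Fin n, t / n := Finset.sum_le_sum_of_subset_of_nonneg (Finset.subset_univ _)
            (fun _ _ _ => by positivity)
        _ = t := by simp; field_simp
    set S := ∑ u ∈ K, ∑ v ∈ K, aM G u v * (z u * z v) with hS
    have hf : ∀ u v, 0 ≤ aM G u v * (z u * z v) := fun u v =>
      mul_nonneg (aM_nonneg G u v) (mul_nonneg (hz0 u) (hz0 v))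
    have hrow : ∀ u, ∑ v, aM G u v * (z u * z v) = ρ * z u ^ 2 := by
      intro u
      have : ∑ v, aM G u v * (z u * z v) = z u * ∑ v, aM G u v * z v := by
        rw [Finset.mul_sum]; exact Finset.sum_congr rfl (fun v _ => by ring)
      rw [this, hAz]; ring
    have hcol : ∀ v, ∑ u, aM G u v * (z u * z v) = ρ * z v ^ 2 := by
      intro v
      rw [← hrow v]
      exact Finset.sum_congr rfl (fun u _ => by rw [aM_comm G u v]; ring)
    have hSlow : ρ * (1 - 2 * t) ≤ S := by
      have t1 : ρ = ∑ u, ∑ v, aM G u v * (z u * z v) := by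
        simp only [hrow]; rw [← Finset.mul_sum, hz1, mul_one]
      have t2 : ∑ u, ∑ v, aM G u v * (z u * z v) =
          ∑ u ∈ K, ∑ v, aM G u v * (z u * z v) + ∑ u ∈ Kᶜ, ∑ v, aM G u v * (z u * z v) :=
        (Finset.sum_add_sum_compl K _).symm
      have t3 : ∑ u ∈ Kᶜ, ∑ v, aM G u v * (z u * z v) ≤ ρ * t := by
        simp only [hrow]; rw [← Finset.mul_sum]
        exact mul_le_mul_of_nonneg_left hL hρ0.le
      have t4 : ∑ u ∈ K, ∑ v, aM G u v * (z u * z v) =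
          S + ∑ u ∈ K, ∑ v ∈ Kᶜ, aM G u v * (z u * z v) := by
        rw [hS, ← Finset.sum_add_distrib]
        exact Finset.sum_congr rfl (fun u _ => (Finset.sum_add_sum_compl K _).symm)
      have t5 : ∑ u ∈ K, ∑ v ∈ Kᶜ, aM G u v * (z u * z v) ≤ ρ * t := by
        rw [Finset.sum_comm]
        calc _ ≤ ∑ v ∈ Kᶜ, ∑ u, aM G u v * (z u * z v) :=
              Finset.sum_le_sum (fun v _ => Finset.sum_le_sum_of_subset_of_nonneg
                (Finset.subset_univ _) (fun u _ _ => hf u v))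
          _ = ρ * ∑ v ∈ Kᶜ, z v ^ 2 := by
              simp only [hcol]; rw [← Finset.mul_sum]
          _ ≤ _ := mul_le_mul_of_nonneg_left hL hρ0.le
      linarith
    have hS2 : S = ∑ p ∈ K ×ˢ K, aM G p.1 p.2 * (z p.1 * z p.2) := by
      rw [hS, Finset.sum_product]
    have h6 := Finset.sum_mul_sq_le_sq_mul_sq (K ×ˢ K) (fun p => aM G p.1 p.2)
      (fun p => z p.1 * z p.2)
    rw [← hS2] at h6
    have h7 : ∑ p ∈ K ×ˢ K, aM G p.1 p.2 ^ 2 = (e2 G K : ℝ) := by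
      rw [Finset.sum_product, e2]
      push_cast
      refine Finset.sum_congr rfl (fun u _ => ?_)
      rw [← aM_sum_row]
      exact Finset.sum_congr rfl (fun v _ => by rw [sq, aM_sq])
    have h8 : ∑ p ∈ K ×ˢ K, (z p.1 * z p.2) ^ 2 ≤ 1 := by
      calc _ ≤ ∑ p : Fin n × Fin n, (z p.1 * z p.2) ^ 2 :=
            Finset.sum_le_sum_of_subset_of_nonneg (Finset.subset_univ _) (fun _ _ _ => sq_nonneg _)
        _ = (∑ u, z u ^ 2) * (∑ u, z u ^ 2) := by
            rw [Finset.sum_mul_sum, Fintype.sum_prod_type]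
            exact Finset.sum_congr rfl (fun u _ => Finset.sum_congr rfl (fun v _ => by ring))
        _ = 1 := by rw [hz1, mul_one]
    rw [h7] at h6
    have h9 : S ^ 2 ≤ e2 G K := by
      refine h6.trans ?_
      calc (e2 G K : ℝ) * _ ≤ e2 G K * 1 := mul_le_mul_of_nonneg_left h8 (Nat.cast_nonneg _)
        _ = _ := mul_one _
    rw [← mul_pow]
    exact (pow_le_pow_left₀ (mul_nonneg hρ0.le (by linarith)) hSlow 2).trans h9

lemma e2_sdiff (K F : Finset (Fin n)) : 
    (e2 G K : ℝ) ≤ e2 G (K \ F) + 2 * F.card * n := by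
  classical
  have h1 := e2_split G (Finset.inter_subset_left : K ∩ F ⊆ K)
  rw [Finset.sdiff_inter_self_left] at h1
  have h2 : ((∑ c ∈ K ∩ F, dg G (K \ F) c : ℕ) : ℝ) ≤ F.card * n := by
    push_cast
    calc _ ≤ ∑ c ∈ K ∩ F, (n:ℝ) := Finset.sum_le_sum (fun c _ => dg_le_n G _ c)
      _ = (K ∩ F).card * n := by simp
      _ ≤ _ := mul_le_mul_of_nonneg_right
        (by exact_mod_cast Finset.card_le_card Finset.inter_subset_right) (Nat.cast_nonneg _)
  have h3 : ((∑ c ∈ K ∩ F, dg G K c : ℕ) : ℝ) ≤ F.card * n := by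
    push_cast
    calc _ ≤ ∑ c ∈ K ∩ F, (n:ℝ) := Finset.sum_le_sum (fun c _ => dg_le_n G _ c)
      _ = (K ∩ F).card * n := by simp
      _ ≤ _ := mul_le_mul_of_nonneg_right
        (by exact_mod_cast Finset.card_le_card Finset.inter_subset_right) (Nat.cast_nonneg _)
  rw [h1]
  push_cast at h2 h3 ⊢
  linarith

/-- Long cycles in the gap case. -/
lemma large_cycles (D : SD G) (γ ε t c : ℝ) (r j m : ℕ) (hγ : 0 < γ) (hγ1 : γ < 1)
    (hε : 0 < ε) (hε1 : ε < 1 / 4) (ht : t = ε / 4) (hc : c = t / (36 * 3 ^ (r + 1)))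
    (hρ2 : (n:ℝ) / 2 - 1 / 4 ≤ D.μ D.i0) (hn : 4 ≤ ε * n)
    (hgap : ∀ i, i ≠ D.i0 → |D.μ i| ≤ (1 - γ) * D.μ D.i0)
    (hr : (1 - γ) ^ (r + 1) ≤ t / 18)
    (hrc : (r * (r + 1) + 1 : ℝ) ≤ c * n)
    (hj1 : (1 - c) ^ j * (n:ℝ) ^ 2 < 1) (hj2 : ((r:ℝ) + 2) * j ≤ ε / 8 * n)
    (hm : ((m + r + 4 : ℕ) : ℝ) ≤ (1 / 4 - ε) * n) : HasCycleLen G (m + r + 4) := by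
  classical
  set ρ := D.μ D.i0 with hρd
  have hn0 : (0:ℝ) ≤ n := Nat.cast_nonneg n
  have hn4 : (4:ℝ) ≤ n := by nlinarith
  have hnn : 0 < n := by
    have : (0:ℝ) < n := by linarith
    exact_mod_cast this
  have hρ3 : (n:ℝ) / 3 ≤ ρ := by linarith
  have hρ0 : 0 < ρ := by linarith
  have ht0 : 0 < t := by rw [ht]; positivity
  have hc0 : 0 < c := by rw [hc]; positivity
  have hc1 : c ≤ 1 := by
    rw [hc, div_le_one (by positivity)]
    have : (1:ℝ) ≤ 3 ^ (r+1) := one_le_pow₀ (by norm_num)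
    linarith
  obtain ⟨K, hK, hKe⟩ := heavy_edges D hρ0 (fun i hi => by
    have := (le_abs_self _).trans (hgap i hi)
    have h2 : 0 < γ * ρ := by positivity
    rw [← hρd]
    linarith) t ht0.le (by linarith) hnn
  rw [← hρd] at hKe
  -- connectors
  have hpow : ∀ u ∈ K, ∀ v ∈ K, 2 * c * (n:ℝ) ^ (r + 2) ≤ ((aM G) ^ (r + 3)) u v := by
    intro u hu v hv
    have h1 := D.pow_lower ((1 - γ) * ρ) (mul_nonneg (by linarith) hρ0.le) hgap (r+1) u v
    rw [← hρd] at h1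
    refine le_trans ?_ h1
    have h2 : ρ ^ (r + 1 + 2) * (t / n) ≤ ρ ^ (r + 1 + 2) * (D.φ D.i0 u * D.φ D.i0 v) :=
      mul_le_mul_of_nonneg_left (hK u hu v hv) (by positivity)
    have h3 : ((1 - γ) * ρ) ^ (r + 1) * n ≤ ρ ^ (r+1) * (t / 18 * n) := by
      rw [mul_pow]
      have := mul_le_mul_of_nonneg_right hr (show 0 ≤ ρ ^ (r+1) * n by positivity)
      linarith
    have h4 : ρ ^ (r+1) * (t / 9 * n) ≤ ρ ^ (r + 1 + 2) * (t / n) := by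
      have e : ρ ^ (r + 1 + 2) = ρ ^ (r + 1) * ρ ^ 2 := pow_add _ _ _
      rw [e, mul_assoc]
      refine mul_le_mul_of_nonneg_left ?_ (by positivity)
      have : (n / 3 : ℝ) ^ 2 ≤ ρ ^ 2 := pow_le_pow_left₀ (by positivity) hρ3 2
      calc t / 9 * n = (n / 3 : ℝ) ^ 2 * (t / n) := by field_simp; norm_num
        _ ≤ _ := mul_le_mul_of_nonneg_right this (by positivity)
    have h5 : (n / 3 : ℝ) ^ (r+1) * (t / 18 * n) ≤ ρ ^ (r+1) * (t / 18 * n) :=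
      mul_le_mul_of_nonneg_right (pow_le_pow_left₀ (by positivity) hρ3 _) (by positivity)
    have h6 : 2 * c * (n:ℝ) ^ (r + 2) = (n / 3 : ℝ) ^ (r+1) * (t / 18 * n) := by
      rw [hc, div_pow]; field_simp; ring
    rw [h6]
    linarith
  have h3 : ((K ×ˢ K).card : ℝ) ≤ (n:ℝ) ^ 2 := by
    have : (K ×ˢ K).card ≤ n ^ 2 := by
      rw [Finset.card_product, sq]
      have : K.card ≤ n := by simpa using Finset.card_le_univ K
      exact Nat.mul_le_mul this this
    exact_mod_cast this
  have h4 : (1 - c) ^ j * ((K ×ˢ K).card : ℝ) ≤ (1 - c) ^ j * (n:ℝ) ^ 2 :=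
    mul_le_mul_of_nonneg_left h3 (pow_nonneg (by linarith) _)
  obtain ⟨T, hTc, hTB⟩ := cover_full (X := Fin n × Fin n) (Y := Fin n × Fin n)
    (by simp only [Fintype.card_prod, Fintype.card_fin]; positivity) (K ×ˢ K)
    (fun x p => G.Adj x.1 p.1 ∧ G.Adj x.2 p.2 ∧ Conn G r p.1 p.2) c hc1
    (fun x hx => by
      rw [Finset.mem_product] at hx
      have := connectors (G := G) r x.1 x.2 c hnn (hpow _ hx.1 _ hx.2) hrc
      convert this) j (lt_of_le_of_lt h4 hj1)
  have hcov : ∀ u ∈ K, ∀ v ∈ K, ∃ p ∈ T, G.Adj u p.1 ∧ G.Adj v p.2 ∧ Conn G r p.1 p.2 :=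
    fun u hu v hv => hTB (u, v) (Finset.mem_product.2 ⟨hu, hv⟩)
  -- choose the paths
  have hch : ∀ p : Fin n × Fin n, ∃ l : List (Fin n), l.length ≤ r + 2 ∧
      (Conn G r p.1 p.2 → PL G l p.1 p.2 ∧ l.length = r + 2) := by
    intro p
    by_cases h : Conn G r p.1 p.2
    · obtain ⟨l, hl, hlen⟩ := h
      exact ⟨l, hlen.le, fun _ => ⟨hl, hlen⟩⟩
    · exact ⟨[], by simp, fun h' => absurd h' h⟩
  choose P hP1 hP2 using hch
  set F : Finset (Fin n) := T.biUnion (fun p => (P p).toFinset) with hF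
  have hFc : (F.card : ℝ) ≤ ε / 8 * n := by
    have h1 : F.card ≤ T.card * (r + 2) := Finset.card_biUnion_le_card_mul _ _ _
      (fun p _ => (List.toFinset_card_le _).trans (hP1 p))
    have h2 : F.card ≤ (r + 2) * j := by
      rw [mul_comm]; exact h1.trans (Nat.mul_le_mul_right _ hTc)
    have h3 : (F.card : ℝ) ≤ ((r:ℝ) + 2) * j := by exact_mod_cast h2
    linarith
  have hKF := e2_sdiff (G := G) K F
  have hbig : m * (K \ F).card < e2 G (K \ F) := by
    have h1 : ((K \ F).card : ℝ) ≤ n := by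
      have : (K \ F).card ≤ n := by simpa using Finset.card_le_univ (K \ F)
      exact_mod_cast this
    have h2 : (m:ℝ) * (K \ F).card ≤ m * n := mul_le_mul_of_nonneg_left h1 (Nat.cast_nonneg _)
    have h3 : (m:ℝ) ≤ (1 / 4 - ε) * n := by
      push_cast at hm
      have : (0:ℝ) ≤ r := Nat.cast_nonneg r
      linarith
    have h4 : (m:ℝ) * n ≤ (1 / 4 - ε) * n * n := mul_le_mul_of_nonneg_right h3 hn0
    have h5 : (n / 2 - 1 / 4 : ℝ) ^ 2 ≤ ρ ^ 2 := pow_le_pow_left₀ (by linarith) hρ2 2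
    have h6 : (n / 2 - 1 / 4 : ℝ) ^ 2 * (1 - 2 * t) ^ 2 ≤ ρ ^ 2 * (1 - 2 * t) ^ 2 :=
      mul_le_mul_of_nonneg_right h5 (sq_nonneg _)
    have h7 : (1 - ε) ≤ (1 - 2 * t) ^ 2 := by rw [ht]; nlinarith
    have h8 : (n ^ 2 / 4 - n / 4 : ℝ) ≤ (n / 2 - 1 / 4 : ℝ) ^ 2 := by nlinarith
    have h9 : (n ^ 2 / 4 - n / 4 : ℝ) * (1 - ε) ≤ (n / 2 - 1 / 4 : ℝ) ^ 2 * (1 - 2 * t) ^ 2 :=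
      mul_le_mul h8 h7 (by linarith) (sq_nonneg _)
    have h10 : 2 * (F.card : ℝ) * n ≤ 2 * (ε / 8 * n) * n :=
      mul_le_mul_of_nonneg_right (by linarith) hn0
    have h11 : 4 * (n:ℝ) ≤ ε * n * n := mul_le_mul_of_nonneg_right hn hn0
    have h12 : (m:ℝ) * (K \ F).card < e2 G (K \ F) := by
      have h13 : 0 < ε * n := by linarith
      linarith
    exact_mod_cast h12
  obtain ⟨l, u, v, hl, hlen, hmem⟩ := erdos_gallai G m _ _ le_rfl hbig
  have huK := Finset.mem_sdiff.1 (hmem u hl.mem_hd)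
  have hvK := Finset.mem_sdiff.1 (hmem v hl.mem_lst)
  obtain ⟨p, hpT, hup, hvp, hpc⟩ := hcov u huK.1 v hvK.1
  obtain ⟨hq, hqlen⟩ := hP2 p hpc
  have hfin := (hl.append hq.reverse hvp (by
    intro x hx hx2
    have h1 := (Finset.mem_sdiff.1 (hmem x hx)).2
    apply h1
    rw [hF, Finset.mem_biUnion]
    exact ⟨p, hpT, by simpa using hx2⟩)).hasCycle hup.symm (by simp [hlen]; omega)
  simp only [List.length_append, List.length_reverse, hlen, hqlen] at hfin
  convert hfin using 1
  omega
end

/-! ### Final assembly -/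

lemma ev_lin (A B : ℝ) (hB : 0 < B) : ∀ᶠ n : ℕ in Filter.atTop, A < B * (n:ℝ) :=
  (tendsto_natCast_atTop_atTop.const_mul_atTop hB).eventually_gt_atTop A

lemma ev_j (q δ : ℝ) (hq0 : 0 ≤ q) (hq1 : q < 1) (hδ : 0 < δ) :
    ∀ᶠ n : ℕ in Filter.atTop, ∃ j : ℕ, (j:ℝ) ≤ δ * n ∧ q ^ j * (n:ℝ) ^ 2 < 1 := by
  have h1 : Filter.Tendsto (fun n : ℕ => ⌊δ * (n:ℝ)⌋₊) Filter.atTop Filter.atTop :=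
    tendsto_nat_floor_atTop.comp (tendsto_natCast_atTop_atTop.const_mul_atTop hδ)
  have h2 := tendsto_pow_const_mul_const_pow_of_abs_lt_one 2
    (show |q| < 1 by rw [abs_of_nonneg hq0]; exact hq1)
  have h3 := (h2.comp h1).eventually_lt_const (show (0:ℝ) < δ ^ 2 / 4 by positivity)
  filter_upwards [h3, h1.eventually_ge_atTop 1] with n hn1 hn2
  refine ⟨⌊δ * (n:ℝ)⌋₊, Nat.floor_le (by positivity), ?_⟩
  simp only [Function.comp] at hn1
  have h4 := Nat.lt_floor_add_one (δ * (n:ℝ))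
  set j := ⌊δ * (n:ℝ)⌋₊ with hj
  have hj1 : (1:ℝ) ≤ j := by exact_mod_cast hn2
  have h5 : δ * n ≤ 2 * j := by linarith
  have h6 : (δ * n) ^ 2 ≤ (2 * j) ^ 2 := pow_le_pow_left₀ (by positivity) h5 2
  have h7 : q ^ j * (δ * n) ^ 2 ≤ q ^ j * (2 * (j:ℝ)) ^ 2 :=
    mul_le_mul_of_nonneg_left h6 (pow_nonneg hq0 _)
  have h8 : δ ^ 2 * (q ^ j * (n:ℝ) ^ 2) < δ ^ 2 * 1 := by linarith
  exact lt_of_mul_lt_mul_left h8 (by positivity)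

lemma rho_lower (n : ℕ) (hn : 4 ≤ n) (ρ : ℝ) (h : Real.sqrt ((n ^ 2 / 4 : ℕ) : ℝ) < ρ) :
    (n:ℝ) / 2 - 1 / 4 ≤ ρ := by
  refine le_trans ?_ h.le
  apply Real.le_sqrt_of_sq_le
  have h1 : n ^ 2 ≤ 4 * (n ^ 2 / 4) + 3 := by omega
  have h2 : (n:ℝ) ^ 2 ≤ 4 * ((n ^ 2 / 4 : ℕ) : ℝ) + 3 := by exact_mod_cast h1
  have h3 : (4:ℝ) ≤ n := by exact_mod_cast hn
  nlinarith


/-- Theorem 1.8: Nikiforov's problem, `C ≥ 1/4`. -/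
theorem spectral_consecutive_cycles (ε : ℝ) (hε0 : 0 < ε) (hε : ε < 1 / 4) :
    ∃ N : ℕ, ∀ n : ℕ, N ≤ n → ∀ G : SimpleGraph (Fin n),
      Real.sqrt ((n ^ 2 / 4 : ℕ) : ℝ) < specRad G →
      ∀ l : ℕ, 3 ≤ l → (l : ℝ) ≤ (1 / 4 - ε) * (n : ℝ) → HasCycleLen G l := by
  set γ : ℝ := 1 / 1000000 with hγd
  have hγ : 0 < γ := by rw [hγd]; norm_num
  have hγ1 : γ < 1 := by rw [hγd]; norm_num
  obtain ⟨r, hr0⟩ := exists_pow_lt_of_lt_one (show (0:ℝ) < ε / 4 / 18 by positivity)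
    (show 1 - γ < 1 by linarith)
  have hr : (1 - γ) ^ (r + 1) ≤ ε / 4 / 18 :=
    (pow_le_pow_of_le_one (by linarith) (by linarith) (Nat.le_succ r)).trans hr0.le
  obtain ⟨c, hc⟩ : ∃ c : ℝ, c = ε / 4 / (36 * 3 ^ (r + 1)) := ⟨_, rfl⟩
  have hc0 : 0 < c := by rw [hc]; positivity
  have hc1 : c < 1 := by
    rw [hc, div_lt_one (by positivity)]
    have : (1:ℝ) ≤ 3 ^ (r+1) := one_le_pow₀ (by norm_num)
    linarith
  have hev := ((((ev_j (1 - c) (ε / 8 / ((r:ℝ) + 2)) (by linarith) (by linarith)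
    (by positivity)).and (ev_lin 4 ε hε0)).and (ev_lin (r * (r + 1) + 1) c hc0)).and
    (ev_lin (2 * ((r + 1 : ℝ) * (r + 2)) * 3 ^ (r + 3)) γ hγ)).and
    (Filter.eventually_ge_atTop 100000000)
  obtain ⟨N, hN⟩ := Filter.eventually_atTop.1 hev
  refine ⟨N, fun n hn G hG l h3 hl => ?_⟩
  obtain ⟨⟨⟨⟨⟨j, hj1, hj2⟩, hn1⟩, hn2⟩, hn3⟩, hn4⟩ := hN n hn
  have hnR : (100000000:ℝ) ≤ n := by exact_mod_cast hn4
  obtain ⟨D⟩ := exists_SD (by omega) G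
  rw [← D.top] at hG
  have hρ := rho_lower n (by omega) _ hG
  have hl4 : (l:ℝ) ≤ n / 4 := by nlinarith
  have hne : ∀ i, ∃ u, D.φ i u ≠ 0 := by
    intro i
    by_contra hc
    push Not at hc
    have := D.unit i
    simp [hc] at this
  by_cases c1 : ∃ i, i ≠ D.i0 ∧ (1 - γ) * D.μ D.i0 ≤ D.μ i
  · obtain ⟨i, hi, hμi⟩ := c1
    refine case_one (D.φ D.i0) (D.φ i) (D.μ D.i0) (D.μ i) ((1 - γ) * D.μ D.i0)
      (mul_pos (by linarith) (by linarith)) ?_ hμi (D.eig _) (D.eig _) (hne _) (hne _) ?_ l h3 ?_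
    · rw [hγd]; linarith
    · have := D.orth D.i0 i
      rwa [if_neg (Ne.symm hi)] at this
    · rw [hγd]; linarith
  by_cases c2 : ∃ i, D.μ i ≤ -((1 - γ) * D.μ D.i0)
  · obtain ⟨i, hμi⟩ := c2
    refine case_two D hG hρ (by omega) i _ (mul_pos (by linarith) (by linarith)) hμi ?_ l h3 hl4
    have h5 : (n / 2 - 1 / 4 : ℝ) ^ 2 ≤ D.μ D.i0 ^ 2 := pow_le_pow_left₀ (by linarith) hρ 2
    rw [mul_pow]
    have h6 : (1 - γ) ^ 2 * (n / 2 - 1 / 4 : ℝ) ^ 2 ≤ (1 - γ) ^ 2 * D.μ D.i0 ^ 2 :=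
      mul_le_mul_of_nonneg_left h5 (sq_nonneg _)
    refine le_trans ?_ h6
    rw [hγd]
    nlinarith
  push Not at c1 c2
  have hgap : ∀ i, i ≠ D.i0 → |D.μ i| ≤ (1 - γ) * D.μ D.i0 := by
    intro i hi
    rw [abs_le]
    exact ⟨(c2 i).le, (c1 i hi).le⟩
  rcases Nat.lt_or_ge l (r + 4) with hlr | hlr
  · obtain ⟨k, rfl⟩ := Nat.exists_eq_add_of_le' (show 2 ≤ l by omega)
    refine small_cycles D γ hγ hγ1 hρ ?_ hgap k (by omega) (lt_of_le_of_lt ?_ hn3)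
    · rw [hγd]; linarith
    · have hk : (k:ℝ) ≤ r + 1 := by exact_mod_cast (by omega : k ≤ r + 1)
      have hk0 : (0:ℝ) ≤ k := Nat.cast_nonneg k
      have e1 : (k:ℝ) * (k + 1) ≤ (r + 1) * (r + 2) :=
        mul_le_mul hk (by linarith) (by linarith) (by linarith)
      have e2 : (3:ℝ) ^ (k + 2) ≤ 3 ^ (r + 3) := pow_le_pow_right₀ (by norm_num) (by omega)
      exact mul_le_mul (by linarith) e2 (by positivity) (by positivity)
  · obtain ⟨m, rfl⟩ := Nat.exists_eq_add_of_le' hlr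
    refine large_cycles D γ ε (ε / 4) c r j m hγ hγ1 hε0 hε rfl hc hρ hn1.le hgap hr hn2.le hj2 ?_ hl
    have hr2 : (0:ℝ) < (r:ℝ) + 2 := by positivity
    calc ((r:ℝ) + 2) * j ≤ (r + 2) * (ε / 8 / ((r:ℝ) + 2) * n) :=
          mul_le_mul_of_nonneg_left hj1 hr2.le
      _ = ε / 8 * n := by field_simp
end

section
/- Let k ≥ 0 be an integer and let G be a simple graph of order n ≥ 6k+5. Suppose that any two distinct nonadjacent vertices of G have degree sum at most n−1 (i.e. G equals its n-closure). If e(G) > C(n−k−1, 2) + (k+1)², then ω(G) ≥ n−k, i.e. G contains a clique on n−k vertices. -/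
open SimpleGraph

/-- Arithmetic core. -/
lemma arith_core (k n t m e : ℤ) (hk : 0 ≤ k) (hn : 6 * k + 5 ≤ n) (ht : 0 ≤ t)
    (hm : k + 1 ≤ m) (htm : t + m = n)
    (hA : 2 * e ≤ t * (t - 1) + 2 * (m * m))
    (hB : 4 * e ≤ 2 * (t * (t - 1)) + m * (2 * (t - 1) + (n - 1)))
    (he : (n - k - 1) * (n - k - 2) + 2 * (k + 1) ^ 2 < 2 * e) : False := by
  obtain rfl : t = n - m := by linarith
  rcases le_or_gt (2 * m) (n - 1) with h | h
  · nlinarith [mul_nonneg (sub_nonneg.2 hm) (show 0 ≤ 2 * n - 1 - 3 * m - 3 * (k + 1) by linarith)]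
  · have h1 : n ≤ 2 * m := by linarith
    nlinarith [mul_nonneg (sub_nonneg.2 h1) (show 0 ≤ n + 1 by linarith),
      mul_nonneg (sub_nonneg.2 hn) (show 0 ≤ 3 * n - 6 * k - 5 by linarith),
      mul_nonneg (sub_nonneg.2 hn) hk, mul_nonneg (sub_nonneg.2 hn) (sub_nonneg.2 hn)]

/-- Lemma 2.4: closed graphs with many edges have a large clique. -/
theorem clique_of_closed (k n : ℕ) (G : SimpleGraph (Fin n)) (hn : 6 * k + 5 ≤ n)
    (hcl : ∀ u v : Fin n, u ≠ v → ¬ G.Adj u v → degCount G u + degCount G v ≤ n - 1)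
    (he : (n - k - 1).choose 2 + (k + 1) ^ 2 < edgeCount G) :
    ∃ S : Finset (Fin n), S.card = n - k ∧ G.IsClique (↑S : Set (Fin n)) := by
  classical
  have hdeg : ∀ v, degCount G v = G.degree v := by
    intro v
    rw [degCount, Nat.card_eq_fintype_card, G.card_neighborSet_eq_degree]
  have hec : edgeCount G = G.edgeFinset.card := by
    rw [edgeCount, Nat.card_eq_fintype_card, SimpleGraph.edgeFinset_card]
  simp only [hdeg] at hcl
  rw [hec] at he
  -- the clique of heavy vertices
  let Hv : Finset (Fin n) := Finset.univ.filter (fun v => n ≤ 2 * G.degree v)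
  have hHv : G.IsClique (↑Hv : Set (Fin n)) := by
    intro u hu v hv huv
    by_contra hna
    have h1 := hcl u v huv hna
    simp only [Hv, Finset.coe_filter, Finset.mem_univ, true_and, Set.mem_setOf_eq] at hu hv
    omega
  obtain ⟨K, hKmem, hKmax⟩ := Finset.exists_max_image
    (Finset.univ.filter (fun S : Finset (Fin n) => Hv ⊆ S ∧ G.IsClique (↑S : Set (Fin n))))
    Finset.card ⟨Hv, by simp [hHv]⟩
  simp only [Finset.mem_filter, Finset.mem_univ, true_and] at hKmem hKmax
  obtain ⟨hHK, hK⟩ := hKmem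
  by_cases hbig : n - k ≤ K.card
  · obtain ⟨S, hS, hSc⟩ := Finset.exists_subset_card_eq hbig
    exact ⟨S, hSc, hK.subset (by exact_mod_cast hS)⟩
  exfalso
  have hout : ∀ v ∉ K, ∃ w ∈ K, ¬ G.Adj v w := by
    intro v hv
    by_contra! hall
    have h1 := hKmax (insert v K) ⟨hHK.trans (Finset.subset_insert _ _), by
      rw [Finset.coe_insert]
      exact hK.insert (fun b hb _ => hall b hb)⟩
    rw [Finset.card_insert_of_notMem hv] at h1
    omega
  have hin : ∀ v ∈ K, (G.neighborFinset v ∩ K).card = K.card - 1 := by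
    intro v hv
    rw [← Finset.card_erase_of_mem hv]
    congr 1
    ext w
    simp only [Finset.mem_inter, SimpleGraph.mem_neighborFinset, Finset.mem_erase]
    exact ⟨fun h => ⟨h.1.ne', h.2⟩, fun h => ⟨hK hv h.2 h.1.symm, h.2⟩⟩
  have hdk : ∀ v ∈ K, K.card - 1 ≤ G.degree v := by
    intro v hv
    rw [← hin v hv, ← G.card_neighborFinset_eq_degree]
    exact Finset.card_le_card Finset.inter_subset_left
  have hsplit : ∀ v ∈ K, G.degree v = (K.card - 1) + (G.neighborFinset v ∩ Kᶜ).card := by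
    intro v hv
    rw [← hin v hv, ← G.card_neighborFinset_eq_degree, ← Finset.sdiff_eq_inter_compl,
      Finset.card_inter_add_card_sdiff]
  have hdc : ∑ v ∈ K, (G.neighborFinset v ∩ Kᶜ).card
      = ∑ v ∈ Kᶜ, (G.neighborFinset v ∩ K).card := by
    have h := Finset.sum_card_bipartiteAbove_eq_sum_card_bipartiteBelow (s := K) (t := Kᶜ) G.Adj
    convert h using 3 with v hv v hv
    · ext w
      simp [Finset.bipartiteAbove, and_comm]
    · ext w
      simp [Finset.bipartiteBelow, and_comm, G.adj_comm]
  have hsum : 2 * G.edgeFinset.card = K.card * (K.card - 1)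
      + ∑ v ∈ Kᶜ, ((G.neighborFinset v ∩ K).card + G.degree v) := by
    rw [← G.sum_degrees_eq_twice_card_edges, ← Finset.sum_add_sum_compl K,
      Finset.sum_congr rfl hsplit, Finset.sum_add_distrib, hdc, Finset.sum_add_distrib,
      Finset.sum_const, smul_eq_mul, add_assoc]
  have hKc : K.card + Kᶜ.card = n := by
    rw [Finset.card_add_card_compl, Fintype.card_fin]
  have hb : ∀ v ∈ Kᶜ, (G.neighborFinset v ∩ K).card ≤ G.degree v ∧ G.degree v ≤ Kᶜ.card ∧
      2 * G.degree v ≤ n - 1 ∧ (G.neighborFinset v ∩ K).card ≤ K.card - 1 ∧ 1 ≤ K.card := by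
    intro v hv
    rw [Finset.mem_compl] at hv
    obtain ⟨w, hw, hvw⟩ := hout v hv
    have hne : v ≠ w := fun h => hv (h ▸ hw)
    have h1 := hcl v w hne hvw
    have h2 := hdk w hw
    have h3 : 0 < K.card := Finset.card_pos.2 ⟨w, hw⟩
    have h4 : ¬ n ≤ 2 * G.degree v := fun h => hv (hHK (by simp [Hv, h]))
    refine ⟨?_, by omega, by omega, ?_, h3⟩
    · rw [← G.card_neighborFinset_eq_degree]
      exact Finset.card_le_card Finset.inter_subset_left
    · rw [← Finset.card_erase_of_mem hw]
      refine Finset.card_le_card fun x hx => ?_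
      simp only [Finset.mem_inter, SimpleGraph.mem_neighborFinset] at hx
      exact Finset.mem_erase.2 ⟨fun h => hvw (h ▸ hx.1), hx.2⟩
  have hne : Kᶜ.Nonempty := Finset.card_pos.1 (by omega)
  have hK1 : 1 ≤ K.card := by
    obtain ⟨v, hv⟩ := hne
    exact (hb v hv).2.2.2.2
  have hA : ∑ v ∈ Kᶜ, ((G.neighborFinset v ∩ K).card + G.degree v) ≤ Kᶜ.card * (2 * Kᶜ.card) := by
    rw [← smul_eq_mul]
    refine Finset.sum_le_card_nsmul _ _ _ fun v hv => ?_
    have := hb v hv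
    omega
  have hB : 2 * ∑ v ∈ Kᶜ, ((G.neighborFinset v ∩ K).card + G.degree v)
      ≤ Kᶜ.card * (2 * (K.card - 1) + (n - 1)) := by
    rw [← smul_eq_mul (Kᶜ.card), Finset.mul_sum]
    refine Finset.sum_le_card_nsmul _ _ _ fun v hv => ?_
    have := hb v hv
    omega
  have hch : (n - k - 1) * (n - k - 2) = 2 * (n - k - 1).choose 2 := by
    rw [Nat.choose_two_right, Nat.mul_div_cancel' (Nat.even_mul_pred_self _).two_dvd]
    rfl
  generalize hS : ∑ v ∈ Kᶜ, ((G.neighborFinset v ∩ K).card + G.degree v) = S at hA hB hsum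
  have he2 : (n - k - 1) * (n - k - 2) + 2 * (k + 1) ^ 2 < 2 * G.edgeFinset.card := by
    rw [hch]; omega
  have hA' : 2 * G.edgeFinset.card ≤ K.card * (K.card - 1) + 2 * (Kᶜ.card * Kᶜ.card) := by
    rw [hsum]; linarith
  have hB' : 4 * G.edgeFinset.card ≤
      2 * (K.card * (K.card - 1)) + Kᶜ.card * (2 * (K.card - 1) + (n - 1)) := by
    linarith
  have c1 : ((K.card - 1 : ℕ) : ℤ) = (K.card : ℤ) - 1 := by omega
  have c2 : ((n - 1 : ℕ) : ℤ) = (n : ℤ) - 1 := by omega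
  have c3 : ((n - k - 1 : ℕ) : ℤ) = (n : ℤ) - k - 1 := by omega
  have c4 : ((n - k - 2 : ℕ) : ℤ) = (n : ℤ) - k - 2 := by omega
  zify at hA' hB' he2
  rw [c1] at hA' hB'
  rw [c2] at hB'
  rw [c3, c4] at he2
  exact arith_core k n K.card Kᶜ.card G.edgeFinset.card (by positivity) (by exact_mod_cast hn)
    (by positivity) (by omega) (by exact_mod_cast hKc) hA' hB' he2
end

section
/- Let n and k be integers with n ≥ 2k+1 ≥ 1, and let G be a simple graph of order n that is a subgraph of some member of the family F_{n,k}. If ρ(G) ≥ ρ(L_{n,k}), then G is isomorphic to L_{n,k}. -/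
open SimpleGraph

open Matrix

theorem specRad_eq {V : Type} [Fintype V] [DecidableEq V] (G : SimpleGraph V)
    [DecidableRel G.Adj] : specRad G = sSup (spectrum ℝ (G.adjMatrix ℝ)) := by
  unfold specRad
  congr!

theorem specRad_iso {V W : Type} [Fintype V] [Fintype W] (G : SimpleGraph V) (H : SimpleGraph W)
    (e : G ≃g H) : specRad G = specRad H := by
  classical
  rw [specRad_eq, specRad_eq]
  have : H.adjMatrix ℝ = Matrix.reindexAlgEquiv ℝ ℝ e.toEquiv (G.adjMatrix ℝ) := by
    ext a b
    simp only [Matrix.reindexAlgEquiv_apply, Matrix.reindex_apply, Matrix.submatrix_apply,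
      SimpleGraph.adjMatrix_apply]
    have := e.symm.map_rel_iff (a := a) (b := b)
    simp only [← this]
    rfl
  rw [this, AlgEquiv.spectrum_eq]

section
variable {V : Type} [Fintype V] [DecidableEq V] [Nonempty V]

theorem specRad_mem (G : SimpleGraph V) [DecidableRel G.Adj] :
    specRad G ∈ spectrum ℝ (G.adjMatrix ℝ) ∧
      ∀ a ∈ spectrum ℝ (G.adjMatrix ℝ), a ≤ specRad G := by
  rw [specRad_eq]
  have hH : (G.adjMatrix ℝ).IsHermitian := by
    rw [Matrix.IsHermitian, Matrix.conjTranspose_eq_transpose_of_trivial]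
    exact G.isSymm_adjMatrix
  have hr := hH.spectrum_real_eq_range_eigenvalues
  have hfin : (spectrum ℝ (G.adjMatrix ℝ)).Finite := by
    rw [hr]; exact Set.finite_range _
  have hne : (spectrum ℝ (G.adjMatrix ℝ)).Nonempty := by
    rw [hr]; exact Set.range_nonempty _
  exact ⟨hne.csSup_mem hfin, fun a ha => le_csSup hfin.bddAbove ha⟩

theorem psd (G : SimpleGraph V) [DecidableRel G.Adj] :
    (algebraMap ℝ (Matrix V V ℝ) (specRad G) - G.adjMatrix ℝ).PosSemidef := by
  have hH : (G.adjMatrix ℝ).IsHermitian := by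
    rw [Matrix.IsHermitian, Matrix.conjTranspose_eq_transpose_of_trivial]
    exact G.isSymm_adjMatrix
  rw [Matrix.posSemidef_iff_isHermitian_and_spectrum_nonneg]
  refine ⟨?_, ?_⟩
  · refine Matrix.IsHermitian.sub ?_ hH
    rw [Matrix.algebraMap_eq_diagonal]
    exact Matrix.isHermitian_diagonal _
  · intro a ha
    rw [← spectrum.singleton_sub_eq] at ha
    obtain ⟨r, hr, b, hb, rfl⟩ := ha
    have := (specRad_mem G).2 b hb
    simp only [Set.mem_singleton_iff] at hr
    subst hr
    simpa using this

theorem rayleigh (G : SimpleGraph V) [DecidableRel G.Adj] (x : V → ℝ) :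
    x ⬝ᵥ (G.adjMatrix ℝ *ᵥ x) ≤ specRad G * (x ⬝ᵥ x) ∧
    (x ⬝ᵥ (G.adjMatrix ℝ *ᵥ x) = specRad G * (x ⬝ᵥ x) →
      G.adjMatrix ℝ *ᵥ x = specRad G • x) := by
  have h := psd G
  have key : (algebraMap ℝ (Matrix V V ℝ) (specRad G) - G.adjMatrix ℝ) *ᵥ x
      = specRad G • x - G.adjMatrix ℝ *ᵥ x := by
    rw [Matrix.sub_mulVec, Algebra.algebraMap_eq_smul_one, Matrix.smul_mulVec, Matrix.one_mulVec]
  have key2 : x ⬝ᵥ ((algebraMap ℝ (Matrix V V ℝ) (specRad G) - G.adjMatrix ℝ) *ᵥ x)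
      = specRad G * (x ⬝ᵥ x) - x ⬝ᵥ (G.adjMatrix ℝ *ᵥ x) := by
    rw [key, dotProduct_sub, dotProduct_smul, smul_eq_mul]
  constructor
  · have := h.dotProduct_mulVec_nonneg x
    simp only [star_trivial] at this
    linarith
  · intro he
    have := (h.dotProduct_mulVec_zero_iff x).1 (by simp only [star_trivial]; linarith)
    rw [key] at this
    exact (sub_eq_zero.1 this).symm

theorem exists_eig (G : SimpleGraph V) [DecidableRel G.Adj] :
    ∃ x : V → ℝ, (∀ a, 0 ≤ x a) ∧ x ≠ 0 ∧ G.adjMatrix ℝ *ᵥ x = specRad G • x := by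
  have h := (specRad_mem G).1
  rw [← Matrix.spectrum_toLin', ← Module.End.hasEigenvalue_iff_mem_spectrum] at h
  obtain ⟨y, hy⟩ := h.exists_hasEigenvector
  have hy0 := hy.2
  have hy1 := hy.apply_eq_smul
  rw [Matrix.toLin'_apply] at hy1
  refine ⟨fun a => |y a|, fun a => abs_nonneg _, ?_, ?_⟩
  · intro h0
    apply hy0
    ext a
    simpa using congrFun h0 a
  · have hr := rayleigh G (fun a => |y a|)
    apply hr.2
    apply le_antisymm hr.1
    have e1 : (fun a => |y a|) ⬝ᵥ (fun a => |y a|) = y ⬝ᵥ y := by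
      simp [dotProduct]
    have e2 : specRad G * (y ⬝ᵥ y) = y ⬝ᵥ (G.adjMatrix ℝ *ᵥ y) := by
      rw [hy1, dotProduct_smul, smul_eq_mul]
    rw [e1, e2]
    simp only [dotProduct, mulVec, Finset.mul_sum]
    refine Finset.sum_le_sum fun a _ => Finset.sum_le_sum fun b _ => ?_
    simp only [SimpleGraph.adjMatrix_apply]
    split_ifs
    · simp only [one_mul]
      rw [← abs_mul]; exact le_abs_self _
    · simp

end

/-- The two cliques `S` and `Sᶜ ∪ {v}` glued at `v`. -/
def LL {V : Type} (v : V) (S : Finset V) : SimpleGraph V where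
  Adj a b := a ≠ b ∧ (a = v ∨ b = v ∨ (a ∈ S ∧ b ∈ S) ∨ (a ∉ S ∧ b ∉ S))
  symm := ⟨by intro a b h; tauto⟩
  loopless := ⟨by intro a h; exact h.1 rfl⟩

theorem core {V : Type} [Fintype V] [DecidableEq V] (G : SimpleGraph V) (S : Finset V)
    (hS : S.Nonempty) (w : V → V)
    (hwS : ∀ u, u ∉ S → w u ∈ S)
    (hw : ∀ u, u ∉ S → ∀ b ∈ S, G.Adj u b → b = w u) :
    ∃ v ∈ S, specRad (LL v S) ≤ specRad G → G = LL v S := by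
  classical
  haveI : Nonempty V := ⟨hS.choose⟩
  obtain ⟨x, hx0, hxne, hx⟩ := exists_eig G
  obtain ⟨v, hvS, hv⟩ := S.exists_max_image x hS
  refine ⟨v, hvS, fun hle => ?_⟩
  set L := LL v S with hL
  -- comparison of quadratic forms
  have hcross : ∀ u, u ∉ S → ∑ b ∈ S, G.adjMatrix ℝ u b * x b ≤
      ∑ b ∈ S, L.adjMatrix ℝ u b * x b := by
    intro u hu
    have h1 : ∑ b ∈ S, G.adjMatrix ℝ u b * x b ≤ ∑ b ∈ S, if b = w u then x b else 0 := by
      refine Finset.sum_le_sum fun b hb => ?_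
      simp only [SimpleGraph.adjMatrix_apply]
      by_cases hab : G.Adj u b
      · have := hw u hu b hb hab
        rw [if_pos hab, if_pos this, one_mul]
      · simp only [hab, if_false, zero_mul]
        split_ifs
        · exact hx0 _
        · exact le_rfl
    rw [Finset.sum_ite_eq' S (w u) x, if_pos (hwS u hu)] at h1
    have h2 : L.adjMatrix ℝ u v * x v ≤ ∑ b ∈ S, L.adjMatrix ℝ u b * x b := by
      refine Finset.single_le_sum (f := fun b => L.adjMatrix ℝ u b * x b) (fun b _ => ?_) hvS
      simp only [SimpleGraph.adjMatrix_apply]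
      split_ifs
      · simpa using hx0 b
      · simp
    have h3 : L.Adj u v := ⟨fun h => hu (h ▸ hvS), Or.inr (Or.inl rfl)⟩
    rw [SimpleGraph.adjMatrix_apply, if_pos h3, one_mul] at h2
    linarith [hv _ (hwS u hu)]
  have hsame : ∀ a b, (a ∈ S ↔ b ∈ S) → G.adjMatrix ℝ a b ≤ L.adjMatrix ℝ a b := by
    intro a b hab
    simp only [SimpleGraph.adjMatrix_apply]
    by_cases h : G.Adj a b
    · have : L.Adj a b := ⟨h.ne, by tauto⟩
      simp [h, this]
    · simp only [h, if_false]
      split_ifs <;> norm_num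
  have expand : ∀ H : SimpleGraph V, x ⬝ᵥ (H.adjMatrix ℝ *ᵥ x) =
      ∑ a ∈ S, ∑ b ∈ S, H.adjMatrix ℝ a b * (x a * x b)
      + ∑ a ∈ Sᶜ, ∑ b ∈ Sᶜ, H.adjMatrix ℝ a b * (x a * x b)
      + 2 * ∑ a ∈ Sᶜ, x a * ∑ b ∈ S, H.adjMatrix ℝ a b * x b := by
    intro H
    have e1 : x ⬝ᵥ (H.adjMatrix ℝ *ᵥ x) = ∑ a, ∑ b, H.adjMatrix ℝ a b * (x a * x b) := by
      simp only [dotProduct, mulVec, Finset.mul_sum]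
      refine Finset.sum_congr rfl fun a _ => Finset.sum_congr rfl fun b _ => by ring
    have e2 : ∑ a ∈ Sᶜ, x a * ∑ b ∈ S, H.adjMatrix ℝ a b * x b =
        ∑ a ∈ Sᶜ, ∑ b ∈ S, H.adjMatrix ℝ a b * (x a * x b) := by
      simp only [Finset.mul_sum]
      refine Finset.sum_congr rfl fun a _ => Finset.sum_congr rfl fun b _ => by ring
    have e3 : ∑ a ∈ S, ∑ b ∈ Sᶜ, H.adjMatrix ℝ a b * (x a * x b) =
        ∑ a ∈ Sᶜ, ∑ b ∈ S, H.adjMatrix ℝ a b * (x a * x b) := by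
      rw [Finset.sum_comm]
      refine Finset.sum_congr rfl fun a _ => Finset.sum_congr rfl fun b _ => ?_
      simp only [SimpleGraph.adjMatrix_apply, H.adj_comm b a]
      ring
    rw [e1, e2, ← Finset.sum_add_sum_compl S]
    simp_rw [← Finset.sum_add_sum_compl S (fun b => H.adjMatrix ℝ _ b * (x _ * x b))]
    rw [Finset.sum_add_distrib, Finset.sum_add_distrib, e3]
    ring
  have hq : x ⬝ᵥ (G.adjMatrix ℝ *ᵥ x) ≤ x ⬝ᵥ (L.adjMatrix ℝ *ᵥ x) := by
    rw [expand, expand]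
    refine add_le_add (add_le_add ?_ ?_) ?_
    · refine Finset.sum_le_sum fun a ha => Finset.sum_le_sum fun b hb => ?_
      exact mul_le_mul_of_nonneg_right (hsame a b (by tauto)) (mul_nonneg (hx0 a) (hx0 b))
    · refine Finset.sum_le_sum fun a ha => Finset.sum_le_sum fun b hb => ?_
      rw [Finset.mem_compl] at ha hb
      exact mul_le_mul_of_nonneg_right (hsame a b (by tauto)) (mul_nonneg (hx0 a) (hx0 b))
    · refine mul_le_mul_of_nonneg_left ?_ (by norm_num)
      refine Finset.sum_le_sum fun a ha => ?_
      exact mul_le_mul_of_nonneg_left (hcross a (Finset.mem_compl.1 ha)) (hx0 a)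
  have hxx : 0 ≤ x ⬝ᵥ x := Finset.sum_nonneg fun a _ => mul_nonneg (hx0 a) (hx0 a)
  have hGq : x ⬝ᵥ (G.adjMatrix ℝ *ᵥ x) = specRad G * (x ⬝ᵥ x) := by
    rw [hx, dotProduct_smul, smul_eq_mul]
  have hLx := (rayleigh L x).2 (by
    have := (rayleigh L x).1
    have := mul_le_mul_of_nonneg_right hle hxx
    linarith)
  have hrow : ∀ (H : SimpleGraph V) (a : V), (H.adjMatrix ℝ *ᵥ x) a =
      ∑ b, if H.Adj a b then x b else 0 := by
    intro H a
    simp only [mulVec, dotProduct, SimpleGraph.adjMatrix_apply, ite_mul, one_mul, zero_mul]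
  have hvadj : ∀ b, b ≠ v → L.Adj v b := fun b hb => ⟨hb.symm, Or.inl rfl⟩
  have hnn : ∀ (H : SimpleGraph V) (a b : V), 0 ≤ if H.Adj a b then x b else 0 := by
    intro H a b
    split_ifs
    · exact hx0 b
    · exact le_rfl
  have hxv : 0 < x v := by
    refine lt_of_le_of_ne (hx0 v) fun h0 => hxne ?_
    have h1 := congrFun hLx v
    rw [hrow, Pi.smul_apply, ← h0, smul_zero,
      Finset.sum_eq_zero_iff_of_nonneg (fun b _ => hnn L v b)] at h1
    ext b
    by_cases hb : b = v
    · rw [hb, ← h0]; rfl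
    · have := h1 b (Finset.mem_univ b)
      rw [if_pos (hvadj b hb)] at this
      exact this
  have hpos : ∀ b, 0 < x b := by
    intro b
    by_cases hb : b = v
    · rw [hb]; exact hxv
    refine lt_of_le_of_ne (hx0 b) fun h0 => ?_
    have h1 := congrFun hLx b
    rw [hrow, Pi.smul_apply, ← h0, smul_zero,
      Finset.sum_eq_zero_iff_of_nonneg (fun c _ => hnn L b c)] at h1
    have := h1 v (Finset.mem_univ v)
    rw [if_pos (hvadj b hb).symm] at this
    linarith
  have hspec : specRad G = specRad L := by
    have hp : 0 < x ⬝ᵥ x :=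
      Finset.sum_pos (fun a _ => mul_pos (hpos a) (hpos a)) Finset.univ_nonempty
    refine le_antisymm ?_ hle
    refine le_of_mul_le_mul_right ?_ hp
    have := (rayleigh L x).1
    linarith
  have hrows : ∀ a, ∑ b, (if G.Adj a b then x b else 0) = ∑ b, if L.Adj a b then x b else 0 := by
    intro a
    rw [← hrow, ← hrow, hx, hLx, hspec]
  have hsub : ∀ a, (∀ b, G.Adj a b → L.Adj a b) → ∀ b, L.Adj a b → G.Adj a b := by
    intro a h b hb
    have h1 := (Finset.sum_eq_sum_iff_of_le (fun b _ => by
      by_cases hg : G.Adj a b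
      · simp [hg, h b hg]
      · simpa [hg] using hnn L a b)).1 (hrows a) b (Finset.mem_univ b)
    by_contra hg
    rw [if_neg hg, if_pos hb] at h1
    exact (hpos b).ne h1
  have hGv : ∀ b, b ≠ v → G.Adj v b := fun b hb =>
    hsub v (fun c hc => hvadj c hc.ne') b (hvadj b hb)
  have hwv : ∀ u, u ∉ S → w u = v := fun u hu =>
    (hw u hu v hvS (hGv u (fun h => hu (h ▸ hvS))).symm).symm
  have hGL : ∀ a b, G.Adj a b → L.Adj a b := by
    intro a b hab
    refine ⟨hab.ne, ?_⟩
    by_cases ha : a ∈ S <;> by_cases hb : b ∈ S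
    · tauto
    · have := hw b hb a ha hab.symm
      rw [hwv b hb] at this
      tauto
    · have := hw a ha b hb hab
      rw [hwv a ha] at this
      tauto
    · tauto
  ext a b
  exact ⟨hGL a b, hsub a (hGL a) b⟩

theorem LL_iso (n k : ℕ) (hn : 2 * k + 1 ≤ n) (S : Finset (Fin n)) (hS : S.card = n - k)
    (v : Fin n) (hv : v ∈ S) : Nonempty (LL v S ≃g Lgraph n k) := by
  classical
  have hcard : Fintype.card {x // x ∈ S} = Fintype.card {i : Fin n // i.val < n - k} := by
    rw [Fintype.card_coe, hS, Fintype.card_subtype, Fin.card_filter_val_lt]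
    omega
  let e := Fintype.equivOfCardEq hcard
  let σ := e.extendSubtype
  have h0n : 0 < n := by omega
  let z : Fin n := ⟨0, h0n⟩
  have hσ : ∀ a, (σ a).val < n - k ↔ a ∈ S := by
    intro a
    constructor
    · intro h
      by_contra ha
      exact e.extendSubtype_not_mem a ha h
    · intro h
      exact e.extendSubtype_mem a h
  let τ : Fin n ≃ Fin n := σ.trans (Equiv.swap (σ v) z)
  have hτv : τ v = z := by simp [τ]
  have hτ : ∀ a, (τ a).val < n - k ↔ a ∈ S := by
    intro a
    rw [← hσ a]
    have hσv := (hσ v).2 hv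
    have hz : z.val < n - k := by simp only [z]; omega
    simp only [τ, Equiv.trans_apply, Equiv.swap_apply_def]
    split_ifs with h1 h2
    · rw [h1]; tauto
    · rw [h2]; tauto
    · rfl
  have hτ0 : ∀ a, (τ a).val = 0 ↔ a = v := by
    intro a
    rw [← τ.injective.eq_iff, hτv, Fin.ext_iff]
  refine ⟨⟨τ, ?_⟩⟩
  intro a b
  simp only [Lgraph, SimpleGraph.fromRel_adj, LL, ← not_lt, hτ, hτ0, ne_eq, τ.injective.eq_iff]
  tauto

/-- Lemma 3.5 (a): extremal graph in the family `F_{n,k}` for the spectral radius. -/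
theorem extremal_specRad (n k : ℕ) (hn : 2 * k + 1 ≤ n) (G : SimpleGraph (Fin n))
    (hF : ∃ F : SimpleGraph (Fin n), MemF n k F ∧ IsSubgraphOf G F)
    (hr : specRad (Lgraph n k) ≤ specRad G) :
    Nonempty (G ≃g Lgraph n k) := by
  classical
  obtain ⟨F, ⟨K, hK, -, -, hu, -⟩, f, hf⟩ := hF
  let g : Fin n ≃ Fin n := Equiv.ofBijective f (Finite.injective_iff_bijective.1 hf)
  have hg : ∀ a, g a = f a := fun a => rfl
  let S : Finset (Fin n) := K.map g.symm.toEmbedding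
  have hmem : ∀ a, a ∈ S ↔ f a ∈ K := by
    intro a
    simp only [S, Finset.mem_map_equiv, Equiv.symm_symm, hg]
  have hScard : S.card = n - k := by rw [Finset.card_map, hK]
  have hSne : S.Nonempty := by
    rw [← Finset.card_pos]; omega
  have hex : ∀ u, ∃ w, u ∉ S → (w ∈ S ∧ ∀ b ∈ S, G.Adj u b → b = w) := by
    intro u
    by_cases h : u ∈ S
    · exact ⟨u, fun h' => absurd h h'⟩
    · rw [hmem] at h
      obtain ⟨w, hw, hw'⟩ := hu ⟨f u, h⟩
      refine ⟨g.symm w, fun _ => ⟨?_, fun b hb hab => ?_⟩⟩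
      · rw [hmem, ← hg, Equiv.apply_symm_apply]; exact hw.1
      · rw [Equiv.eq_symm_apply, hg]
        exact hw' _ ⟨(hmem b).1 hb, f.map_adj hab⟩
  choose w hw using hex
  obtain ⟨v, hv, h⟩ := core G S hSne w (fun u hu => (hw u hu).1) (fun u hu => (hw u hu).2)
  obtain ⟨e⟩ := LL_iso n k hn S hScard v hv
  have := h (by rw [specRad_iso _ _ e]; exact hr)
  rw [this]
  exact ⟨e⟩
end

section
/- Let n and k be integers with n ≥ 2k+1 ≥ 1, and let G be a simple graph of order n that is a subgraph of some member of the family F_{n,k}. If q(G) ≥ q(L_{n,k}), then G is isomorphic to L_{n,k}. -/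
open SimpleGraph

open Classical in
noncomputable def qmat {n : ℕ} (G : SimpleGraph (Fin n)) : Matrix (Fin n) (Fin n) ℝ :=
  Matrix.diagonal (fun v => (degCount G v : ℝ)) + G.adjMatrix ℝ

open Classical in
noncomputable def qform {n : ℕ} (G : SimpleGraph (Fin n)) (x : Fin n → ℝ) : ℝ :=
  ∑ u, ∑ v, if G.Adj u v then (x u + x v) ^ 2 else 0

lemma qSpecRad_eq {n : ℕ} (G : SimpleGraph (Fin n)) :
    qSpecRad G = sSup (spectrum ℝ (qmat G)) := by
  unfold qSpecRad qmat
  congr!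

open Classical in
lemma qmat_mulVec {n : ℕ} (G : SimpleGraph (Fin n)) (x : Fin n → ℝ) (u : Fin n) :
    (qmat G).mulVec x u = ∑ v, if G.Adj u v then (x u + x v) else 0 := by
  have hd : (degCount G u : ℝ) = ∑ v, if G.Adj u v then (1 : ℝ) else 0 := by
    simp only [degCount, Nat.card_eq_fintype_card, SimpleGraph.card_neighborSet_eq_degree]
    rw [Finset.sum_boole, SimpleGraph.degree, SimpleGraph.neighborFinset_eq_filter]
  simp only [qmat, Matrix.add_mulVec, Pi.add_apply, Matrix.mulVec_diagonal]
  rw [hd, Finset.sum_mul]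
  simp only [Matrix.mulVec, dotProduct, SimpleGraph.adjMatrix_apply]
  rw [← Finset.sum_add_distrib]
  refine Finset.sum_congr rfl fun v _ => ?_
  split_ifs <;> simp

lemma qform_eq {n : ℕ} (G : SimpleGraph (Fin n)) (x : Fin n → ℝ) :
    qform G x = 2 * (x ⬝ᵥ (qmat G).mulVec x) := by
  classical
  have h1 : x ⬝ᵥ (qmat G).mulVec x = ∑ u, ∑ v, if G.Adj u v then x u * (x u + x v) else 0 := by
    simp only [dotProduct, qmat_mulVec, Finset.mul_sum, mul_ite, mul_zero]
  have h2 : x ⬝ᵥ (qmat G).mulVec x = ∑ u, ∑ v, if G.Adj u v then x v * (x u + x v) else 0 := by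
    rw [h1, Finset.sum_comm]
    refine Finset.sum_congr rfl fun u _ => Finset.sum_congr rfl fun v _ => ?_
    simp only [G.adj_comm v u, add_comm]
  rw [two_mul]
  nth_rw 1 [h1]
  rw [h2, ← Finset.sum_add_distrib]
  unfold qform
  refine Finset.sum_congr rfl fun u _ => ?_
  rw [← Finset.sum_add_distrib]
  refine Finset.sum_congr rfl fun v _ => ?_
  split_ifs <;> ring

lemma qmat_herm {n : ℕ} (G : SimpleGraph (Fin n)) : (qmat G).IsHermitian := by
  classical
  unfold qmat
  refine Matrix.IsHermitian.add ?_ ?_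
  · exact Matrix.isHermitian_diagonal _
  · rw [Matrix.IsHermitian, Matrix.conjTranspose_eq_transpose_of_trivial]
    exact SimpleGraph.transpose_adjMatrix _

lemma spec_fin {n : ℕ} (G : SimpleGraph (Fin n)) : (spectrum ℝ (qmat G)).Finite := by
  rw [(qmat_herm G).spectrum_real_eq_range_eigenvalues]
  exact Set.finite_range _

lemma psd_s10 {n : ℕ} (G : SimpleGraph (Fin n)) :
    (qSpecRad G • (1 : Matrix (Fin n) (Fin n) ℝ) - qmat G).PosSemidef := by
  have hh : (qSpecRad G • (1 : Matrix (Fin n) (Fin n) ℝ) - qmat G).IsHermitian := by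
    refine Matrix.IsHermitian.sub ?_ (qmat_herm G)
    simp [Matrix.IsHermitian]
  rw [Matrix.posSemidef_iff_isHermitian_and_spectrum_nonneg]
  refine ⟨hh, fun a ha => ?_⟩
  have : qSpecRad G - a ∈ spectrum ℝ (qmat G) := by
    rw [← Algebra.algebraMap_eq_smul_one, ← spectrum.singleton_sub_eq] at ha
    obtain ⟨b, hb, c, hc, rfl⟩ := ha
    simp only [Set.mem_singleton_iff] at hb
    subst hb
    simpa using hc
  have h := le_csSup (spec_fin G).bddAbove this
  rw [← qSpecRad_eq] at h
  simp only [Set.mem_ofPred_eq]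
  linarith

lemma dot_M {n : ℕ} (G : SimpleGraph (Fin n)) (x : Fin n → ℝ) :
    2 * (x ⬝ᵥ (qSpecRad G • (1 : Matrix (Fin n) (Fin n) ℝ) - qmat G).mulVec x) =
      2 * qSpecRad G * (x ⬝ᵥ x) - qform G x := by
  rw [Matrix.sub_mulVec, Matrix.smul_mulVec, Matrix.one_mulVec, dotProduct_sub, dotProduct_smul,
    qform_eq, smul_eq_mul]
  ring

lemma qform_le {n : ℕ} (G : SimpleGraph (Fin n)) (x : Fin n → ℝ) :
    qform G x ≤ 2 * qSpecRad G * (x ⬝ᵥ x) := by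
  have h := (psd_s10 G).dotProduct_mulVec_nonneg x
  simp only [star_trivial] at h
  linarith [dot_M G x]

lemma qform_eigen {n : ℕ} (G : SimpleGraph (Fin n)) (x : Fin n → ℝ)
    (h : 2 * qSpecRad G * (x ⬝ᵥ x) ≤ qform G x) :
    (qmat G).mulVec x = qSpecRad G • x := by
  have h0 := (psd_s10 G).dotProduct_mulVec_nonneg x
  have h1 := ((psd_s10 G).dotProduct_mulVec_zero_iff x).1
  simp only [star_trivial] at h0 h1
  have h2 := h1 (by linarith [dot_M G x])
  rw [Matrix.sub_mulVec, Matrix.smul_mulVec, Matrix.one_mulVec, sub_eq_zero] at h2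
  exact h2.symm

lemma exists_nonneg {n : ℕ} (hn : 0 < n) (G : SimpleGraph (Fin n)) :
    ∃ x : Fin n → ℝ, (∀ i, 0 ≤ x i) ∧ x ≠ 0 ∧ 2 * qSpecRad G * (x ⬝ᵥ x) ≤ qform G x := by
  have : Nonempty (Fin n) := ⟨⟨0, hn⟩⟩
  have hne : (spectrum ℝ (qmat G)).Nonempty := by
    rw [(qmat_herm G).spectrum_real_eq_range_eigenvalues]
    exact Set.range_nonempty _
  have hm := hne.csSup_mem (spec_fin G)
  rw [← qSpecRad_eq] at hm
  rw [← Matrix.spectrum_toLin', ← Module.End.hasEigenvalue_iff_mem_spectrum] at hm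
  obtain ⟨v, hv⟩ := hm.exists_hasEigenvector
  have hv1 := hv.apply_eq_smul
  rw [Matrix.toLin'_apply] at hv1
  refine ⟨fun i => |v i|, fun i => abs_nonneg _, ?_, ?_⟩
  · intro h
    apply hv.2
    ext i
    simpa using congrFun h i
  · have e1 : (fun i => |v i|) ⬝ᵥ (fun i => |v i|) = v ⬝ᵥ v := by
      simp [dotProduct]
    have e2 : qform G v = 2 * qSpecRad G * (v ⬝ᵥ v) := by
      rw [qform_eq, hv1, dotProduct_smul, smul_eq_mul]; ring
    rw [e1, ← e2]
    unfold qform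
    refine Finset.sum_le_sum fun a _ => Finset.sum_le_sum fun b _ => ?_
    split_ifs
    · rw [← sq_abs]
      exact pow_le_pow_left₀ (abs_nonneg _) (abs_add_le _ _) 2
    · exact le_rfl

/-- two cliques sharing `w` -/
def Lp {n : ℕ} (K : Finset (Fin n)) (w : Fin n) : SimpleGraph (Fin n) where
  Adj u v := u ≠ v ∧ (u = w ∨ v = w ∨ (u ∈ K ↔ v ∈ K))
  symm := ⟨fun u v h => ⟨h.1.symm, by tauto⟩⟩
  loopless := ⟨fun u h => h.1 rfl⟩

lemma Lp_iso {n k : ℕ} (hn : 2 * k + 1 ≤ n) (K : Finset (Fin n)) (hK : K.card = n - k)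
    (w : Fin n) (hw : w ∈ K) : Nonempty (Lp K w ≃g Lgraph n k) := by
  classical
  have hc : Fintype.card {u : Fin n // u ∈ K} = Fintype.card {u : Fin n // u.val < n - k} := by
    rw [Fintype.card_coe, hK, Fintype.card_subtype]
    have := Fin.card_filter_val_lt (n := n) (m := n - k)
    omega
  let e0 := Fintype.equivOfCardEq hc
  let e1 : Equiv.Perm (Fin n) := e0.extendSubtype
  have m1 : ∀ u, (e1 u).val < n - k ↔ u ∈ K := by
    intro u
    constructor
    · intro h
      by_contra h2
      exact e0.extendSubtype_not_mem u h2 h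
    · intro h
      exact e0.extendSubtype_mem u h
  let z : Fin n := ⟨0, by omega⟩
  have hz : z.val < n - k := by show 0 < n - k; omega
  have hs : ∀ u, (Equiv.swap (e1 w) z u).val < n - k ↔ u.val < n - k := by
    intro u
    have hw1 := (m1 w).2 hw
    rw [Equiv.swap_apply_def]
    split_ifs with h1 h2
    · subst h1; simp [hz, hw1]
    · subst h2; simp [hz, hw1]
    · rfl
  let e : Equiv.Perm (Fin n) := e1.trans (Equiv.swap (e1 w) z)
  have me : ∀ u, (e u).val < n - k ↔ u ∈ K := fun u => (hs _).trans (m1 u)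
  have ew : ∀ u, (e u).val = 0 ↔ u = w := by
    intro u
    have h : e w = z := by simp [e]
    rw [← e.injective.eq_iff (a := u), h, Fin.ext_iff]
  refine ⟨⟨e, ?_⟩⟩
  intro u v
  simp only [Lgraph, SimpleGraph.fromRel_adj, Lp, ← not_lt, me, ew, e.injective.ne_iff]
  tauto

lemma qform_iso {n : ℕ} {G H : SimpleGraph (Fin n)} (e : G ≃g H) (x : Fin n → ℝ) :
    qform H (fun i => x (e.symm i)) = qform G x := by
  classical
  unfold qform
  rw [← e.toEquiv.sum_comp]
  refine Finset.sum_congr rfl fun u _ => ?_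
  rw [← e.toEquiv.sum_comp]
  refine Finset.sum_congr rfl fun v _ => ?_
  have h := e.map_adj_iff (v := u) (w := v)
  simp [h]

open Classical in
noncomputable def sameSum {n : ℕ} (H : SimpleGraph (Fin n)) (K : Finset (Fin n))
    (x : Fin n → ℝ) : ℝ :=
  ∑ u, ∑ v, if (u ∈ K ↔ v ∈ K) ∧ H.Adj u v then (x u + x v) ^ 2 else 0

open Classical in
noncomputable def crossSum {n : ℕ} (H : SimpleGraph (Fin n)) (K : Finset (Fin n))
    (c : Fin n → Fin n) (x : Fin n → ℝ) : ℝ :=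
  ∑ u, if u ∉ K ∧ H.Adj u (c u) then (x u + x (c u)) ^ 2 else 0

lemma qform_dec {n : ℕ} (H : SimpleGraph (Fin n)) (K : Finset (Fin n)) (c : Fin n → Fin n)
    (hcK : ∀ u ∉ K, c u ∈ K) (h1 : ∀ u ∉ K, ∀ w ∈ K, H.Adj u w → w = c u) (x : Fin n → ℝ) :
    qform H x = sameSum H K x + 2 * crossSum H K c x := by
  classical
  have hB : ∀ u, (∑ v, if (u ∉ K ∧ v ∈ K) ∧ H.Adj u v then (x u + x v) ^ 2 else 0) =
      if u ∉ K ∧ H.Adj u (c u) then (x u + x (c u)) ^ 2 else 0 := by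
    intro u
    by_cases hu : u ∈ K
    · simp [hu]
    · rw [Finset.sum_eq_single (c u)]
      · simp [hu, hcK u hu]
      · intro v _ hv
        rw [if_neg]
        rintro ⟨⟨_, hvK⟩, ha⟩
        exact hv (h1 u hu v hvK ha)
      · simp
  have hB1 : crossSum H K c x =
      ∑ u, ∑ v, if (u ∉ K ∧ v ∈ K) ∧ H.Adj u v then (x u + x v) ^ 2 else 0 := by
    unfold crossSum
    exact Finset.sum_congr rfl fun u _ => (hB u).symm
  have hB2 : crossSum H K c x =
      ∑ u, ∑ v, if (v ∉ K ∧ u ∈ K) ∧ H.Adj u v then (x u + x v) ^ 2 else 0 := by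
    rw [hB1, Finset.sum_comm]
    refine Finset.sum_congr rfl fun u _ => Finset.sum_congr rfl fun v _ => ?_
    simp only [H.adj_comm v u, add_comm]
  rw [two_mul]
  nth_rw 1 [hB1]
  rw [hB2]
  unfold qform sameSum
  simp only [← Finset.sum_add_distrib]
  refine Finset.sum_congr rfl fun u _ => Finset.sum_congr rfl fun v _ => ?_
  by_cases hu : u ∈ K <;> by_cases hv : v ∈ K <;> simp [hu, hv]

lemma core_s10 {n k : ℕ} (hn : 2 * k + 1 ≤ n) (G : SimpleGraph (Fin n)) (K : Finset (Fin n))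
    (hK : K.card = n - k) (c : Fin n → Fin n) (hcK : ∀ u ∉ K, c u ∈ K)
    (h1 : ∀ u ∉ K, ∀ w ∈ K, G.Adj u w → w = c u)
    (h2 : ∀ u ∉ K, ∀ v ∉ K, G.Adj u v → c u = c v)
    (hq : qSpecRad (Lgraph n k) ≤ qSpecRad G) :
    Nonempty (G ≃g Lgraph n k) := by
  classical
  obtain ⟨x, hx0, hxne, hx⟩ := exists_nonneg (by omega) G
  have hKne : K.Nonempty := by rw [← Finset.card_pos]; omega
  obtain ⟨w0, hw0, hmax⟩ := K.exists_max_image x hKne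
  obtain ⟨e⟩ := Lp_iso hn K hK w0 hw0
  set y : Fin n → ℝ := fun i => x (e.symm i) with hy
  have hyy : y ⬝ᵥ y = x ⬝ᵥ x := by
    simp only [dotProduct, hy]
    exact e.symm.toEquiv.sum_comp (fun i => x i * x i)
  have hxx : 0 ≤ x ⬝ᵥ x := by
    simp only [dotProduct]
    exact Finset.sum_nonneg fun i _ => mul_self_nonneg _
  -- redirecting map on edges
  have hG_le : qSpecRad (Lgraph n k) * (x ⬝ᵥ x) ≤ qSpecRad G * (x ⬝ᵥ x) :=
    mul_le_mul_of_nonneg_right hq hxx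
  have hLq := qform_iso e x
  have hLle := qform_le (Lgraph n k) y
  rw [hyy] at hLle
  have hAle1 : ∀ u v, (if (u ∈ K ↔ v ∈ K) ∧ G.Adj u v then (x u + x v) ^ 2 else 0) ≤
      (if (u ∈ K ↔ v ∈ K) ∧ (Lp K w0).Adj u v then (x u + x v) ^ 2 else 0) := by
    intro u v
    by_cases h : (u ∈ K ↔ v ∈ K) ∧ G.Adj u v
    · rw [if_pos h, if_pos ⟨h.1, h.2.ne, Or.inr (Or.inr h.1)⟩]
    · rw [if_neg h]
      split_ifs <;> positivity
  have hBle1 : ∀ u, (if u ∉ K ∧ G.Adj u (c u) then (x u + x (c u)) ^ 2 else 0) ≤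
      (if u ∉ K ∧ (Lp K w0).Adj u w0 then (x u + x w0) ^ 2 else 0) := by
    intro u
    by_cases h : u ∉ K ∧ G.Adj u (c u)
    · have hne : u ≠ w0 := fun hh => h.1 (hh ▸ hw0)
      rw [if_pos h, if_pos ⟨h.1, hne, Or.inr (Or.inl rfl)⟩]
      have := hmax _ (hcK u h.1)
      exact pow_le_pow_left₀ (add_nonneg (hx0 _) (hx0 _)) (by linarith) 2
    · rw [if_neg h]
      split_ifs <;> positivity
  have dG := qform_dec G K c hcK h1 x
  have dL := qform_dec (Lp K w0) K (fun _ => w0) (fun _ _ => hw0) (by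
    rintro u hu w hw ⟨_, h | h | h⟩
    · exact absurd (h ▸ hw0) hu
    · exact h
    · exact absurd (h.2 hw) hu) x
  have hAle : sameSum G K x ≤ sameSum (Lp K w0) K x :=
    Finset.sum_le_sum fun u _ => Finset.sum_le_sum fun v _ => hAle1 u v
  have hBle : crossSum G K c x ≤ crossSum (Lp K w0) K (fun _ => w0) x :=
    Finset.sum_le_sum fun u _ => hBle1 u
  have hAeq : sameSum G K x = sameSum (Lp K w0) K x := by linarith
  have hBeq : crossSum G K c x = crossSum (Lp K w0) K (fun _ => w0) x := by linarith
  -- positivity of the Perron vector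
  have hpos : ∀ u, 0 < x u := by
    have heig := qform_eigen (Lgraph n k) y (by rw [hyy]; linarith)
    have hnb : ∀ u, y u = 0 → ∀ v, (Lgraph n k).Adj u v → y v = 0 := by
      intro u hu v huv
      have h := congrFun heig u
      rw [qmat_mulVec, Pi.smul_apply, hu, smul_zero] at h
      rw [Finset.sum_eq_zero_iff_of_nonneg] at h
      · simpa [huv] using h v (Finset.mem_univ _)
      · intro i _
        split_ifs
        · simpa using hx0 _
        · exact le_rfl
    have hz : ∀ u, x u = 0 → ∀ v, (Lp K w0).Adj u v → x v = 0 := by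
      intro u hu v huv
      have := hnb (e u) (by simp [hy, hu]) (e v) (e.map_adj_iff.2 huv)
      simpa [hy] using this
    intro u
    refine lt_of_le_of_ne (hx0 u) fun h0 => hxne ?_
    have hw : x w0 = 0 := by
      by_cases hu : u = w0
      · rw [← hu]; exact h0.symm
      · exact hz u h0.symm w0 ⟨hu, Or.inr (Or.inl rfl)⟩
    ext v
    by_cases hv : v = w0
    · rw [hv]; exact hw
    · exact hz w0 hw v ⟨Ne.symm hv, Or.inl rfl⟩
  have hsame : ∀ u v, u ≠ v → (u ∈ K ↔ v ∈ K) → G.Adj u v := by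
    intro u v huv hK'
    unfold sameSum at hAeq
    rw [Finset.sum_eq_sum_iff_of_le
      (fun u _ => Finset.sum_le_sum fun v _ => hAle1 u v)] at hAeq
    have h := hAeq u (Finset.mem_univ _)
    rw [Finset.sum_eq_sum_iff_of_le (fun v _ => hAle1 u v)] at h
    have h := h v (Finset.mem_univ _)
    by_contra hna
    rw [if_neg (fun hh => hna hh.2), if_pos ⟨hK', huv, Or.inr (Or.inr hK')⟩] at h
    have := hpos u
    have := hpos v
    have : 0 < (x u + x v) ^ 2 := by positivity
    linarith
  have hcross : ∀ u ∉ K, G.Adj u (c u) := by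
    intro u hu
    unfold crossSum at hBeq
    rw [Finset.sum_eq_sum_iff_of_le (fun u _ => hBle1 u)] at hBeq
    have h := hBeq u (Finset.mem_univ _)
    by_contra hna
    have hne : u ≠ w0 := fun hh => hu (hh ▸ hw0)
    rw [if_neg (fun hh => hna hh.2), if_pos ⟨hu, hne, Or.inr (Or.inl rfl)⟩] at h
    have := hpos u
    have := hpos w0
    have : 0 < (x u + x w0) ^ 2 := by positivity
    linarith
  have hw1 : ∃ w1 ∈ K, ∀ u ∉ K, c u = w1 := by
    by_cases hex : ∃ u0, u0 ∉ K
    · obtain ⟨u0, hu0⟩ := hex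
      refine ⟨c u0, hcK u0 hu0, fun u hu => ?_⟩
      by_cases huu : u = u0
      · rw [huu]
      · exact h2 u hu u0 hu0 (hsame u u0 huu (by simp [hu, hu0]))
    · exact ⟨w0, hw0, fun u hu => absurd ⟨u, hu⟩ hex⟩
  obtain ⟨w1, hw1K, hw1⟩ := hw1
  have hGL : G = Lp K w1 := by
    ext u v
    constructor
    · intro h
      refine ⟨h.ne, ?_⟩
      by_cases hu : u ∈ K <;> by_cases hv : v ∈ K
      · simp [hu, hv]
      · exact Or.inl ((h1 v hv u hu h.symm).trans (hw1 v hv))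
      · exact Or.inr (Or.inl ((h1 u hu v hv h).trans (hw1 u hu)))
      · simp [hu, hv]
    · rintro ⟨hne, h⟩
      by_cases hs : u ∈ K ↔ v ∈ K
      · exact hsame u v hne hs
      · rcases h with h | h | h
        · have hv : v ∉ K := fun hv => hs (by simp [h, hw1K, hv])
          have := hcross v hv
          rw [hw1 v hv] at this
          rw [h]; exact this.symm
        · have hu : u ∉ K := fun hu => hs (by simp [h, hw1K, hu])
          have := hcross u hu
          rw [hw1 u hu] at this
          rw [h]; exact this
        · exact absurd h hs
  rw [hGL]
  exact Lp_iso hn K hK w1 hw1K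

theorem extremal_qSpecRad (n k : ℕ) (hn : 2 * k + 1 ≤ n) (G : SimpleGraph (Fin n))
    (hF : ∃ F : SimpleGraph (Fin n), MemF n k F ∧ IsSubgraphOf G F)
    (hq : qSpecRad (Lgraph n k) ≤ qSpecRad G) :
    Nonempty (G ≃g Lgraph n k) := by
  classical
  obtain ⟨F, ⟨K, hK, hcl, hA, hB, hC⟩, f, hf⟩ := hF
  have hfb : Function.Bijective f := Finite.injective_iff_bijective.1 hf
  let e : Fin n ≃ Fin n := Equiv.ofBijective f hfb
  have hB' : ∀ u : Fin n, ∃ w, u ∉ K → w ∈ K ∧ F.Adj u w ∧ ∀ w' ∈ K, F.Adj u w' → w' = w := by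
    intro u
    by_cases hu : u ∈ K
    · exact ⟨u, fun h => absurd hu h⟩
    · obtain ⟨w, hw, hw'⟩ := hB ⟨u, hu⟩
      exact ⟨w, fun _ => ⟨hw.1, hw.2, fun w' a b => hw' w' ⟨a, b⟩⟩⟩
  choose c hc using hB'
  refine core_s10 hn G (K.map e.symm.toEmbedding) (by simpa using hK) (fun u => e.symm (c (e u)))
    ?_ ?_ ?_ hq
  · intro u hu
    have hu' : e u ∉ K := by simpa [Finset.mem_map_equiv] using hu
    simpa [Finset.mem_map_equiv] using (hc _ hu').1
  · intro u hu w hw hadj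
    have hu' : e u ∉ K := by simpa [Finset.mem_map_equiv] using hu
    have hw' : e w ∈ K := by simpa [Finset.mem_map_equiv] using hw
    rw [Equiv.eq_symm_apply]
    exact (hc _ hu').2.2 _ hw' (f.map_adj hadj)
  · intro u hu v hv hadj
    have hu' : e u ∉ K := by simpa [Finset.mem_map_equiv] using hu
    have hv' : e v ∉ K := by simpa [Finset.mem_map_equiv] using hv
    have hFa : F.Adj (e u) (e v) := f.map_adj hadj
    have hr : (F.induce {x : Fin n | x ∉ K}).Reachable ⟨e u, hu'⟩ ⟨e v, hv'⟩ :=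
      SimpleGraph.Adj.reachable (by simpa using hFa)
    have := hC _ _ hr _ (hc _ hu').1 (hc _ hu').2.1
    simp only [EmbeddingLike.apply_eq_iff_eq]
    exact (hc _ hv').2.2 _ (hc _ hu').1 this
end
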